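/- arXiv:0811.0654 — 3 statements merged into one kernel-verified Lean document; each statement's English description precedes it below -/
import Mathlib

section
/- (Andrews–Garvan) For every natural number n and every integer m with 0 ≤ m ≤ 4, the number of partitions of 5n + 4 whose crank is congruent to m modulo 5 equals p(5n + 4)/5, i.e. M(0, 5, 5n+4) = M(1, 5, 5n+4) = ... = M(4, 5, 5n+4). -/
/-!
Weight each partition of `k` by `z ^ crank`. Sorting the partitions without ones by their largest
part and the others by their number of ones, the definition of the crank gives a generating
function which two applications of the `q`-binomial theorem evaluate: up to a correction at
`q ^ 1`, it is `(q; q)_∞ / ((zq; q)_∞ (q/z; q)_∞)` (`crank_product`, `coeff_crank`).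

Let `z` be a primitive fifth root of unity. Since `∏_{w ^ 5 = 1} (wq; q)_∞ = (q ^ 5; q ^ 5)_∞`, this
quotient equals
`(q; q)_∞ * [(q; q)_∞ (z ^ 2 q; q)_∞ (z ^ (-2) q; q)_∞] / (q ^ 5; q ^ 5)_∞`.
The exponents in the first factor are pentagonal numbers, hence `0`, `1` or `2` modulo `5`
(`coeff_qp_one`). By the Jacobi triple product, the bracket is up to a nonzero constant a theta
series whose exponents are the triangular numbers `k (k - 1) / 2`. They are `0` or `1` modulo `5`
unless `k ≡ 3 (mod 5)`, and those terms cancel in pairs `k ↔ 1 - k` (`coeff_theta`). Dividing by a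
series in `q ^ 5` preserves residue classes of exponents, so no exponent congruent to `4` modulo `5`
survives: `∑ z ^ crank = 0` over the partitions of `5 n + 4` (`sum_crank_eq_zero`). As
`1 + X + X ^ 2 + X ^ 3 + X ^ 4` is the minimal polynomial of `z` over `ℚ`, the five crank classes
have equal size.

The `q`-identities are proved in a commutative ring where `q` is nilpotent, which turns infinite
sums and products into finite ones, and are applied in `ℂ⟦X⟧ / (X ^ N)` with `N > 5 n + 4`.
-/


/-- `p n` is the number of partitions of `n`. -/
def partitionCount (n : ℕ) : ℕ := Fintype.card (Nat.Partition n)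

/-- The Andrews–Garvan crank of a partition `π`: if `π` has no parts equal to 1,
the crank is the largest part; otherwise, letting `ω` be the number of parts equal
to 1 and `o` the number of parts strictly larger than `ω`, the crank is `o - ω`. -/
def Nat.Partition.crank {n : ℕ} (π : n.Partition) : ℤ :=
  if π.parts.count 1 = 0 then (π.parts.sup : ℤ)
  else ((π.parts.filter (fun x => π.parts.count 1 < x)).card : ℤ) - (π.parts.count 1 : ℤ)

/-- `M m q k`: the number of partitions of `k` whose crank is congruent to `m` mod `q`. -/
def crankCountMod (m : ℤ) (q : ℕ) (k : ℕ) : ℕ :=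
  Fintype.card {π : k.Partition // π.crank ≡ m [ZMOD q]}

namespace CrankMod5

open Finset

/-! ### The `q`-binomial theorem -/

section Nilpotent

variable {S : Type*} [CommRing S]

/-- The finite `q`-Pochhammer product `(wq; q)_n = ∏_{i=1}^{n} (1 - w q^i)`. -/
def qp (q w : S) (n : ℕ) : S := ∏ i ∈ range n, (1 - w * q ^ (i + 1))

@[simp] lemma qp_zero (q w : S) : qp q w 0 = 1 := by simp [qp]

lemma qp_succ (q w : S) (n : ℕ) : qp q w (n + 1) = qp q w n * (1 - w * q ^ (n + 1)) := by
  simp [qp, prod_range_succ]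

lemma qp_stable {q : S} {N n : ℕ} (hq : q ^ N = 0) (w : S) (hn : N ≤ n) :
    qp q w n = qp q w N := by
  induction n, hn using Nat.le_induction with
  | base => rfl
  | succ n hn ih => rw [qp_succ, ih, pow_eq_zero_of_le (by omega) hq]; simp

lemma isUnit_one_sub_mul {q : S} {N : ℕ} (hq : q ^ N = 0) (w : S) (i : ℕ) :
    IsUnit (1 - w * q ^ (i + 1)) := by
  apply IsNilpotent.isUnit_one_sub
  refine ⟨N, ?_⟩
  rw [mul_pow, ← pow_mul, mul_comm (i + 1), pow_mul, hq]
  simp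

lemma isUnit_qp {q : S} {N : ℕ} (hq : q ^ N = 0) (w : S) (n : ℕ) : IsUnit (qp q w n) := by
  unfold qp
  rw [IsUnit.prod_iff]
  exact fun i _ ↦ isUnit_one_sub_mul hq w i

/-- The `q`-difference equation behind the `q`-binomial theorem, for a truncated sum: up to a
boundary term, `F_K (1 - s q^(K+1)) = (1 - a s q^(K+1)) F_(K+1)` with `F_K = ∑ c_j q^(K j)`. -/
lemma qbinomial_step (q s a : S) (c : ℕ → S)
    (hrec : ∀ j, c (j + 1) * (1 - q ^ (j + 1)) = c j * (q * s) * (1 - a * q ^ j)) (K N : ℕ) :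
    (∑ j ∈ range N, c j * q ^ (K * j)) * (1 - s * q ^ (K + 1)) =
      (1 - a * s * q ^ (K + 1)) * (∑ j ∈ range N, c j * q ^ ((K + 1) * j)) -
        c N * (1 - q ^ N) * q ^ (K * N) := by
  induction N with
  | zero => simp
  | succ N ih =>
    rw [sum_range_succ, sum_range_succ, add_mul, ih, hrec]
    ring

/-- The `q`-binomial theorem `∑ (a;q)_j / (q;q)_j (qs)^j = (aqs; q)_∞ / (qs; q)_∞` over a ring in
which `q` is nilpotent, so that all sums and products are finite. -/
lemma qbinomial {q : S} {N : ℕ} (hq : q ^ N = 0) (s a : S) (c : ℕ → S) (h0 : c 0 = 1)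
    (hN : c N = 0)
    (hrec : ∀ j, c (j + 1) * (1 - q ^ (j + 1)) = c j * (q * s) * (1 - a * q ^ j)) :
    (∑ j ∈ range N, c j) * qp q s N = qp q (a * s) N := by
  have key (K : ℕ) : (∑ j ∈ range N, c j) * qp q s K =
      qp q (a * s) K * ∑ j ∈ range N, c j * q ^ (K * j) := by
    induction K with
    | zero => simp
    | succ K ih =>
      have := qbinomial_step q s a c hrec K N
      rw [hN] at this
      rw [qp_succ, qp_succ, ← mul_assoc, ih]
      linear_combination qp q (a * s) K * this
  rw [key]
  rcases N with _ | N
  · have : (1 : S) = 0 := by simpa using hq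
    rw [← mul_one (qp q (a * s) 0), this]; simp
  · rw [sum_range_succ', sum_eq_zero]
    · simp [h0]
    · intro j _
      rw [pow_eq_zero_of_le (by nlinarith) hq, mul_zero]

/-! ### Gaussian binomials and the Jacobi triple product -/

/-- Gaussian binomial coefficients, defined by the `q`-Pascal rule. -/
def gb (q : S) : ℕ → ℕ → S
  | _, 0 => 1
  | 0, _ + 1 => 0
  | n + 1, j + 1 => gb q n j + q ^ (j + 1) * gb q n (j + 1)

lemma gb_eq_zero (q : S) {n j : ℕ} (h : n < j) : gb q n j = 0 := by
  induction n generalizing j with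
  | zero => obtain ⟨j, rfl⟩ := Nat.exists_eq_succ_of_ne_zero (by omega : j ≠ 0); rfl
  | succ n ih =>
    obtain ⟨j, rfl⟩ := Nat.exists_eq_succ_of_ne_zero (by omega : j ≠ 0)
    simp [gb, ih (by omega : n < j), ih (by omega : n < j + 1)]

lemma gb_mul (q : S) (j m : ℕ) : gb q (j + m) j * (qp q 1 j * qp q 1 m) = qp q 1 (j + m) := by
  obtain ⟨n, hn⟩ : ∃ n, n = j + m := ⟨_, rfl⟩
  rw [← hn]
  induction n generalizing j m with
  | zero => obtain ⟨rfl, rfl⟩ : j = 0 ∧ m = 0 := by omega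
            simp [gb]
  | succ n ih =>
    rcases j with _ | j
    · obtain rfl : m = n + 1 := by omega
      simp [gb]
    rcases m with _ | m
    · obtain rfl : j = n := by omega
      have := ih j 0 (by omega)
      simp only [gb, qp_zero, mul_one, gb_eq_zero q (Nat.lt_succ_self j), qp_succ] at this ⊢
      linear_combination (1 - q ^ (j + 1)) * this
    · have h1 := ih j (m + 1) (by omega)
      have h2 := ih (j + 1) m (by omega)
      obtain rfl : n = j + m + 1 := by omega
      rw [qp_succ q 1 m] at h1 ⊢
      rw [qp_succ q 1 j] at h2 ⊢
      rw [qp_succ q 1 (j + m + 1)]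
      rw [show gb q (j + m + 1 + 1) (j + 1) =
        gb q (j + m + 1) j + q ^ (j + 1) * gb q (j + m + 1) (j + 1) from rfl]
      linear_combination (1 - q ^ (j + 1)) * h1 + q ^ (j + 1) * (1 - q ^ (m + 1)) * h2

/-- The triangular number `k (k - 1) / 2` of an integer `k`. -/
def tri (k : ℤ) : ℕ := (k * (k - 1) / 2).toNat

lemma two_mul_tri (k : ℤ) : 2 * (tri k : ℤ) = k * (k - 1) := by
  have h1 : 0 ≤ k * (k - 1) := by
    rcases le_or_gt k 0 with h | h <;> nlinarith
  have h2 : Even (k * (k - 1)) := Int.even_mul_pred_self k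
  rw [tri, Int.toNat_of_nonneg (by omega), Int.two_mul_ediv_two_of_even h2]

/-- Rothe's identity. -/
lemma rothe (q x : S) (m : ℕ) :
    ∏ i ∈ range m, (1 - x * q ^ i) =
      ∑ j ∈ range (m + 1), (-1) ^ j * x ^ j * q ^ tri j * gb q m j := by
  induction m generalizing x with
  | zero => simp [gb, tri]
  | succ m ih =>
    have h : ∏ i ∈ range m, (1 - x * q ^ (i + 1)) =
        ∑ j ∈ range (m + 1), (-1) ^ j * (x * q) ^ j * q ^ tri j * gb q m j := by
      rw [← ih]; exact prod_congr rfl fun i _ ↦ by ring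
    rw [prod_range_succ', h, pow_zero, mul_one, mul_sub, mul_one, sum_range_succ']
    have ht (j : ℕ) : tri ((j + 1 : ℕ) : ℤ) = tri j + j := by
      have := two_mul_tri j; have := two_mul_tri (j + 1 : ℕ); push_cast at *; grind
    rw [sum_range_succ' _ (m + 1)]
    have e : ∑ j ∈ range (m + 1), (-1) ^ (j + 1) * x ^ (j + 1) * q ^ tri ((j + 1 : ℕ) : ℤ) *
          gb q (m + 1) (j + 1) =
        ∑ j ∈ range (m + 1), (-1) ^ (j + 1) * (x * q) ^ (j + 1) * q ^ tri ((j + 1 : ℕ) : ℤ) *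
          gb q m (j + 1) -
        (∑ j ∈ range (m + 1), (-1) ^ j * (x * q) ^ j * q ^ tri j * gb q m j) * x := by
      rw [sum_mul, ← sum_sub_distrib]
      refine sum_congr rfl fun j _ ↦ ?_
      rw [ht, gb]; ring
    rw [e, sum_range_succ _ m, gb_eq_zero q (Nat.lt_succ_self m), ← sum_range_succ' (fun j : ℕ ↦
      (-1) ^ j * (x * q) ^ j * q ^ tri j * gb q m j)]
    simp [gb, sum_range_succ']
    ring

/-- The finite form of the Jacobi triple product identity. -/
lemma finite_jtp (q x : S) (m l : ℕ) :
    (∏ i ∈ range m, (1 - x * q ^ i)) * ∏ i ∈ range l, (x - q ^ (i + 1)) =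
      ∑ j ∈ range (m + l + 1), (-1) ^ (j + l) * x ^ j * q ^ tri (j - l) * gb q (m + l) j := by
  induction l with
  | zero => simp [rothe]
  | succ l ih =>
    rw [prod_range_succ, ← mul_assoc, ih, mul_sub, ← add_assoc, sum_range_succ' _ (m + l + 1)]
    have e : ∑ j ∈ range (m + l + 1), (-1) ^ (j + 1 + (l + 1)) * x ^ (j + 1) *
          q ^ tri ((j + 1 : ℕ) - (l + 1 : ℕ)) * gb q (m + l + 1) (j + 1) =
        (∑ j ∈ range (m + l + 1), (-1) ^ (j + l) * x ^ j * q ^ tri (j - l) * gb q (m + l) j) * x -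
        ∑ j ∈ range (m + l + 1), (-1) ^ (j + 1 + l) * x ^ (j + 1) * q ^ tri ((j + 1 : ℕ) - l) *
          gb q (m + l) (j + 1) * q ^ (l + 1) := by
      rw [sum_mul, ← sum_sub_distrib]
      refine sum_congr rfl fun j _ ↦ ?_
      have h1 : tri ((j + 1 : ℕ) - (l + 1 : ℕ)) = tri (j - l) := by congr 1; push_cast; ring
      have h2 : tri ((j + 1 : ℕ) - l) + (l + 1) = tri (j - l) + (j + 1) := by
        have := two_mul_tri (j - l); have := two_mul_tri ((j + 1 : ℕ) - l); push_cast at *; grind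
      rw [h1, gb, mul_assoc _ (gb q (m + l) (j + 1)), mul_comm (gb q (m + l) (j + 1)),
        ← mul_assoc, mul_assoc _ (q ^ tri _) (q ^ (l + 1)), ← pow_add, h2]
      ring
    have e0 : tri ((0 : ℕ) - l) + (l + 1) = tri ((0 : ℕ) - (l + 1 : ℕ)) := by
      have := two_mul_tri ((0 : ℕ) - l); have := two_mul_tri ((0 : ℕ) - (l + 1 : ℕ))
      push_cast at *; grind
    have e2 : ∑ j ∈ range (m + l + 1), (-1) ^ (j + l) * x ^ j * q ^ tri (j - l) *
          gb q (m + l) j * q ^ (l + 1) =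
        ∑ j ∈ range (m + l + 1), (-1) ^ (j + 1 + l) * x ^ (j + 1) * q ^ tri ((j + 1 : ℕ) - l) *
          gb q (m + l) (j + 1) * q ^ (l + 1) +
        (-1) ^ (0 + l) * x ^ 0 * q ^ tri ((0 : ℕ) - l) * gb q (m + l) 0 * q ^ (l + 1) := by
      rw [← sum_range_succ' (fun j : ℕ ↦ (-1) ^ (j + l) * x ^ j * q ^ tri (j - l) *
          gb q (m + l) j * q ^ (l + 1)), sum_range_succ _ (m + l + 1),
        gb_eq_zero q (Nat.lt_succ_self (m + l))]
      ring
    rw [e, ← e0, sum_mul _ _ (q ^ (l + 1)), e2]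
    simp only [gb]
    ring

/-- The Jacobi triple product identity over a ring in which `q` is nilpotent. -/
lemma jtp {q : S} {N : ℕ} (hq : q ^ N = 0) (x : S) :
    (∏ i ∈ range (2 * N), (1 - x * q ^ i)) * (∏ i ∈ range (2 * N), (x - q ^ (i + 1))) *
        qp q 1 N =
      ∑ j ∈ range (4 * N + 1), (-1) ^ j * x ^ j * q ^ tri (j - 2 * N) := by
  rw [finite_jtp, sum_mul, show 2 * N + 2 * N + 1 = 4 * N + 1 by omega]
  refine sum_congr rfl fun j hj ↦ ?_
  rw [mem_range] at hj
  have ht := two_mul_tri ((j : ℤ) - 2 * N)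
  rw [pow_add, pow_mul (-1 : S) 2 N]
  push_cast
  by_cases h : N ≤ tri ((j : ℤ) - 2 * N)
  · simp [pow_eq_zero_of_le h hq]
  · have h1 : N ≤ j := by
      by_contra h'
      apply h; zify; zify at h' hj; nlinarith
    have h2 : N ≤ 4 * N - j := by
      by_contra h'
      apply h; zify; zify [(by omega : j ≤ 4 * N)] at h' hj; nlinarith
    have h3 := gb_mul q j (4 * N - j)
    rw [show j + (4 * N - j) = 2 * N + 2 * N by omega, qp_stable hq 1 h1, qp_stable hq 1 h2,
      qp_stable hq 1 (by omega : N ≤ 2 * N + 2 * N), ← mul_assoc] at h3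
    have h4 : gb q (2 * N + 2 * N) j * qp q 1 N = 1 :=
      (isUnit_qp hq 1 N).mul_right_cancel (by rw [h3, one_mul])
    rw [mul_assoc, h4]; simp

/-! ### The product formula for the crank generating function -/

lemma qp_eq_prod_Ico (q w : S) (n : ℕ) : qp q w n = ∏ i ∈ Ico 1 (n + 1), (1 - w * q ^ i) := by
  rw [qp, range_eq_Ico, prod_Ico_add' (fun i ↦ 1 - w * q ^ i) 0 n 1, zero_add]

lemma qp_one_eq {j : ℕ} (q : S) (hj : 1 ≤ j) :
    qp q 1 j = (1 - q) * ∏ i ∈ Ico 2 (j + 1), (1 - q ^ i) := by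
  rw [qp_eq_prod_Ico, prod_eq_prod_Ico_succ_bot (by omega)]
  simp

/-- `q ^ L * E L` enumerates the partitions without ones and with largest part `L`, and
`q ^ j * D j` those with exactly `j` ones, each part above `j` being weighted by `z`. So the first
three summands form the crank generating function; the fourth corrects it at the partition of `1`,
and the result is `(q; q)_∞ / ((zq; q)_∞ (q/z; q)_∞)`. -/
lemma crank_product {q z zi : S} {N : ℕ} (hz : z * zi = 1) (hq : q ^ N = 0) (hN : 2 ≤ N)
    (E D : ℕ → S) (hE : ∀ L, 1 ≤ L → E L * ∏ i ∈ Ico 2 (L + 1), (1 - q ^ i) = 1)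
    (hD : ∀ j, 1 ≤ j → j < N →
      D j * ∏ i ∈ Ico 2 N, (1 - (if i ≤ j then 1 else z) * q ^ i) = 1) :
    (1 + ∑ L ∈ Ico 2 N, z ^ L * q ^ L * E L + ∑ j ∈ Ico 1 N, zi ^ j * q ^ j * D j + (z - 1) * q) *
      (qp q z N * qp q zi N) = qp q 1 N := by
  set F : ℕ → S := fun n ↦ Ring.inverse (qp q 1 n) with hFdef
  have hF (n) : qp q 1 n * F n = 1 := Ring.mul_inverse_cancel _ (isUnit_qp hq 1 n)
  have hFrec (n) : F (n + 1) * (1 - q ^ (n + 1)) = F n := by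
    have h1 := hF n
    have h2 := hF (n + 1)
    rw [qp_succ] at h2
    linear_combination F n * h2 - F (n + 1) * (1 - q ^ (n + 1)) * h1
  have hEF (L) (hL : 1 ≤ L) : (1 - q) * F L = E L := by
    have h1 := hE L hL
    have h2 := hF L
    rw [qp_one_eq q hL] at h2
    linear_combination E L * h2 - (1 - q) * F L * h1
  -- Euler's expansion of `1 / (zq; q)_∞`, which accounts for the partitions without ones.
  have euler := qbinomial hq z 0 (fun j ↦ z ^ j * q ^ j * F j) (by simp [hFdef]) (by simp [hq])
    (fun j ↦ by rw [mul_assoc _ (F (j + 1)), hFrec]; ring)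
  have e1 : qp q (0 * z) N = 1 := by simp [qp]
  rw [e1] at euler
  have s1 : (1 - q) * ∑ j ∈ range N, z ^ j * q ^ j * F j =
      1 + ∑ L ∈ Ico 2 N, z ^ L * q ^ L * E L + (z - 1) * q := by
    have hF0 : F 0 = 1 := by simp [hFdef]
    have hF1 : (1 - q) * F 1 = 1 := by rw [hEF 1 le_rfl]; simpa using hE 1 le_rfl
    rw [range_eq_Ico, sum_eq_sum_Ico_succ_bot (by omega), sum_eq_sum_Ico_succ_bot (by omega)]
    have : ∑ L ∈ Ico 2 N, z ^ L * q ^ L * E L =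
        (1 - q) * ∑ L ∈ Ico 2 N, z ^ L * q ^ L * F L := by
      rw [mul_sum]
      refine sum_congr rfl fun L hL ↦ ?_
      rw [← hEF L (by have := (mem_Ico.mp hL).1; omega)]; ring
    rw [this, hF0]
    simp only [zero_add, one_add_one_eq_two]
    linear_combination z * q * hF1
  have qb := qbinomial hq zi (z * q) (fun j ↦ zi ^ j * q ^ j * F j * qp q z j) (by simp [hFdef])
    (by simp [hq]) (fun j ↦ by
      rw [qp_succ]
      linear_combination zi ^ (j + 1) * q ^ (j + 1) * qp q z j * (1 - z * q ^ (j + 1)) * hFrec j)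
  have e2 : (1 - q) * qp q (z * q * zi) N = qp q 1 N := by
    rw [← qp_stable hq 1 (Nat.le_succ N), show z * q * zi = q by linear_combination q * hz, qp, qp,
      prod_range_succ']
    simp only [pow_succ]
    rw [mul_comm]
    congr 1
    · exact prod_congr rfl fun i _ ↦ by ring
    · ring
  have s2 : (1 - q) * ∑ j ∈ range N, zi ^ j * q ^ j * F j * qp q z j =
      (1 - q) + (∑ j ∈ Ico 1 N, zi ^ j * q ^ j * D j) * qp q z N := by
    rw [range_eq_Ico, sum_eq_sum_Ico_succ_bot (by omega), mul_add, mul_sum, sum_mul]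
    congr 1
    · simp [hFdef]
    refine sum_congr rfl fun j hj ↦ ?_
    rw [mem_Ico] at hj
    have hDj := hD j hj.1 hj.2
    rw [← prod_Ico_consecutive _ (by omega : 2 ≤ j + 1) (by omega : j + 1 ≤ N)] at hDj
    have p1 : ∏ i ∈ Ico 2 (j + 1), (1 - (if i ≤ j then 1 else z) * q ^ i) =
        ∏ i ∈ Ico 2 (j + 1), (1 - q ^ i) := prod_congr rfl fun i hi ↦ by
      rw [mem_Ico] at hi
      rw [if_pos (by omega), one_mul]
    have p2 : ∏ i ∈ Ico (j + 1) N, (1 - (if i ≤ j then 1 else z) * q ^ i) =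
        ∏ i ∈ Ico (j + 1) N, (1 - z * q ^ i) := prod_congr rfl fun i hi ↦ by
      rw [mem_Ico] at hi
      rw [if_neg (by omega)]
    have p3 : qp q z N = qp q z j * ∏ i ∈ Ico (j + 1) N, (1 - z * q ^ i) := by
      rw [qp_eq_prod_Ico q z j, prod_Ico_consecutive _ (by omega) (by omega), qp_eq_prod_Ico,
        prod_Ico_succ_top (by omega), hq]
      simp
    rw [p1, p2] at hDj
    have h2 := hF j
    rw [qp_one_eq q hj.1] at h2
    rw [p3]
    linear_combination zi ^ j * q ^ j * qp q z j * (∏ i ∈ Ico (j + 1) N, (1 - z * q ^ i)) * D j * h2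
      - zi ^ j * q ^ j * qp q z j * (1 - q) * F j * hDj
  linear_combination e2 + (1 - q) * qb - qp q z N * qp q zi N * s1 - qp q zi N * s2 +
    (1 - q) * qp q zi N * euler

end Nilpotent

/-! ### Partitions weighted by their crank -/

section GenFun

open PowerSeries PowerSeries.WithPiTopology Nat.Partition

lemma genFun_eq_prod (f : ℕ → ℕ → ℂ) (s : Finset ℕ) (hs : 0 ∉ s)
    (hf : ∀ i ∉ s, ∀ c, c ≠ 0 → f i c = 0) :
    genFun f = ∏ i ∈ s, (1 + ∑' j, f i (j + 1) • (X : ℂ⟦X⟧) ^ (i * (j + 1))) := by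
  have hs' (i) (hi : i ∈ s) : i - 1 + 1 = i :=
    Nat.sub_add_cancel (Nat.pos_of_ne_zero fun h ↦ hs (h ▸ hi))
  have h := hasProd_prod_of_ne_finset_one (L := SummationFilter.unconditional ℕ)
    (s := s.image (· - 1))
    (f := fun i ↦ 1 + ∑' j, f (i + 1) (j + 1) • (X : ℂ⟦X⟧) ^ ((i + 1) * (j + 1))) (by
      intro b hb
      have hb' : b + 1 ∉ s := fun h ↦ hb (mem_image.mpr ⟨b + 1, h, rfl⟩)
      simp [hf _ hb'])
  rw [(hasProd_genFun f).unique h, prod_image]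
  · exact prod_congr rfl fun i hi ↦ by simp only [hs' i hi]
  · intro a ha b hb hab
    rw [← hs' a ha, ← hs' b hb]
    exact congrArg (· + 1) hab

lemma geom_factor (w : ℂ) {i : ℕ} (hi : i ≠ 0) :
    (1 + ∑' j, w ^ (j + 1) • (X : ℂ⟦X⟧) ^ (i * (j + 1))) * (1 - C w * X ^ i) = 1 := by
  have h0 : (C w * X ^ i : ℂ⟦X⟧).constantCoeff = 0 := by simp [hi]
  refine Eq.trans ?_ (tsum_pow_mul_one_sub_of_constantCoeff_eq_zero h0)
  congr 1
  rw [(summable_pow_of_constantCoeff_eq_zero h0).tsum_eq_zero_add]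
  simp only [pow_zero, mul_pow, ← pow_mul, smul_eq_C_mul, map_pow]

/-- The weight that allows only parts from `s`, each part `i` contributing a factor `w i`. -/
def partWeight (s : Finset ℕ) (w : ℕ → ℂ) (i c : ℕ) : ℂ := if i ∈ s then w i ^ c else 0

/-- As `partWeight s w`, but the part `1` may also occur, if it does so exactly `j` times. -/
def onesWeight (j : ℕ) (s : Finset ℕ) (w : ℕ → ℂ) (i c : ℕ) : ℂ :=
  if i = 1 then (if c = j then 1 else 0) else partWeight s w i c

lemma genFun_partWeight (s : Finset ℕ) (hs : 0 ∉ s) (w : ℕ → ℂ) :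
    genFun (partWeight s w) * ∏ i ∈ s, (1 - C (w i) * X ^ i) = 1 := by
  rw [genFun_eq_prod _ s hs (fun i hi c _ ↦ by simp [partWeight, hi]), ← prod_mul_distrib]
  refine prod_eq_one fun i hi ↦ ?_
  simp only [partWeight, if_pos hi]
  exact geom_factor (w i) (fun h ↦ hs (h ▸ hi))

lemma genFun_onesWeight {j : ℕ} (hj : 1 ≤ j) (s : Finset ℕ) (hs : 0 ∉ s) (hs1 : 1 ∉ s)
    (w : ℕ → ℂ) :
    genFun (onesWeight j s w) * ∏ i ∈ s, (1 - C (w i) * X ^ i) = 1 + X ^ j := by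
  rw [genFun_eq_prod _ (insert 1 s) (by simp [hs]) (fun i hi c _ ↦ by
      simp only [mem_insert, not_or] at hi
      simp [onesWeight, partWeight, hi]), prod_insert hs1, mul_assoc, ← prod_mul_distrib,
    prod_eq_one, mul_one, tsum_eq_single (j - 1)]
  · simp [onesWeight, Nat.sub_add_cancel hj]
  · intro b hb
    simp [onesWeight, show b + 1 ≠ j by omega]
  · intro i hi
    have h1 : i ≠ 1 := fun h ↦ hs1 (h ▸ hi)
    simp only [onesWeight, partWeight, if_pos hi, if_neg h1]
    exact geom_factor (w i) (fun h ↦ hs (h ▸ hi))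

/-- Generating function of the partitions into parts between `2` and `L`. -/
noncomputable def genE (L : ℕ) : ℂ⟦X⟧ := genFun (partWeight (Ico 2 (L + 1)) 1)

/-- Generating function of the partitions into parts `2 ≤ i < N`, with a factor `z` for each part
greater than `j`. -/
noncomputable def genD (z : ℂ) (N j : ℕ) : ℂ⟦X⟧ :=
  genFun (partWeight (Ico 2 N) fun i ↦ if i ≤ j then 1 else z)

lemma genE_mul (L : ℕ) : genE L * ∏ i ∈ Ico 2 (L + 1), (1 - X ^ i) = 1 := by
  simpa [genE] using genFun_partWeight (Ico 2 (L + 1)) (by simp) 1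

lemma genD_mul (z : ℂ) (N j : ℕ) :
    genD z N j * ∏ i ∈ Ico 2 N, (1 - C (if i ≤ j then 1 else z) * X ^ i) = 1 :=
  genFun_partWeight (Ico 2 N) (by simp) fun i ↦ if i ≤ j then 1 else z

lemma X_pow_mul_genE {L : ℕ} (hL : 2 ≤ L) : X ^ L * genE L = genE L - genE (L - 1) := by
  have h1 := genE_mul L
  have h2 := genE_mul (L - 1)
  rw [Nat.sub_add_cancel (by omega)] at h2
  rw [prod_Ico_succ_top (by omega)] at h1
  linear_combination (1 - X ^ L) * genE L * h2 - genE (L - 1) * h1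

lemma X_pow_mul_genD (z : ℂ) (N : ℕ) {j : ℕ} (hj : 1 ≤ j) :
    X ^ j * genD z N j =
      genFun (onesWeight j (Ico 2 N) fun i ↦ if i ≤ j then 1 else z) - genD z N j := by
  have h1 := genD_mul z N j
  have h2 := genFun_onesWeight hj (Ico 2 N) (by simp) (by simp) fun i ↦ if i ≤ j then 1 else z
  linear_combination (-genD z N j) * h2 +
    genFun (onesWeight j (Ico 2 N) fun i ↦ if i ≤ j then 1 else z) * h1

lemma prod_map_ite_eq_pow (m : Multiset ℕ) (p : ℕ → Prop) [DecidablePred p] (z : ℂ) :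
    (m.map fun i ↦ if p i then z else 1).prod = z ^ (m.filter p).card := by
  induction m using Multiset.induction with
  | empty => simp
  | cons a m ih => by_cases h : p a <;> simp [h, ih, pow_succ, mul_comm]

lemma prod_partWeight_one (m : Multiset ℕ) (s : Finset ℕ) :
    m.toFinsupp.prod (partWeight s 1) = if ∀ i ∈ m, i ∈ s then 1 else 0 := by
  simp [Finsupp.prod, partWeight, prod_boole]

lemma prod_onesWeight {N j : ℕ} (hj : 1 ≤ j) (m : Multiset ℕ) (hm : ∀ i ∈ m, 1 ≤ i ∧ i < N)
    (h1 : 1 ∈ m) (z : ℂ) :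
    m.toFinsupp.prod (onesWeight j (Ico 2 N) fun i ↦ if i ≤ j then 1 else z) =
      if m.count 1 = j then z ^ (m.filter (j < ·)).card else 0 := by
  split_ifs with h
  · rw [← prod_map_ite_eq_pow, prod_multiset_map_count, Finsupp.prod, Multiset.toFinsupp_support]
    refine prod_congr rfl fun i hi ↦ ?_
    rw [Multiset.mem_toFinset] at hi
    have := hm i hi
    rw [Multiset.toFinsupp_apply, onesWeight, partWeight]
    by_cases hi1 : i = 1
    · subst hi1
      simp [h, show ¬ j < 1 by omega]
    · rw [if_neg hi1, if_pos (by simp; omega)]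
      by_cases hij : j < i
      · rw [if_pos hij, if_neg (by omega)]
      · rw [if_neg hij, if_pos (by omega)]
  · rw [Finsupp.prod]
    exact prod_eq_zero (i := 1) (by simpa using h1) (by simp [onesWeight, h])

lemma crank_weight {n N : ℕ} (hn : 1 ≤ n) (hN : n < N) {z : ℂ} (hz : z ≠ 0) (p : n.Partition) :
    ∑ L ∈ Ico 2 N, z ^ L * (p.parts.toFinsupp.prod (partWeight (Ico 2 (L + 1)) 1) -
        p.parts.toFinsupp.prod (partWeight (Ico 2 (L - 1 + 1)) 1)) +
      ∑ j ∈ Ico 1 N, z⁻¹ ^ j * (p.parts.toFinsupp.prod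
          (onesWeight j (Ico 2 N) fun i ↦ if i ≤ j then 1 else z) -
        p.parts.toFinsupp.prod (partWeight (Ico 2 N) fun i ↦ if i ≤ j then 1 else z)) =
      z ^ p.crank := by
  have hp (i) (hi : i ∈ p.parts) : 1 ≤ i ∧ i < N :=
    ⟨p.parts_pos hi, (p.le_of_mem_parts hi).trans_lt hN⟩
  rw [Nat.Partition.crank]
  split_ifs with h
  · have h1 : 1 ∉ p.parts := Multiset.count_eq_zero.mp h
    have hp2 (i) (hi : i ∈ p.parts) : 2 ≤ i := by
      have := hp i hi
      have : i ≠ 1 := fun h ↦ h1 (h ▸ hi)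
      omega
    rw [sum_eq_zero (s := Ico 1 N), add_zero]
    · have hsup (L : ℕ) : p.parts.toFinsupp.prod (partWeight (Ico 2 (L + 1)) 1) =
          if p.parts.sup ≤ L then 1 else 0 := by
        rw [prod_partWeight_one]
        refine if_congr ?_ rfl rfl
        rw [Multiset.sup_le]
        refine forall₂_congr fun i hi ↦ ?_
        have := hp2 i hi
        simp; omega
      simp_rw [hsup]
      obtain ⟨a, ha⟩ : ∃ a, a ∈ p.parts := by
        by_contra! h'
        have h0 := p.parts_sum
        rw [Multiset.eq_zero_of_forall_notMem h', Multiset.sum_zero] at h0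
        omega
      have h2 : 2 ≤ p.parts.sup := (hp2 a ha).trans (Multiset.le_sup ha)
      have h3 : p.parts.sup ≤ n := Multiset.sup_le.mpr fun i hi ↦ p.le_of_mem_parts hi
      rw [sum_eq_single p.parts.sup]
      · rw [if_pos le_rfl, if_neg (by omega)]; simp
      · intro L hL hne
        rw [mem_Ico] at hL
        by_cases hle : p.parts.sup ≤ L
        · rw [if_pos hle, if_pos (by omega)]; simp
        · rw [if_neg hle, if_neg (by omega)]; simp
      · intro h'
        exact absurd (mem_Ico.mpr ⟨h2, by omega⟩) h'
    · intro j _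
      rw [mul_eq_zero, sub_eq_zero]
      right
      refine prod_congr rfl fun i hi ↦ ?_
      have : i ≠ 1 := by rintro rfl; simp [h1] at hi
      rw [onesWeight, if_neg this]
  · have h1 : 1 ∈ p.parts := by
      by_contra h'
      exact h (Multiset.count_eq_zero.mpr h')
    have hw : p.parts.count 1 ≤ n := by
      have := p.parts.card_nsmul_le_sum (a := 1) fun i hi ↦ p.parts_pos hi
      rw [p.parts_sum] at this
      have := p.parts.count_le_card 1
      simp at *; omega
    have hzero (s : Finset ℕ) (hs : 1 ∉ s) (w) : p.parts.toFinsupp.prod (partWeight s w) = 0 :=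
      prod_eq_zero (i := 1) (by simpa using h1) (by simp [partWeight, hs])
    rw [sum_eq_zero, zero_add, sum_eq_single (p.parts.count 1)]
    · rw [hzero _ (by simp), prod_onesWeight (by omega) _ hp h1, if_pos rfl, sub_zero,
        zpow_sub₀ hz, zpow_natCast, zpow_natCast, inv_pow, mul_comm, div_eq_mul_inv]
    · intro j hj hne
      rw [hzero _ (by simp), prod_onesWeight (mem_Ico.mp hj).1 _ hp h1, if_neg (Ne.symm hne)]
      simp
    · intro h'
      exact absurd (mem_Ico.mpr ⟨by omega, by omega⟩) h'
    · intro L _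
      rw [hzero _ (by simp), hzero _ (by simp)]; simp

/-- The crank generating function as a sum over the largest part (partitions without ones) and
over the number of ones (the remaining partitions). -/
lemma coeff_crank {n N : ℕ} (hn : 1 ≤ n) (hN : n < N) {z : ℂ} (hz : z ≠ 0) :
    coeff n (1 + ∑ L ∈ Ico 2 N, C z ^ L * X ^ L * genE L +
      ∑ j ∈ Ico 1 N, C z⁻¹ ^ j * X ^ j * genD z N j) = ∑ p : n.Partition, z ^ p.crank := by
  have e1 : ∑ L ∈ Ico 2 N, C z ^ L * X ^ L * genE L =
      ∑ L ∈ Ico 2 N, C (z ^ L) * (genE L - genE (L - 1)) :=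
    sum_congr rfl fun L hL ↦ by rw [mul_assoc, X_pow_mul_genE (mem_Ico.mp hL).1, map_pow]
  have e2 : ∑ j ∈ Ico 1 N, C z⁻¹ ^ j * X ^ j * genD z N j =
      ∑ j ∈ Ico 1 N, C (z⁻¹ ^ j) *
        (genFun (onesWeight j (Ico 2 N) fun i ↦ if i ≤ j then 1 else z) - genD z N j) :=
    sum_congr rfl fun j hj ↦ by rw [mul_assoc, X_pow_mul_genD _ _ (mem_Ico.mp hj).1, map_pow]
  rw [e1, e2, map_add, map_add, coeff_one, if_neg (by omega), zero_add, map_sum, map_sum]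
  simp_rw [coeff_C_mul, map_sub, genE, genD, coeff_genFun, ← crank_weight hn hN hz,
    sum_add_distrib, ← sum_sub_distrib, mul_sum]
  rw [sum_comm, add_left_cancel_iff, sum_comm]

end GenFun

/-! ### Power series and truncation modulo `X ^ N` -/

section Series

open PowerSeries

lemma map_qp {S T : Type*} [CommRing S] [CommRing T] (f : S →+* T) (q w : S) (n : ℕ) :
    f (qp q w n) = qp (f q) (f w) n := by
  simp [qp]

lemma mk_X_pow_eq_zero (N : ℕ) :
    (Ideal.Quotient.mk (Ideal.span {(X : ℂ⟦X⟧) ^ N}) X) ^ N = 0 := by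
  rw [← map_pow, Ideal.Quotient.eq_zero_iff_mem]
  exact Ideal.mem_span_singleton_self _

lemma mk_eq_mk {N : ℕ} {A B : ℂ⟦X⟧} (h : Ideal.Quotient.mk (Ideal.span {X ^ N}) A =
    Ideal.Quotient.mk (Ideal.span {X ^ N}) B) {n : ℕ} (hn : n < N) : coeff n A = coeff n B := by
  rw [Ideal.Quotient.eq, Ideal.mem_span_singleton, X_pow_dvd_iff] at h
  simpa [sub_eq_zero] using h n hn

lemma coeff_mul_eq_zero {A B : ℂ⟦X⟧} {n : ℕ}
    (h : ∀ i j, i + j = n → coeff i A = 0 ∨ coeff j B = 0) : coeff n (A * B) = 0 := by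
  rw [coeff_mul]
  exact sum_eq_zero fun x hx ↦ mul_eq_zero.mpr (h x.1 x.2 (HasAntidiagonal.mem_antidiagonal.mp hx))

/-- A factor that is a power series in `X ^ 5` with nonzero constant term does not affect whether
the coefficients in a residue class modulo `5` vanish. -/
lemma coeff_eq_zero_of_mul {A B : ℂ⟦X⟧} (hB : ∀ n, ¬ 5 ∣ n → coeff n B = 0)
    (hB0 : coeff 0 B ≠ 0) {N : ℕ} (hAB : ∀ m < N, m % 5 = 4 → coeff m (A * B) = 0) :
    ∀ m < N, m % 5 = 4 → coeff m A = 0 := by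
  intro m
  induction m using Nat.strong_induction_on with
  | _ m ih =>
    intro hm hm5
    have h := hAB m hm hm5
    rw [coeff_mul, sum_eq_single (m, 0)] at h
    · exact (mul_eq_zero.mp h).resolve_right hB0
    · rintro ⟨i, j⟩ hij hne
      rw [HasAntidiagonal.mem_antidiagonal] at hij
      simp only at hij ⊢
      by_cases hj : 5 ∣ j
      · have : j ≠ 0 := by
          rintro rfl
          exact hne (by simp [← hij])
        rw [ih i (by omega) (by omega) (by omega), zero_mul]
      · rw [hB j hj, mul_zero]
    · simp

/-! ### Vanishing coefficients of the product and theta series -/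

lemma coeff_qp_stable {n N M : ℕ} (hn : n < N) (hM : N ≤ M) :
    coeff n (qp (X : ℂ⟦X⟧) 1 M) = coeff n (qp (X : ℂ⟦X⟧) 1 N) := by
  apply mk_eq_mk (N := N) _ hn
  rw [map_qp, map_qp, qp_stable (mk_X_pow_eq_zero N) _ hM]

/-- By Euler's pentagonal number theorem, since generalized pentagonal numbers are congruent to
`0`, `1` or `2` modulo `5`. -/
lemma coeff_qp_one {n N : ℕ} (hn : n < N) (h5 : 3 ≤ n % 5) :
    coeff n (qp (X : ℂ⟦X⟧) 1 N) = 0 := by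
  obtain ⟨s, hs⟩ := Filter.eventually_atTop.mp (coeff_prod_one_sub_X_pow_eventually_eq ℂ n)
  obtain ⟨M, hM⟩ := s.exists_nat_subset_range
  have h := hs (range (M + N)) (hM.trans (range_subset_range.mpr (by omega)))
  rw [← coeff_qp_stable hn (by omega : N ≤ M + N)]
  simp only [qp, one_mul]
  rw [h, coeff_pentagonalSeries_eq_zero]
  rintro ⟨k, rfl⟩
  have hk := two_mul_natCast_pentagonal k
  have h2 : (2 * (pentagonal k : ℤ)) % 5 = (k * (3 * k - 1)) % 5 := by rw [hk]
  have h3 : k % 5 = 0 ∨ k % 5 = 1 ∨ k % 5 = 2 ∨ k % 5 = 3 ∨ k % 5 = 4 := by omega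
  rcases h3 with h | h | h | h | h <;>
    simp [Int.mul_emod, Int.sub_emod, h] at h2 <;> omega

/-- The right-hand side of the Jacobi triple product, as a truncated power series. -/
noncomputable def theta (x : ℂ) (N : ℕ) : ℂ⟦X⟧ :=
  ∑ j ∈ range (4 * N + 1), (-1) ^ j * C x ^ j * X ^ tri (j - 2 * N)

/-- The Jacobi triple product at a complex number `x`, modulo `X ^ N`. -/
lemma jtp_series {x : ℂ} (hx : x ≠ 0) {N : ℕ} (hN : 1 ≤ N) :
    Ideal.Quotient.mk (Ideal.span {(X : ℂ⟦X⟧) ^ N}) ((1 - C x) * C x ^ (2 * N) *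
      (qp X (C x) N * qp X (C x⁻¹) N * qp X 1 N)) =
    Ideal.Quotient.mk (Ideal.span {X ^ N}) (theta x N) := by
  set π := Ideal.Quotient.mk (Ideal.span {(X : ℂ⟦X⟧) ^ N})
  have hq : (π X) ^ N = 0 := mk_X_pow_eq_zero N
  have h := jtp hq (π (C x))
  have hxx : π (C x) * π (C x⁻¹) = 1 := by
    rw [← map_mul, ← map_mul, mul_inv_cancel₀ hx, map_one, map_one]
  have h1 : ∏ i ∈ range (2 * N), (1 - π (C x) * π X ^ i) = (1 - π (C x)) * qp (π X) (π (C x)) N := by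
    obtain ⟨M, hM⟩ : ∃ M, 2 * N = M + 1 := ⟨2 * N - 1, by omega⟩
    rw [hM, prod_range_succ', ← qp_stable hq (π (C x)) (by omega : N ≤ M), qp, pow_zero, mul_one,
      mul_comm]
  have h2 : ∏ i ∈ range (2 * N), (π (C x) - π X ^ (i + 1)) =
      π (C x) ^ (2 * N) * qp (π X) (π (C x⁻¹)) N := by
    rw [← qp_stable hq (π (C x⁻¹)) (by omega : N ≤ 2 * N), qp, ← card_range (2 * N),
      ← prod_const, card_range, ← prod_mul_distrib]
    exact prod_congr rfl fun i _ ↦ by linear_combination (π X ^ (i + 1)) * hxx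
  rw [h1, h2] at h
  simp only [theta, map_mul, map_sum, map_pow, map_sub, map_one, map_neg, map_qp]
  rw [← h]
  ring

/-- For a fifth root of unity `x`, the terms `k` and `1 - k` of the theta series cancel when
`k ≡ 3 (mod 5)`; all other triangular numbers are congruent to `0` or `1` modulo `5`. -/
lemma coeff_theta {x : ℂ} (hx : x ^ 5 = 1) {N : ℕ} (hN : 5 ∣ N) {t : ℕ} (ht : 2 ≤ t % 5) :
    coeff t (theta x N) = 0 := by
  have hc (j : ℕ) : coeff t ((-1) ^ j * C x ^ j * X ^ tri (j - 2 * N) : ℂ⟦X⟧) =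
      if t = tri (j - 2 * N) then (-1) ^ j * x ^ j else 0 := by
    rw [show ((-1) ^ j * C x ^ j * X ^ tri (j - 2 * N) : ℂ⟦X⟧) =
      C ((-1) ^ j * x ^ j) * X ^ tri (j - 2 * N) by simp, coeff_C_mul, coeff_X_pow]
    simp
  obtain ⟨M, rfl⟩ := hN
  have htri (j : ℕ) (h : t = tri (j - 2 * (5 * M : ℕ))) : j % 5 = 3 := by
    have h1 := two_mul_tri ((j : ℤ) - 2 * (5 * M : ℕ))
    rw [← h] at h1
    obtain ⟨k, hk⟩ : ∃ k : ℤ, k = (j : ℤ) - 2 * (5 * M : ℕ) := ⟨_, rfl⟩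
    rw [← hk] at h1
    have h2 : (2 * (t : ℤ)) % 5 = (k * (k - 1)) % 5 := by rw [h1]
    have h3 : k % 5 = 0 ∨ k % 5 = 1 ∨ k % 5 = 2 ∨ k % 5 = 3 ∨ k % 5 = 4 := by omega
    rcases h3 with h | h | h | h | h <;>
      simp [Int.mul_emod, Int.sub_emod, h] at h2 <;> push_cast at hk <;> omega
  have hxm (j : ℕ) : x ^ j = x ^ (j % 5) := by
    conv_lhs => rw [← Nat.div_add_mod j 5, pow_add, pow_mul, hx, one_pow, one_mul]
  rw [theta, map_sum, sum_congr rfl fun j _ ↦ hc j, ← sum_filter]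
  refine sum_involution (fun j _ ↦ 4 * (5 * M) + 1 - j) ?_ ?_ ?_ ?_
  · intro j hj
    rw [mem_filter, mem_range] at hj
    have := htri j hj.2
    have hj' : (4 * (5 * M) + 1 - j) % 5 = 3 := by omega
    rw [hxm j, hxm (4 * (5 * M) + 1 - j), this, hj', ← add_mul]
    rcases Nat.even_or_odd j with h | h
    · have h' : Odd (4 * (5 * M) + 1 - j) := by grind
      rw [h.neg_one_pow, h'.neg_one_pow]; simp
    · have h' : Even (4 * (5 * M) + 1 - j) := by grind
      rw [h.neg_one_pow, h'.neg_one_pow]; simp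
  · intro j hj _
    rw [mem_filter, mem_range] at hj
    omega
  · intro j hj
    rw [mem_filter, mem_range] at hj ⊢
    have := htri j hj.2
    refine ⟨by omega, ?_⟩
    rw [hj.2]
    have h1 := two_mul_tri ((j : ℤ) - 2 * (5 * M : ℕ))
    have h2 := two_mul_tri (((4 * (5 * M) + 1 - j : ℕ) : ℤ) - 2 * (5 * M : ℕ))
    have h3 : ((4 * (5 * M) + 1 - j : ℕ) : ℤ) = 4 * (5 * M) + 1 - j := by omega
    rw [h3] at h2 ⊢
    zify
    push_cast at *
    linarith
  · intro j hj
    rw [mem_filter, mem_range] at hj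
    omega

/-- `∏_{w ^ 5 = 1} (1 - w y) = 1 - y ^ 5`. -/
lemma prod_fifth_roots {R : Type*} [CommRing R] {z : R} (hz : 1 + z + z ^ 2 + z ^ 3 + z ^ 4 = 0)
    (y : R) : (1 - 1 * y) * (1 - z * y) * (1 - z ^ 4 * y) * (1 - z ^ 2 * y) * (1 - z ^ 3 * y) =
      1 - y ^ 5 := by
  have h5 : z ^ 5 = 1 := by linear_combination (z - 1) * hz
  have h1 : (1 - z * y) * (1 - z ^ 4 * y) = 1 - (z + z ^ 4) * y + y ^ 2 := by
    linear_combination y ^ 2 * h5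
  have h2 : (1 - z ^ 2 * y) * (1 - z ^ 3 * y) = 1 + (1 + z + z ^ 4) * y + y ^ 2 := by
    linear_combination y ^ 2 * h5 - y * hz
  have h3 : (z + z ^ 4) ^ 2 + (z + z ^ 4) = 1 := by
    linear_combination (z ^ 3 + 2) * h5 + hz
  rw [mul_assoc (1 - 1 * y), h1, mul_assoc, h2]
  linear_combination (1 - y) * (-y ^ 2) * h3

/-- The product of `(wq; q)_N` over all fifth roots of unity `w` is a series in `q ^ 5`. -/
lemma qp_fifth_roots {z : ℂ} (hz : 1 + z + z ^ 2 + z ^ 3 + z ^ 4 = 0) (N : ℕ) :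
    qp X 1 N * qp X (C z) N * qp X (C (z ^ 4)) N * qp X (C (z ^ 2)) N * qp X (C (z ^ 3)) N =
      ∏ i ∈ range N, (1 - (X : ℂ⟦X⟧) ^ (5 * (i + 1))) := by
  have hz' : 1 + C z + C z ^ 2 + C z ^ 3 + C z ^ 4 = (0 : ℂ⟦X⟧) := by
    simpa using congrArg (C (R := ℂ)) hz
  simp only [qp, ← prod_mul_distrib, map_pow]
  exact prod_congr rfl fun i _ ↦ by rw [prod_fifth_roots hz', ← pow_mul, mul_comm 5]

lemma coeff_prod_X_pow_five (N : ℕ) :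
    (∀ n, ¬ 5 ∣ n → coeff n (∏ i ∈ range N, (1 - (X : ℂ⟦X⟧) ^ (5 * (i + 1)))) = 0) ∧
      coeff 0 (∏ i ∈ range N, (1 - (X : ℂ⟦X⟧) ^ (5 * (i + 1)))) = 1 := by
  constructor
  · induction N with
    | zero =>
      intro n hn
      rw [range_zero, prod_empty, coeff_one, if_neg (by rintro rfl; simp at hn)]
    | succ N ih =>
      intro n hn
      rw [prod_range_succ]
      refine coeff_mul_eq_zero fun i j hij ↦ ?_
      by_cases hi : 5 ∣ i
      · right
        rw [map_sub, coeff_one, coeff_X_pow, if_neg (by omega), if_neg (by omega), sub_zero]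
      · exact .inl (ih i hi)
  · simp [map_prod]

/-- The crank generating function at a primitive fifth root of unity has no terms with exponent
`4` modulo `5`. -/
lemma sum_crank_eq_zero {z : ℂ} (hz : 1 + z + z ^ 2 + z ^ 3 + z ^ 4 = 0) (hz2 : z ^ 2 ≠ 1)
    (n : ℕ) : ∑ p : (5 * n + 4).Partition, z ^ p.crank = 0 := by
  have h5 : z ^ 5 = 1 := by linear_combination (z - 1) * hz
  have hz0 : z ≠ 0 := by rintro rfl; simp at h5
  have hinv : z⁻¹ = z ^ 4 := inv_eq_of_mul_eq_one_right (by linear_combination h5)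
  have hinv2 : (z ^ 2)⁻¹ = z ^ 3 := inv_eq_of_mul_eq_one_right (by linear_combination h5)
  -- The truncation order: any multiple of `5` above `5 * n + 4` works.
  obtain ⟨N, hN⟩ : ∃ N, N = 5 * (n + 1) := ⟨_, rfl⟩
  set G : ℂ⟦X⟧ := 1 + ∑ L ∈ Ico 2 N, C z ^ L * X ^ L * genE L +
      ∑ j ∈ Ico 1 N, C z⁻¹ ^ j * X ^ j * genD z N j with hG
  set π := Ideal.Quotient.mk (Ideal.span {(X : ℂ⟦X⟧) ^ N}) with hπ
  have h1 : π ((G + (C z - 1) * X) * (qp X (C z) N * qp X (C z⁻¹) N)) = π (qp X 1 N) := by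
    have := crank_product (q := π X) (z := π (C z)) (zi := π (C z⁻¹)) (N := N)
      (by rw [← map_mul, ← map_mul, mul_inv_cancel₀ hz0, map_one, map_one])
      (mk_X_pow_eq_zero N) (by omega) (fun L ↦ π (genE L)) (fun j ↦ π (genD z N j))
      (fun L _ ↦ by simpa using congrArg π (genE_mul L))
      (fun j _ _ ↦ by
        have := congrArg π (genD_mul z N j)
        simp only [map_mul, map_prod, map_sub, map_one, map_pow] at this
        refine Eq.trans ?_ this
        congr 1
        exact prod_congr rfl fun i _ ↦ by split_ifs <;> simp)
    simpa only [hG, map_mul, map_add, map_sum, map_pow, map_sub, map_one, map_qp] using this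
  have h2 := jtp_series (pow_ne_zero 2 hz0) (by omega : 1 ≤ N)
  rw [← hπ] at h2
  set u : ℂ⟦X⟧ := (1 - C (z ^ 2)) * C (z ^ 2) ^ (2 * N) with hu
  set P : ℂ⟦X⟧ := ∏ i ∈ range N, (1 - (X : ℂ⟦X⟧) ^ (5 * (i + 1))) with hP
  have h3 : π ((G + (C z - 1) * X) * (C ((1 - z ^ 2) * (z ^ 2) ^ (2 * N)) * P)) =
      π (qp X 1 N * theta (z ^ 2) N) := by
    have hu' : C ((1 - z ^ 2) * (z ^ 2) ^ (2 * N)) = u := by simp [hu]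
    rw [map_mul π (qp X 1 N), ← h2, ← h1, hu', hP, ← qp_fifth_roots hz, hinv, hinv2, ← map_mul]
    congr 1
    ring
  have hP5 := coeff_prod_X_pow_five N
  rw [← hP] at hP5
  have h4 := coeff_eq_zero_of_mul (A := G + (C z - 1) * X)
    (B := C ((1 - z ^ 2) * (z ^ 2) ^ (2 * N)) * P) (N := N)
    (fun n hn ↦ by rw [coeff_C_mul, hP5.1 n hn, mul_zero])
    (by
      rw [coeff_C_mul, hP5.2, mul_one]
      exact mul_ne_zero (sub_ne_zero.mpr hz2.symm) (pow_ne_zero _ (pow_ne_zero _ hz0)))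
    (fun m hm hm5 ↦ by
      rw [mk_eq_mk h3 hm]
      -- The residues `{0, 1, 2}` and `{0, 1}` of the two factors never add up to `4`.
      refine coeff_mul_eq_zero fun i j hij ↦ ?_
      by_cases hi : 3 ≤ i % 5
      · exact .inl (coeff_qp_one (by omega) hi)
      · exact .inr (coeff_theta (by rw [← pow_mul, mul_comm, pow_mul, h5, one_pow])
          ⟨n + 1, hN⟩ (by omega)))
    (5 * n + 4) (by omega) (by omega)
  have h6 : coeff (5 * n + 4) ((C z - 1) * X : ℂ⟦X⟧) = 0 := by
    rw [show (C z - 1 : ℂ⟦X⟧) = C (z - 1) by simp, coeff_C_mul, coeff_X, if_neg (by omega),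
      mul_zero]
  rw [map_add, h6, add_zero, hG, coeff_crank (by omega) (by omega) hz0] at h4
  exact h4

end Series

/-! ### Counting by residue classes of the crank -/

section Counting

open Polynomial in
/-- The powers `1, ζ, ζ², ζ³` of a primitive fifth root of unity are linearly independent over
`ℚ`, so a rational relation between `1, ζ, …, ζ⁴` has equal coefficients. -/
lemma eq_of_sum_eq_zero {ζ : ℂ} (hζ : IsPrimitiveRoot ζ 5)
    (hs : 1 + ζ + ζ ^ 2 + ζ ^ 3 + ζ ^ 4 = 0) (a : ℕ → ℕ)
    (h : ∑ r ∈ range 5, (a r : ℂ) * ζ ^ r = 0) : ∀ r < 5, a r = a 4 := by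
  set c : ℕ → ℚ := fun r ↦ a r - a 4 with hc
  set f : ℚ[X] := C (c 0) + C (c 1) * X + C (c 2) * X ^ 2 + C (c 3) * X ^ 3 with hf
  have h0 : aeval ζ f = 0 := by
    simp [hf, hc, sum_range_succ] at h ⊢
    linear_combination h - a 4 * hs
  have hdvd := minpoly.dvd ℚ ζ h0
  have hdeg : f.degree < (minpoly ℚ ζ).degree := by
    rw [← cyclotomic_eq_minpoly_rat hζ (by norm_num), degree_cyclotomic,
      Nat.totient_prime (by norm_num)]
    have : f.degree ≤ 3 := by rw [hf]; compute_degree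
    exact this.trans_lt (by norm_num)
  have hf0 := eq_zero_of_dvd_of_degree_lt hdvd hdeg
  have hcoeff (r : ℕ) : f.coeff r = 0 := by rw [hf0, coeff_zero]
  have hr : ∀ r < 4, c r = 0 := by
    intro r hr
    have := hcoeff r
    interval_cases r <;> simpa [hf, coeff_X, coeff_C] using this
  intro r hr5
  rcases (by omega : r = 4 ∨ r < 4) with rfl | h4
  · rfl
  · have := hr r h4
    simp only [hc, sub_eq_zero] at this
    exact_mod_cast this

/-- The number of partitions of `k` whose crank leaves the remainder `r` modulo `5`. -/
def crankCount (k r : ℕ) : ℕ := #{p : k.Partition | p.crank % 5 = r}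

lemma sum_fiber {M : Type*} [AddCommMonoid M] (k : ℕ) (g : ℤ → M) :
    ∑ p : k.Partition, g (p.crank % 5) = ∑ r ∈ range 5, crankCount k r • g r := by
  rw [← sum_fiberwise_of_maps_to (g := fun p : k.Partition ↦ (p.crank % 5).toNat) (t := range 5)
    (fun p _ ↦ by rw [mem_range]; omega)]
  refine sum_congr rfl fun r _ ↦ ?_
  have : (univ.filter fun p : k.Partition ↦ (p.crank % 5).toNat = r) =
      univ.filter fun p ↦ p.crank % 5 = (r : ℤ) := by
    ext p
    simp only [mem_filter, mem_univ, true_and]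
    omega
  rw [this, crankCount, ← sum_const]
  refine sum_congr rfl fun p hp ↦ ?_
  rw [(mem_filter.mp hp).2]

lemma crankCount_eq (n : ℕ) : ∀ r < 5, crankCount (5 * n + 4) r = crankCount (5 * n + 4) 4 := by
  have hζ := Complex.isPrimitiveRoot_exp 5 (by norm_num)
  set ζ := Complex.exp (2 * Real.pi * Complex.I / (5 : ℕ))
  have hs : 1 + ζ + ζ ^ 2 + ζ ^ 3 + ζ ^ 4 = 0 := by
    simpa [sum_range_succ] using hζ.geom_sum_eq_zero (by norm_num)
  have hζ0 : ζ ≠ 0 := hζ.ne_zero (by norm_num)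
  apply eq_of_sum_eq_zero hζ hs
  have h := sum_crank_eq_zero hs (hζ.pow_ne_one_of_pos_of_lt (by norm_num) (by norm_num)) n
  have e (c : ℤ) : ζ ^ c = ζ ^ (c % 5) := by
    conv_lhs => rw [← Int.mul_ediv_add_emod c 5, zpow_add₀ hζ0, zpow_mul]
    have : ζ ^ (5 : ℤ) = 1 := by exact_mod_cast hζ.pow_eq_one
    rw [this, one_zpow, one_mul]
  rw [sum_congr rfl fun p _ ↦ e p.crank, sum_fiber _ (ζ ^ ·)] at h
  simpa using h

end Counting

end CrankMod5

theorem andrews_garvan_crank_mod_5 (n : ℕ) (m : ℤ) (hm0 : 0 ≤ m) (hm4 : m ≤ 4) :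
    crankCountMod m 5 (5 * n + 4) = partitionCount (5 * n + 4) / 5 := by
  obtain ⟨r, rfl⟩ := Int.eq_ofNat_of_zero_le hm0
  have h1 : crankCountMod r 5 (5 * n + 4) = CrankMod5.crankCount (5 * n + 4) r := by
    rw [crankCountMod, Fintype.card_subtype, CrankMod5.crankCount]
    congr 1
    ext p
    have h : (r : ℤ) % 5 = r := Int.emod_eq_of_lt hm0 (by omega)
    rw [Finset.mem_filter, Finset.mem_filter, Int.ModEq, Nat.cast_ofNat, h]
  have h2 := CrankMod5.sum_fiber (M := ℕ) (5 * n + 4) (fun _ ↦ 1)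
  have h3 := CrankMod5.crankCount_eq n
  have h4 : ∑ r ∈ Finset.range 5, CrankMod5.crankCount (5 * n + 4) r • 1 =
      ∑ r ∈ Finset.range 5, CrankMod5.crankCount (5 * n + 4) 4 • 1 :=
    Finset.sum_congr rfl fun r hr ↦ by rw [h3 r (Finset.mem_range.mp hr)]
  rw [h4] at h2
  simp at h2
  rw [h1, h3 r (by omega), partitionCount, h2]
  omega
end

section
/- (Andrews–Garvan) For every natural number n and every integer m with 0 ≤ m ≤ 6, the number of partitions of 7n + 5 whose crank is congruent to m modulo 7 equals p(7n + 5)/7, i.e. M(0, 7, 7n+5) = M(1, 7, 7n+5) = ... = M(6, 7, 7n+5). -/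
section

open PowerSeries

/-! ### Generating series of weighted partitions -/

/-- The generating series `∑ v(λ) q^|λ|` over all partitions `λ`, the indeterminate `X` playing the
role of `q`. The weight `v` is a function of the multiset of parts, so that one function covers the
partitions of all integers. -/
noncomputable def pSeries (v : Multiset ℕ → ℂ) : ℂ⟦X⟧ :=
  PowerSeries.mk fun d ↦ ∑ p : d.Partition, v p.parts

/-- Partitions either avoid the part `a`, or arise from a unique partition by adjoining a part `a`.
-/
lemma pSeries_eq_add (v : Multiset ℕ → ℂ) {a : ℕ} (ha : 1 ≤ a) :
    pSeries v = pSeries (fun s ↦ if a ∈ s then 0 else v s) +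
      X ^ a * pSeries (fun s ↦ v (a ::ₘ s)) := by
  ext d
  simp only [pSeries, map_add, coeff_mk, coeff_X_pow_mul']
  rw [← Finset.sum_filter_add_sum_filter_not Finset.univ
    (fun p : d.Partition ↦ a ∈ p.parts) (fun p ↦ v p.parts), add_comm]
  congr 1
  · rw [Finset.sum_filter]
    exact Finset.sum_congr rfl fun p _ ↦ by split_ifs <;> simp_all
  · split_ifs with h
    · rw [← Finset.sum_subtype_eq_sum_filter, Finset.subtype_univ,
        ← (Nat.Partition.partitionWithPartEquiv ha h).symm.sum_comp]
      exact Finset.sum_congr rfl fun q _ ↦ by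
        rw [Nat.Partition.partitionWithPartEquiv_symm_apply_parts]
    · refine Finset.sum_eq_zero fun p hp ↦ ?_
      simp only [Finset.mem_filter] at hp
      exact absurd (Nat.Partition.le_of_mem_parts hp.2) h

/-- The generating series of partitions with multiplicative weight: each part `i` contributes a
factor `w i`. It stands for the infinite product `∏_{i ≥ 1} (1 - w i * X ^ i)⁻¹`; the value `w 0`
is irrelevant, and `w i = 0` forbids the part `i`. -/
noncomputable def wSeries (w : ℕ → ℂ) : ℂ⟦X⟧ := pSeries fun s ↦ (s.map w).prod

lemma pSeries_mul_left (c : ℂ) (v : Multiset ℕ → ℂ) :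
    pSeries (fun s ↦ c * v s) = C c * pSeries v := by
  ext d
  simp [pSeries, Finset.mul_sum]

/-- Multiplying by the Euler factor at `a` forbids the part `a`. -/
lemma wSeries_mul (w : ℕ → ℂ) {a : ℕ} (ha : 1 ≤ a) :
    wSeries w * (1 - C (w a) * X ^ a) = wSeries (Function.update w a 0) := by
  have h := pSeries_eq_add (fun s ↦ (s.map w).prod) ha
  have h1 : (fun s : Multiset ℕ ↦ if a ∈ s then 0 else (s.map w).prod) =
      fun s ↦ (s.map (Function.update w a 0)).prod := by
    funext s
    split_ifs with hs
    · symm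
      apply Multiset.prod_eq_zero
      simpa using ⟨a, hs, by simp⟩
    · congr 1
      refine Multiset.map_congr rfl fun i hi ↦ ?_
      rw [Function.update_of_ne]
      rintro rfl
      exact hs hi
  simp only [Multiset.map_cons, Multiset.prod_cons, pSeries_mul_left] at h
  rw [h1] at h
  change wSeries w = wSeries _ + X ^ a * (C (w a) * wSeries w) at h
  linear_combination h

lemma coeff_wSeries_eq_zero (w : ℕ → ℂ) (N d : ℕ) (hw : ∀ i, 1 ≤ i → i ≤ N → w i = 0)
    (hd : 1 ≤ d) (hdN : d ≤ N) : (wSeries w).coeff d = 0 := by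
  simp only [wSeries, pSeries, coeff_mk]
  refine Finset.sum_eq_zero fun p _ ↦ Multiset.prod_eq_zero ?_
  obtain ⟨i, hi⟩ : ∃ i, i ∈ p.parts := by
    apply Multiset.exists_mem_of_ne_zero
    intro h
    have := p.parts_sum
    simp [h] at this
    omega
  have := p.parts_pos hi
  have := Nat.Partition.le_of_mem_parts hi
  exact Multiset.mem_map.2 ⟨i, hi, hw i (by omega) (by omega)⟩

lemma coeff_zero_pSeries (v : Multiset ℕ → ℂ) : (pSeries v).coeff 0 = v 0 := by
  simp [pSeries]

lemma prod_map_ite (P : ℕ → Prop) [DecidablePred P] (s : Multiset ℕ) :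
    (s.map fun i ↦ if P i then (1 : ℂ) else 0).prod = if ∀ i ∈ s, P i then 1 else 0 := by
  induction s using Multiset.induction_on with
  | empty => simp
  | cons a s ih =>
    simp only [Multiset.map_cons, Multiset.prod_cons, ih, Multiset.mem_cons, forall_eq_or_imp]
    by_cases h : P a <;> simp [h]

lemma sup_mem_of_ne_zero (s : Multiset ℕ) (hs : s.sup ≠ 0) : s.sup ∈ s := by
  induction s using Multiset.induction_on with
  | empty => simp at hs
  | cons a s ih =>
    rw [Multiset.sup_cons]
    rcases le_total s.sup a with h | h
    · simp [sup_eq_left.2 h]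
    · rcases Nat.eq_zero_or_pos s.sup with h0 | h0
      · simp [show a = 0 by omega, h0]
      · rw [sup_eq_right.2 h]
        exact Multiset.mem_cons_of_mem (ih h0.ne')

/-- Removing the largest part `m` from a partition without ones leaves an arbitrary partition into
parts from `{2, …, m}`. -/
lemma pSeries_sup_eq {m : ℕ} (hm : 2 ≤ m) :
    pSeries (fun s ↦ if s.sup = m ∧ 1 ∉ s then 1 else 0) =
      X ^ m * wSeries (fun i ↦ if i ≠ 1 ∧ i ≤ m then 1 else 0) := by
  rw [pSeries_eq_add _ (show 1 ≤ m by omega)]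
  have h0 : (fun s : Multiset ℕ ↦ if m ∈ s then (0 : ℂ) else
      if s.sup = m ∧ 1 ∉ s then 1 else 0) = fun s ↦ 0 * 0 := by
    funext s
    split_ifs with h1 h2
    · simp
    · exfalso
      apply h1
      rw [← h2.1]
      exact sup_mem_of_ne_zero s (by omega)
    · simp
  rw [h0, pSeries_mul_left]
  simp only [map_zero, zero_mul, zero_add, wSeries, prod_map_ite]
  congr 2
  funext s
  refine if_congr ?_ rfl rfl
  simp only [Multiset.sup_cons, Multiset.mem_cons, not_or, forall_and]
  rw [sup_eq_left, Multiset.sup_le]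
  constructor
  · rintro ⟨h1, h2, h3⟩
    exact ⟨fun i hi h ↦ h3 (h ▸ hi), h1⟩
  · rintro ⟨h1, h2⟩
    exact ⟨h2, by omega, fun h ↦ h1 1 h rfl⟩

/-- Partitions with exactly `k` ones, weighted by `z` to the number of parts larger than `j`. The
crank requires the case `j = k`; separating the two parameters allows induction on `k`. -/
lemma pSeries_count_eq (z : ℂ) {j : ℕ} (hj : 1 ≤ j) (k : ℕ) :
    pSeries (fun s ↦ if s.count 1 = k then z ^ (s.filter (j < ·)).card else 0) =
      X ^ k * wSeries (fun i ↦ if i = 1 then 0 else if i ≤ j then 1 else z) := by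
  induction k with
  | zero =>
    rw [pow_zero, one_mul, wSeries]
    congr 1
    funext s
    induction s using Multiset.induction_on with
    | empty => simp
    | cons a s ih =>
      rw [Multiset.map_cons, Multiset.prod_cons, ← ih]
      by_cases h1 : a = 1
      · simp [h1]
      · by_cases h2 : a ≤ j
        · simp [h1, h2, eq_comm]
        · simp [h1, h2, eq_comm, not_le.1 h2, pow_succ']
  | succ k ih =>
    rw [pSeries_eq_add _ le_rfl]
    have h0 : (fun s : Multiset ℕ ↦ if 1 ∈ s then (0 : ℂ) else
      if s.count 1 = k + 1 then z ^ (s.filter (j < ·)).card else 0) = fun s ↦ 0 * 0 := by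
      funext s
      split_ifs with h1 h2
      · simp
      · rw [Multiset.count_eq_zero_of_notMem h1] at h2
        omega
      · simp
    have h1 : ¬ j < 1 := by omega
    rw [h0, pSeries_mul_left]
    simp only [map_zero, zero_mul, zero_add, Multiset.count_cons_self, Nat.add_right_cancel_iff,
      Multiset.filter_cons_of_neg _ h1]
    rw [ih]
    ring

/-! ### Cauchy's identity -/

/-- Functional equation relating `F(T)` and `F(T x)` for the truncated series
`F(T) = ∑_{j < J} u j T ^ j`, where `u j = u 0 * (a; x)_j / (x; x)_j` is given by its recurrence. -/
lemma cauchy_step {B : Type*} [CommRing B] (x a T : B) (u : ℕ → B)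
    (hu : ∀ j, u (j + 1) * (1 - x ^ (j + 1)) = u j * (1 - a * x ^ j)) (J : ℕ) :
    (∑ j ∈ Finset.range J, u j * T ^ j) * (1 - T) =
      (1 - a * T) * (∑ j ∈ Finset.range J, u j * (T * x) ^ j) - u J * (1 - x ^ J) * T ^ J := by
  induction J with
  | zero => simp
  | succ J ih =>
    rw [Finset.sum_range_succ, Finset.sum_range_succ, add_mul, ih, hu]
    ring

/-- Cauchy's identity `∑ (a; x)_j / (x; x)_j (t x) ^ j = ∏ (1 - a t x ^ m) / (1 - t x ^ m)`, `m ≥ 1`,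
in a ring where `x` is nilpotent, with denominators cleared. -/
lemma cauchy_identity {B : Type*} [CommRing B] (x a t : B) (N : ℕ) (hx : x ^ (N + 1) = 0)
    (u : ℕ → B) (hu : ∀ j, u (j + 1) * (1 - x ^ (j + 1)) = u j * (1 - a * x ^ j)) :
    (∑ j ∈ Finset.range (N + 1), u j * (t * x) ^ j) *
        ∏ m ∈ Finset.range N, (1 - t * x ^ (m + 1)) =
      u 0 * ∏ m ∈ Finset.range N, (1 - a * (t * x ^ (m + 1))) := by
  have key : ∀ M, (∑ j ∈ Finset.range (N + 1), u j * (t * x) ^ j) *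
        ∏ m ∈ Finset.range M, (1 - t * x ^ (m + 1)) =
      (∑ j ∈ Finset.range (N + 1), u j * (t * x ^ (M + 1)) ^ j) *
        ∏ m ∈ Finset.range M, (1 - a * (t * x ^ (m + 1))) := by
    intro M
    induction M with
    | zero => simp
    | succ M ih =>
      have h := cauchy_step x a (t * x ^ (M + 1)) u hu (N + 1)
      rw [mul_pow t, ← pow_mul, mul_comm (M + 1), pow_mul, hx, zero_pow (by omega), mul_zero,
        mul_zero, sub_zero, mul_assoc t, ← pow_succ] at h
      rw [Finset.prod_range_succ, Finset.prod_range_succ, ← mul_assoc, ih]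
      linear_combination (∏ m ∈ Finset.range M, (1 - a * (t * x ^ (m + 1)))) * h
  rw [key, Finset.sum_eq_single 0]
  · simp
  · intro j _ hj
    rw [mul_pow, ← pow_mul, mul_comm (N + 1), pow_mul', hx, zero_pow hj, mul_zero, mul_zero]
  · simp

/-! ### The Jacobi triple product -/

/-- The finite `q`-Pochhammer symbol `(q; q)_n = ∏_{i = 1}^n (1 - q ^ i)`. -/
def qPoch {B : Type*} [CommRing B] (q : B) (n : ℕ) : B := ∏ i ∈ Finset.range n, (1 - q ^ (i + 1))

/-- The Gaussian binomial coefficient, defined by the `q`-Pascal rule so that no division is needed.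
-/
def qBinom {B : Type*} [CommRing B] (q : B) : ℕ → ℕ → B
  | _, 0 => 1
  | 0, _ + 1 => 0
  | n + 1, k + 1 => qBinom q n k + q ^ (k + 1) * qBinom q n (k + 1)

section
variable {B : Type*} [CommRing B] (q : B)

lemma qBinom_zero_right (n : ℕ) : qBinom q n 0 = 1 := by cases n <;> rfl

lemma qBinom_eq_zero {n k : ℕ} (h : n < k) : qBinom q n k = 0 := by
  induction n generalizing k with
  | zero => obtain ⟨k, rfl⟩ := Nat.exists_eq_succ_of_ne_zero h.ne'; rfl
  | succ n ih =>
    obtain ⟨k, rfl⟩ := Nat.exists_eq_succ_of_ne_zero (by omega : k ≠ 0)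
    simp [qBinom, ih (show n < k by omega), ih (show n < k + 1 by omega)]

lemma qBinom_mul_qPoch (i j : ℕ) : qBinom q (i + j) j * (qPoch q i * qPoch q j) =
    qPoch q (i + j) := by
  induction hn : i + j generalizing i j with
  | zero =>
    obtain ⟨rfl, rfl⟩ : i = 0 ∧ j = 0 := by omega
    simp [qBinom, qPoch]
  | succ n ih =>
    rcases i with _ | i
    · have h1 := ih 0 n (by omega)
      obtain rfl : j = n + 1 := by omega
      rw [qBinom, qBinom_eq_zero q (by omega : n < n + 1)]
      simp only [qPoch, Finset.prod_range_succ] at h1 ⊢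
      linear_combination (1 - q ^ (n + 1)) * h1
    · rcases j with _ | j
      · obtain rfl : i = n := by omega
        simp [qBinom, qPoch]
      · have h1 := ih (i + 1) j (by omega)
        have h2 := ih i (j + 1) (by omega)
        obtain rfl : n = i + j + 1 := by omega
        rw [qBinom]
        simp only [qPoch, Finset.prod_range_succ] at h1 h2 ⊢
        linear_combination (1 - q ^ (j + 1)) * h1 + q ^ (j + 1) * (1 - q ^ (i + 1)) * h2

/-- The `q`-binomial theorem in homogeneous form. -/
lemma qBinomial_theorem (n : ℕ) (x y : B) :
    ∏ k ∈ Finset.range n, (y - x * q ^ k) =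
      ∑ j ∈ Finset.range (n + 1),
        (-1) ^ j * q ^ (j.choose 2) * x ^ j * y ^ (n - j) * qBinom q n j := by
  induction n generalizing x with
  | zero => simp [qBinom]
  | succ n ih =>
    rw [Finset.prod_range_succ']
    have h1 : ∀ k, y - x * q ^ (k + 1) = y - (x * q) * q ^ k := fun k ↦ by ring
    simp only [h1]
    rw [ih, Finset.sum_range_succ' _ (n + 1)]
    have h2 : ∀ j ∈ Finset.range (n + 1), (-1) ^ (j + 1) * q ^ ((j + 1).choose 2) * x ^ (j + 1) *
        y ^ (n + 1 - (j + 1)) * qBinom q (n + 1) (j + 1) =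
        - x * ((-1) ^ j * q ^ (j.choose 2) * (x * q) ^ j * y ^ (n - j) * qBinom q n j) +
        (-1) ^ (j + 1) * q ^ ((j + 1).choose 2) * (x * q) ^ (j + 1) *
        y ^ (n - j) * qBinom q n (j + 1) := by
      intro j _
      rw [qBinom, Nat.add_sub_add_right, Nat.choose_succ_succ' j 1, Nat.choose_one_right]
      ring
    rw [Finset.sum_congr rfl h2, Finset.sum_add_distrib, ← Finset.mul_sum]
    rw [Finset.sum_range_succ (fun j ↦ (-1) ^ (j + 1) * q ^ ((j + 1).choose 2) * (x * q) ^ (j + 1) *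
        y ^ (n - j) * qBinom q n (j + 1)), qBinom_eq_zero q (Nat.lt_succ_self n)]
    have h3 : ∀ j ∈ Finset.range n, (-1) ^ (j + 1) * q ^ ((j + 1).choose 2) * (x * q) ^ (j + 1) *
        y ^ (n - j) * qBinom q n (j + 1) = y * ((-1) ^ (j + 1) * q ^ ((j + 1).choose 2) *
        (x * q) ^ (j + 1) * y ^ (n - (j + 1)) * qBinom q n (j + 1)) := by
      intro j hj
      rw [show n - j = n - (j + 1) + 1 by have := Finset.mem_range.1 hj; omega]
      ring
    rw [Finset.sum_congr rfl h3, ← Finset.mul_sum]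
    have h4 := Finset.sum_range_succ' (fun j ↦ (-1) ^ j * q ^ (j.choose 2) * (x * q) ^ j *
      y ^ (n - j) * qBinom q n j) n
    simp only [qBinom_zero_right, Nat.choose_zero_succ, pow_zero, mul_one, one_mul,
      Nat.sub_zero] at h4 ⊢
    linear_combination y * h4

end

lemma two_mul_choose_two (k : ℕ) : 2 * k.choose 2 + k = k * k := by
  induction k with
  | zero => simp
  | succ k ih => rw [Nat.choose_succ_succ' k 1, Nat.choose_one_right]; linarith

/-- The product in the `q`-binomial theorem at `y = x ^ N` is, up to a monomial, the product side of
the triple product identity. -/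
lemma jacobi_lhs {B : Type*} [CommRing B] (x z w : B) (hzw : z * w = 1) (N : ℕ) :
    ∏ k ∈ Finset.range (N + (N + 1)), (x ^ N - z * x ^ k) =
      x ^ (N.choose 2 + N * (N + 1)) * ((-z) ^ N * ((1 - z) *
      (∏ k ∈ Finset.range N, (1 - z * x ^ (k + 1))) *
      ∏ k ∈ Finset.range N, (1 - w * x ^ (k + 1)))) := by
  rw [Finset.prod_range_add]
  have h1 : ∏ k ∈ Finset.range (N + 1), (x ^ N - z * x ^ (N + k)) =
      x ^ (N * (N + 1)) * ((1 - z) * ∏ k ∈ Finset.range N, (1 - z * x ^ (k + 1))) := by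
    have : ∀ k, x ^ N - z * x ^ (N + k) = x ^ N * (1 - z * x ^ k) := fun k ↦ by ring
    simp only [this]
    rw [Finset.prod_mul_distrib, Finset.prod_const, Finset.card_range, ← pow_mul,
      Finset.prod_range_succ', pow_zero]
    ring
  have h2 : ∏ k ∈ Finset.range N, (x ^ N - z * x ^ k) =
      x ^ N.choose 2 * ((-z) ^ N * ∏ k ∈ Finset.range N, (1 - w * x ^ (k + 1))) := by
    have h3 : ∏ k ∈ Finset.range N, x ^ k = x ^ N.choose 2 := by
      rw [Finset.prod_pow_eq_pow_sum, Finset.sum_range_id, Nat.choose_two_right]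
    have h4 : ∏ _k ∈ Finset.range N, (-z) = (-z) ^ N := by simp
    rw [← h3, ← h4, ← Finset.prod_range_reflect, ← Finset.prod_range_reflect (fun k ↦ x ^ k),
      ← Finset.prod_mul_distrib, ← Finset.prod_mul_distrib]
    refine Finset.prod_congr rfl fun k hk ↦ ?_
    have hk := Finset.mem_range.1 hk
    conv_lhs => rw [show N = (N - 1 - k) + (k + 1) by omega]
    rw [show N - 1 - k + (k + 1) - 1 - k = N - 1 - k by omega]
    rw [pow_add]
    linear_combination (-x ^ (N - 1 - k) * x ^ (k + 1)) * hzw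
  rw [h1, h2]
  ring

/-- Finite form of the Jacobi triple product. The terms of the bilateral sum with indices `-n` and
`n + 1` are paired, which is why the right side is a sum over natural numbers. -/
lemma jacobi_finite (z w : ℂ⟦X⟧) (hzw : z * w = 1) (N : ℕ) :
    (1 - z) * (∏ k ∈ Finset.range N, (1 - z * X ^ (k + 1))) *
      ∏ k ∈ Finset.range N, (1 - w * X ^ (k + 1)) =
    ∑ n ∈ Finset.range (N + 1), (-1) ^ n * X ^ ((n + 1).choose 2) *
      (w ^ n * qBinom X (N + (N + 1)) (N - n) -
        z ^ (n + 1) * qBinom X (N + (N + 1)) (N + 1 + n)) := by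
  have h := qBinomial_theorem (X : ℂ⟦X⟧) (N + (N + 1)) z (X ^ N)
  rw [jacobi_lhs X z w hzw, show N + (N + 1) + 1 = (N + 1) + (N + 1) by ring,
    Finset.sum_range_add, ← Finset.sum_range_reflect, ← Finset.sum_add_distrib] at h
  have h1 : ∀ n ∈ Finset.range (N + 1),
      (-1) ^ (N + 1 - 1 - n) * (X : ℂ⟦X⟧) ^ ((N + 1 - 1 - n).choose 2) * z ^ (N + 1 - 1 - n) *
        (X ^ N) ^ (N + (N + 1) - (N + 1 - 1 - n)) * qBinom X (N + (N + 1)) (N + 1 - 1 - n) +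
      (-1) ^ (N + 1 + n) * X ^ ((N + 1 + n).choose 2) * z ^ (N + 1 + n) *
        (X ^ N) ^ (N + (N + 1) - (N + 1 + n)) * qBinom X (N + (N + 1)) (N + 1 + n) =
      X ^ (N.choose 2 + N * (N + 1)) * ((-z) ^ N * ((-1) ^ n * X ^ ((n + 1).choose 2) *
      (w ^ n * qBinom X (N + (N + 1)) (N - n) -
        z ^ (n + 1) * qBinom X (N + (N + 1)) (N + 1 + n)))) := by
    intro n hn
    obtain ⟨r, rfl⟩ := Nat.exists_eq_add_of_le (Nat.lt_succ_iff.1 (Finset.mem_range.1 hn))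
    have e1 : n + r + 1 - 1 - n = r := by omega
    have e2 : n + r - n = r := by omega
    have e3 : n + r + (n + r + 1) - r = n + (n + r + 1) := by omega
    have e4 : n + r + (n + r + 1) - (n + r + 1 + n) = r := by omega
    rw [e1, e2, e3, e4]
    have c1 := two_mul_choose_two r
    have c2 := two_mul_choose_two (n + r)
    have c3 := two_mul_choose_two (n + 1)
    have c4 := two_mul_choose_two (n + r + 1 + n)
    have d1 : r.choose 2 + (n + r) * (n + (n + r + 1)) =
        (n + r).choose 2 + (n + r) * (n + r + 1) + (n + 1).choose 2 := by nlinarith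
    have d2 : (n + r + 1 + n).choose 2 + (n + r) * r =
        (n + r).choose 2 + (n + r) * (n + r + 1) + (n + 1).choose 2 := by nlinarith
    have hz : z ^ n * w ^ n = 1 := by rw [← mul_pow, hzw, one_pow]
    have hs : ((-1 : ℂ⟦X⟧) ^ n) * (-1) ^ n = 1 := by rw [← mul_pow]; simp
    have p1 : (X : ℂ⟦X⟧) ^ r.choose 2 * (X ^ (n + r)) ^ (n + (n + r + 1)) =
        X ^ ((n + r).choose 2 + (n + r) * (n + r + 1)) * X ^ (n + 1).choose 2 := by
      rw [← pow_mul, ← pow_add, ← pow_add, d1]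
    have p2 : (X : ℂ⟦X⟧) ^ (n + r + 1 + n).choose 2 * (X ^ (n + r)) ^ r =
        X ^ ((n + r).choose 2 + (n + r) * (n + r + 1)) * X ^ (n + 1).choose 2 := by
      rw [← pow_mul, ← pow_add, ← pow_add, d2]
    generalize qBinom (X : ℂ⟦X⟧) (n + r + (n + r + 1)) r = g1
    generalize qBinom (X : ℂ⟦X⟧) (n + r + (n + r + 1)) (n + r + 1 + n) = g2
    have q1 : (-1 : ℂ⟦X⟧) ^ r * z ^ r = (-z) ^ (n + r) * ((-1) ^ n * w ^ n) := by
      rw [neg_pow z, pow_add, pow_add]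
      linear_combination (-(-1 : ℂ⟦X⟧) ^ r * z ^ r * (z ^ n * w ^ n)) * hs -
        ((-1 : ℂ⟦X⟧) ^ r * z ^ r) * hz
    have q2 : (-1 : ℂ⟦X⟧) ^ (n + r + 1 + n) * z ^ (n + r + 1 + n) =
        - ((-z) ^ (n + r) * ((-1) ^ n * z ^ (n + 1))) := by
      rw [neg_pow z]
      ring
    linear_combination ((-1) ^ r * z ^ r * g1) * p1 +
      (X ^ ((n + r).choose 2 + (n + r) * (n + r + 1)) * X ^ (n + 1).choose 2 * g1) * q1 +
      ((-1 : ℂ⟦X⟧) ^ (n + r + 1 + n) * z ^ (n + r + 1 + n) * g2) * p2 +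
      (X ^ ((n + r).choose 2 + (n + r) * (n + r + 1)) * X ^ (n + 1).choose 2 * g2) * q2
  rw [Finset.sum_congr rfl h1, ← Finset.mul_sum, ← Finset.mul_sum] at h
  have hX : (X : ℂ⟦X⟧) ^ (N.choose 2 + N * (N + 1)) ≠ 0 := pow_ne_zero _ X_ne_zero
  have hz : (-z) ^ N ≠ 0 := pow_ne_zero _ (neg_ne_zero.2 (left_ne_zero_of_mul_eq_one hzw))
  exact mul_left_cancel₀ hz (mul_left_cancel₀ hX h)

lemma dvd_qPoch_sub {a b : ℕ} (h : a ≤ b) :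
    (X : ℂ⟦X⟧) ^ (a + 1) ∣ qPoch (X : ℂ⟦X⟧) b - qPoch X a := by
  induction b, h using Nat.le_induction with
  | base => simp
  | succ b hb ih =>
    have : qPoch (X : ℂ⟦X⟧) (b + 1) - qPoch X a =
        (qPoch X b - qPoch X a) - X ^ (b + 1) * qPoch X b := by
      simp only [qPoch, Finset.prod_range_succ]; ring
    rw [this]
    exact dvd_sub ih ((pow_dvd_pow _ (by omega)).mul_right _)

lemma isUnit_qPoch (a : ℕ) : IsUnit (qPoch (X : ℂ⟦X⟧) a) := by
  rw [PowerSeries.isUnit_iff_constantCoeff]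
  simp [qPoch, map_prod]

/-- A central Gaussian binomial coefficient tends `X`-adically to `1 / (q; q)_∞`. -/
lemma dvd_qBinom_sub {i j r N : ℕ} (hij : i + j = N + (N + 1)) (hi : r ≤ i) (hj : r ≤ j)
    (hN : r ≤ N) :
    (X : ℂ⟦X⟧) ^ (r + 1) ∣ qBinom X (N + (N + 1)) j * qPoch X N - 1 := by
  have h := qBinom_mul_qPoch (X : ℂ⟦X⟧) i j
  obtain ⟨a, ha⟩ := dvd_qPoch_sub hi
  obtain ⟨b, hb⟩ := dvd_qPoch_sub hj
  obtain ⟨c, hc⟩ := dvd_qPoch_sub (show r ≤ i + j by omega)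
  obtain ⟨d, hd⟩ := dvd_qPoch_sub hN
  rw [hij] at h hc
  set g := qBinom (X : ℂ⟦X⟧) (N + (N + 1)) j
  set P := qPoch (X : ℂ⟦X⟧) r
  have hP : IsUnit (P * P) := (isUnit_qPoch r).mul (isUnit_qPoch r)
  rw [← hP.dvd_mul_left]
  rw [sub_eq_iff_eq_add] at ha hb hc hd
  rw [ha, hb, hc] at h
  refine ⟨P * c + P * P * g * d - P * (g * (a * P + b * P + X ^ (r + 1) * a * b)), ?_⟩
  rw [hd]
  linear_combination P * h

/-- The Jacobi triple product modulo `X ^ (N + 1)`: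
`(1 - z) ∏ (1 - q ^ k) (1 - z q ^ k) (1 - z⁻¹ q ^ k) = ∑_{n ≥ 0} (-1) ^ n q ^ (n (n + 1) / 2)
(z ^ (-n) - z ^ (n + 1))`, with `w` in the role of `z⁻¹`. -/
lemma jacobi_trunc (z w : ℂ⟦X⟧) (hzw : z * w = 1) (N : ℕ) :
    X ^ (N + 1) ∣ (1 - z) * (qPoch X N * (∏ k ∈ Finset.range N, (1 - z * X ^ (k + 1))) *
      ∏ k ∈ Finset.range N, (1 - w * X ^ (k + 1))) -
    ∑ n ∈ Finset.range (N + 1), (-1) ^ n * X ^ ((n + 1).choose 2) * (w ^ n - z ^ (n + 1)) := by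
  have h := jacobi_finite z w hzw N
  have h2 : (1 - z) * (qPoch X N * (∏ k ∈ Finset.range N, (1 - z * X ^ (k + 1))) *
      ∏ k ∈ Finset.range N, (1 - w * X ^ (k + 1))) = (∑ n ∈ Finset.range (N + 1),
      (-1) ^ n * X ^ ((n + 1).choose 2) * (w ^ n * qBinom X (N + (N + 1)) (N - n) -
        z ^ (n + 1) * qBinom X (N + (N + 1)) (N + 1 + n))) * qPoch X N := by
    rw [← h]; ring
  rw [h2, Finset.sum_mul, ← Finset.sum_sub_distrib]
  refine Finset.dvd_sum fun n hn ↦ ?_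
  have hn := Finset.mem_range.1 hn
  obtain ⟨a, ha⟩ := dvd_qBinom_sub (show (N + 1 + n) + (N - n) = N + (N + 1) by omega)
    (show N - n ≤ _ by omega) le_rfl (by omega)
  obtain ⟨b, hb⟩ := dvd_qBinom_sub (show (N - n) + (N + 1 + n) = N + (N + 1) by omega)
    le_rfl (show N - n ≤ _ by omega) (by omega)
  have hle : N + 1 ≤ (n + 1).choose 2 + (N - n + 1) := by
    rw [Nat.choose_succ_succ' n 1, Nat.choose_one_right]; omega
  refine (pow_dvd_pow X hle).trans ⟨(-1) ^ n * (w ^ n * a - z ^ (n + 1) * b), ?_⟩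
  rw [pow_add]
  linear_combination ((-1) ^ n * X ^ ((n + 1).choose 2) * w ^ n) * ha -
    ((-1) ^ n * X ^ ((n + 1).choose 2) * z ^ (n + 1)) * hb

/-! ### Seventh roots of unity -/

lemma prod_one_sub_root {z : ℂ} (hz : IsPrimitiveRoot z 7) (y : ℂ⟦X⟧) :
    (1 - y) * (1 - C (z ^ 1) * y) * (1 - C (z ^ 2) * y) * (1 - C (z ^ 3) * y) *
      (1 - C (z ^ 4) * y) * (1 - C (z ^ 5) * y) * (1 - C (z ^ 6) * y) = 1 - y ^ 7 := by
  classical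
  have hz' : IsPrimitiveRoot (C z : ℂ⟦X⟧) 7 := hz.map_of_injective C_injective
  have h := hz'.pow_sub_pow_eq_prod_sub_mul 1 y (by norm_num)
  have h2 : Polynomial.nthRootsFinset 7 (1 : ℂ⟦X⟧) =
      (Finset.range 7).image (fun i ↦ (C z : ℂ⟦X⟧) ^ i) := by
    rw [Polynomial.nthRootsFinset_def, hz'.nthRoots_eq (one_pow 7)]
    ext a
    simp only [Multiset.mem_toFinset, Multiset.mem_map, Multiset.mem_range, Finset.mem_image,
      Finset.mem_range, mul_one]
  rw [h2, Finset.prod_image] at h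
  · simp only [Finset.prod_range_succ, Finset.prod_range_zero, pow_zero, one_mul, one_pow,
      ← map_pow] at h
    rw [h, map_one, one_mul]
  · intro a ha b hb hab
    exact hz'.pow_inj (by simpa using ha) (by simpa using hb) hab

/-- The only rational linear relation between the seventh roots of unity `1, z, …, z ^ 6` is that
their sum vanishes, since the minimal polynomial of `z` has degree `6`. -/
lemma all_eq_of_sum_eq_zero {z : ℂ} (hz : IsPrimitiveRoot z 7) (c : ℕ → ℕ)
    (h : ∑ r ∈ Finset.range 7, (c r : ℂ) * z ^ r = 0) (r : ℕ) (hr : r < 6) : c r = c 6 := by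
  have hmin : (minpoly ℚ z).degree = 6 := by
    rw [← Polynomial.cyclotomic_eq_minpoly_rat hz (by norm_num), Polynomial.degree_cyclotomic,
      Nat.totient_prime (by norm_num)]
    rfl
  set f : Polynomial ℚ := ∑ r ∈ Finset.range 6, Polynomial.monomial r ((c r : ℚ) - c 6) with hf
  have hroot : Polynomial.aeval z f = 0 := by
    have hgeom := hz.geom_sum_eq_zero (by norm_num)
    rw [Finset.sum_range_succ] at h hgeom
    simp only [hf, map_sum, Polynomial.aeval_monomial, map_sub, map_natCast,
      Finset.sum_sub_distrib, ← Finset.mul_sum]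
    linear_combination h - (c 6 : ℂ) * hgeom
  have hdeg : f.degree < 6 := by
    refine (Polynomial.degree_lt_iff_coeff_zero f 6).2 fun m hm ↦ ?_
    simp only [hf, Polynomial.finsetSum_coeff, Polynomial.coeff_monomial]
    refine Finset.sum_eq_zero fun i hi ↦ if_neg ?_
    have := Finset.mem_range.1 hi
    omega
  have hf0 : f = 0 := by
    by_contra hne
    have := minpoly.degree_le_of_ne_zero ℚ z hne hroot
    rw [hmin] at this
    exact absurd hdeg (not_lt.2 this)
  have hc := congrArg (fun g ↦ Polynomial.coeff g r) hf0
  simp only [hf, Polynomial.finsetSum_coeff, Polynomial.coeff_monomial, Finset.sum_ite_eq',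
    Finset.mem_range, hr, if_true, Polynomial.coeff_zero] at hc
  exact_mod_cast sub_eq_zero.1 hc

/-! ### The crank generating function -/

lemma wSeries_mul_prod (w : ℕ → ℂ) (N : ℕ) :
    wSeries w * ∏ i ∈ Finset.range N, (1 - C (w (i + 1)) * X ^ (i + 1)) =
      wSeries (fun i ↦ if 1 ≤ i ∧ i ≤ N then 0 else w i) := by
  induction N with
  | zero =>
    rw [Finset.prod_range_zero, mul_one]
    congr 1
    funext i
    rw [if_neg (by omega)]
  | succ N ih =>
    rw [Finset.prod_range_succ, ← mul_assoc, ih]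
    have h := wSeries_mul (fun i ↦ if 1 ≤ i ∧ i ≤ N then 0 else w i) (show 1 ≤ N + 1 by omega)
    rw [if_neg (by omega)] at h
    rw [h]
    congr 1
    funext i
    by_cases hi : i = N + 1
    · subst hi; simp
    · rw [Function.update_of_ne hi]
      refine if_congr ?_ rfl rfl
      omega

lemma dvd_wSeries_mul_prod_sub (w : ℕ → ℂ) (N : ℕ) :
    X ^ (N + 1) ∣
      wSeries w * ∏ i ∈ Finset.range N, (1 - C (w (i + 1)) * X ^ (i + 1)) - 1 := by
  rw [wSeries_mul_prod, X_pow_dvd_iff]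
  intro d hd
  rw [map_sub, coeff_one]
  rcases Nat.eq_zero_or_pos d with rfl | h0
  · rw [wSeries, coeff_zero_pSeries]; simp
  · rw [coeff_wSeries_eq_zero _ N d (fun i h1 h2 ↦ if_pos ⟨h1, h2⟩) h0 (by omega),
      if_neg (by omega), sub_zero]

/-- The weight `z ^ crank`, as a function of the multiset of parts; see `zpow_crank`. -/
noncomputable def crankWeight (z : ℂ) (s : Multiset ℕ) : ℂ :=
  if s.count 1 = 0 then z ^ s.sup
  else z ^ (s.filter (s.count 1 < ·)).card * (z⁻¹) ^ s.count 1

lemma zpow_crank {z : ℂ} (hz : z ≠ 0) {d : ℕ} (p : d.Partition) :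
    z ^ p.crank = crankWeight z p.parts := by
  unfold Nat.Partition.crank crankWeight
  split_ifs
  · exact zpow_natCast _ _
  · rw [zpow_sub₀ hz, zpow_natCast, zpow_natCast, inv_pow, div_eq_mul_inv]

/-- The crank weight of a partition of `d ≤ M + 1`, split according to whether the partition is
empty, has no ones and largest part `m + 2`, or has exactly `j + 1` ones. -/
lemma crankWeight_eq_sum (z : ℂ) {d M : ℕ} (hd : d ≤ M + 1) (p : d.Partition) :
    crankWeight z p.parts = (if p.parts = 0 then 1 else 0) +
      ∑ m ∈ Finset.range M,
        z ^ (m + 2) * (if p.parts.sup = m + 2 ∧ 1 ∉ p.parts then 1 else 0) +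
      ∑ j ∈ Finset.range (M + 1), z⁻¹ ^ (j + 1) * (if p.parts.count 1 = j + 1 then
        z ^ (p.parts.filter (j + 1 < ·)).card else 0) := by
  have hpos : ∀ i ∈ p.parts, 0 < i := fun i hi ↦ p.parts_pos hi
  have hle : ∀ i ∈ p.parts, i ≤ d := fun i hi ↦ Nat.Partition.le_of_mem_parts hi
  have hcount : p.parts.count 1 ≤ d := by
    refine (Multiset.count_le_card _ _).trans ?_
    have := Multiset.card_nsmul_le_sum (s := p.parts) (a := 1) (fun x hx ↦ hpos x hx)
    simpa [p.parts_sum] using this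
  generalize p.parts = s at *
  unfold crankWeight
  by_cases h1 : 1 ∈ s
  · have hk : 0 < s.count 1 := Multiset.count_pos.2 h1
    have hs : s ≠ 0 := by rintro rfl; simp at h1
    rw [if_neg hk.ne', if_neg hs, Finset.sum_eq_zero (fun m _ ↦ by simp [h1]),
      Finset.sum_eq_single (s.count 1 - 1)]
    · rw [Nat.sub_add_cancel hk, if_pos rfl]
      ring
    · intro j _ hj
      rw [if_neg (by omega), mul_zero]
    · intro h
      exact absurd (Finset.mem_range.2 (by omega)) h
  · have hk : s.count 1 = 0 := Multiset.count_eq_zero_of_notMem h1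
    rw [if_pos hk, Finset.sum_eq_zero (s := Finset.range (M + 1)) (fun j _ ↦ by simp [hk])]
    by_cases hs : s = 0
    · subst hs
      simp
    · obtain ⟨a, ha⟩ := Multiset.exists_mem_of_ne_zero hs
      have hsup : s.sup ≠ 0 := by
        have := Multiset.le_sup ha
        have := hpos a ha
        omega
      have hmem := sup_mem_of_ne_zero s hsup
      have hsup1 : s.sup ≠ 1 := fun h ↦ h1 (h ▸ hmem)
      have hsupd := hle _ hmem
      rw [if_neg hs, Finset.sum_eq_single (s.sup - 2)]
      · rw [show s.sup - 2 + 2 = s.sup by omega, if_pos ⟨rfl, h1⟩]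
        ring
      · intro m _ hm
        rw [if_neg (fun h ↦ hm (by omega)), mul_zero]
      · intro h
        exact absurd (Finset.mem_range.2 (by omega)) h

lemma pSeries_crankWeight (z : ℂ) (M : ℕ) :
    X ^ (M + 1 + 1) ∣ pSeries (crankWeight z) - (1 +
      ∑ m ∈ Finset.range M, C (z ^ (m + 2)) *
        (X ^ (m + 2) * wSeries (fun i ↦ if i ≠ 1 ∧ i ≤ m + 2 then 1 else 0)) +
      ∑ j ∈ Finset.range (M + 1), C (z⁻¹ ^ (j + 1)) *
        (X ^ (j + 1) * wSeries (fun i ↦ if i = 1 then 0 else if i ≤ j + 1 then 1 else z))) := by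
  have h1 : (1 : ℂ⟦X⟧) = pSeries fun s ↦ if s = 0 then 1 else 0 := by
    ext d
    rcases Nat.eq_zero_or_pos d with rfl | hd
    · simp [coeff_zero_pSeries]
    · rw [coeff_one, if_neg hd.ne', pSeries, coeff_mk]
      refine (Finset.sum_eq_zero fun p _ ↦ if_neg fun h ↦ ?_).symm
      have := p.parts_sum
      simp [h] at this
      omega
  rw [X_pow_dvd_iff]
  intro d hd
  rw [h1]
  have h2 : ∀ m, X ^ (m + 2) * wSeries (fun i ↦ if i ≠ 1 ∧ i ≤ m + 2 then 1 else 0) = _ :=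
    fun m ↦ (pSeries_sup_eq (show 2 ≤ m + 2 by omega)).symm
  have h3 : ∀ j, X ^ (j + 1) *
      wSeries (fun i ↦ if i = 1 then 0 else if i ≤ j + 1 then 1 else z) = _ :=
    fun j ↦ (pSeries_count_eq z (show 1 ≤ j + 1 by omega) (j + 1)).symm
  simp only [h2, h3, ← pSeries_mul_left]
  simp only [map_sub, map_add, map_sum, pSeries, coeff_mk]
  rw [sub_eq_zero, Finset.sum_comm, Finset.sum_comm (s := Finset.range (M + 1)),
    ← Finset.sum_add_distrib, ← Finset.sum_add_distrib]
  exact Finset.sum_congr rfl fun p _ ↦ crankWeight_eq_sum z (by omega) p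

/-- The Andrews–Garvan product: modulo `X ^ (M + 2)`, the crank generating series equals
`∏ (1 - q ^ i) / ((1 - z q ^ i) (1 - z⁻¹ q ^ i))`, except that the coefficient of `q` in the product is
`z + z⁻¹ - 1`, whereas the only partition of `1` has crank `-1`; this accounts for the term
`(z - 1) q`. -/
lemma crank_product {B : Type*} [CommRing B] (φ : ℂ⟦X⟧ →+* B) (M : ℕ)
    (hφ : φ (X ^ (M + 1 + 1)) = 0) {z : ℂ} (hz : z ≠ 0) :
    φ ((pSeries (crankWeight z) + (C z - 1) * X) *
      (∏ i ∈ Finset.range (M + 1), (1 - C z⁻¹ * X ^ (i + 1))) *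
      ∏ i ∈ Finset.range (M + 1), (1 - C z * X ^ (i + 1))) = φ (qPoch X (M + 1)) := by
  have hker : ∀ {f g : ℂ⟦X⟧}, X ^ (M + 1 + 1) ∣ f - g → φ f = φ g := by
    intro f g ⟨c, hc⟩
    rw [← sub_eq_zero, ← map_sub, hc, map_mul, hφ, zero_mul]
  have hx : (φ X) ^ (M + 1 + 1) = 0 := by rw [← map_pow, hφ]
  -- `A m = (1 - X) / (X; X)_m`: partitions into parts from `{2, …, m}`, with the value at `m = 0`
  -- dictated by the recurrence.
  set A : ℕ → ℂ⟦X⟧ := fun m ↦ if m = 0 then 1 - X else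
    wSeries (fun i ↦ if i ≠ 1 ∧ i ≤ m then 1 else 0) with hA
  -- `Y j` counts partitions without ones, with `z` marking the parts larger than `j`; again `Y 0`
  -- is the value dictated by the recurrence `hYrec`.
  set Y : ℕ → ℂ⟦X⟧ := fun j ↦
    if j = 0 then (1 - X) * wSeries (fun i ↦ if i ≤ 0 then 1 else z) else
    wSeries (fun i ↦ if i = 1 then 0 else if i ≤ j then 1 else z) with hY
  have hArec : ∀ j, A (j + 1) * (1 - X ^ (j + 1)) = A j := by
    intro j
    rcases j with _ | j
    · have : wSeries (fun i ↦ if i ≠ 1 ∧ i ≤ 0 + 1 then 1 else 0) = 1 := by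
        ext d
        rw [coeff_one]
        split_ifs with h0
        · subst h0
          rw [wSeries, coeff_zero_pSeries]; simp
        · exact coeff_wSeries_eq_zero _ d d (fun i h1 h2 ↦ if_neg (by omega)) (by omega) le_rfl
      simp only [hA, if_true]
      rw [if_neg (by omega), this]
      ring
    · simp only [hA]
      rw [if_neg (by omega), if_neg (by omega)]
      have h := wSeries_mul (fun i ↦ if i ≠ 1 ∧ i ≤ j + 1 + 1 then 1 else 0)
        (show 1 ≤ j + 1 + 1 by omega)
      rw [if_pos (by omega), map_one, one_mul] at h
      rw [h]
      congr 1
      funext i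
      by_cases hi : i = j + 1 + 1
      · subst hi; simp
      · rw [Function.update_of_ne hi]
        refine if_congr ?_ rfl rfl
        omega
  have hYrec : ∀ j, Y (j + 1) * (1 - X ^ (j + 1)) = Y j * (1 - C z * X ^ (j + 1)) := by
    intro j
    rcases j with _ | j
    · simp only [hY, if_true]
      rw [if_neg (by omega)]
      have h := wSeries_mul (fun i ↦ if i ≤ 0 then 1 else z) le_rfl
      rw [if_neg (by omega)] at h
      have h2 : Function.update (fun i ↦ if i ≤ 0 then 1 else z) 1 0 =
          fun i ↦ if i = 1 then 0 else if i ≤ 0 + 1 then 1 else z := by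
        funext i
        by_cases hi : i = 1
        · subst hi; simp
        · rw [Function.update_of_ne hi, if_neg hi]
          refine if_congr ?_ rfl rfl
          omega
      rw [h2] at h
      rw [← h]
      ring
    · simp only [hY]
      rw [if_neg (by omega), if_neg (by omega)]
      have h := wSeries_mul (fun i ↦ if i = 1 then 0 else if i ≤ j + 1 + 1 then 1 else z)
        (show 1 ≤ j + 1 + 1 by omega)
      have h' := wSeries_mul (fun i ↦ if i = 1 then 0 else if i ≤ j + 1 then 1 else z)
        (show 1 ≤ j + 1 + 1 by omega)
      rw [if_neg (by omega), if_pos le_rfl, map_one, one_mul] at h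
      rw [if_neg (by omega), if_neg (by omega)] at h'
      rw [h, h']
      congr 1
      funext i
      by_cases hi : i = j + 1 + 1
      · subst hi; simp
      · rw [Function.update_of_ne hi, Function.update_of_ne hi]
        by_cases h1 : i = 1
        · simp [h1]
        · rw [if_neg h1, if_neg h1]
          refine if_congr ?_ rfl rfl
          omega
  have hS := hker (pSeries_crankWeight z M)
  -- Cauchy's identity with `a = 0` sums the partitions without ones, and with `a = z x` the
  -- partitions with ones.
  have hc1 := cauchy_identity (φ X) 0 (φ (C z)) (M + 1) hx (fun j ↦ φ (A j)) (fun j ↦ by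
    rw [zero_mul, sub_zero, mul_one, ← hArec j, map_mul, map_sub, map_pow, map_one])
  have hc2 := cauchy_identity (φ X) (φ (C z) * φ X) (φ (C z⁻¹)) (M + 1) hx (fun j ↦ φ (Y j))
    (fun j ↦ by
      have := congrArg φ (hYrec j)
      simp only [map_mul, map_sub, map_pow, map_one] at this
      rw [this]; ring)
  have hW := hker (dvd_wSeries_mul_prod_sub (fun i ↦ if i ≤ 0 then 1 else z) (M + 1))
  have hY0 : φ (Y 0) = (1 - φ X) * φ (wSeries (fun i ↦ if i ≤ 0 then 1 else z)) := by
    simp only [hY, if_true, map_mul, map_sub, map_one]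
  -- Modulo `X ^ (M + 2)`, `W` is the inverse of the product of the `1 - z * X ^ (i + 1)`.
  generalize wSeries (fun i ↦ if i ≤ 0 then 1 else z) = W at hW hY0
  have hW1 : φ W * ∏ i ∈ Finset.range (M + 1), (1 - φ (C z) * φ X ^ (i + 1)) = 1 := by
    simpa [map_prod] using hW
  have hzz : φ (C z) * φ (C z⁻¹) = 1 := by
    rw [← map_mul, ← map_mul, mul_inv_cancel₀ hz, map_one, map_one]
  have hP0 : (1 - φ X) * ∏ m ∈ Finset.range (M + 1),
      (1 - φ (C z) * φ X * (φ (C z⁻¹) * φ X ^ (m + 1))) = φ (qPoch X (M + 1)) := by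
    have h1 : ∀ m, 1 - φ (C z) * φ X * (φ (C z⁻¹) * φ X ^ (m + 1)) = 1 - φ X ^ (m + 1 + 1) := by
      intro m
      linear_combination (-φ X ^ (m + 1 + 1)) * hzz
    simp only [h1]
    have h2 : φ (qPoch X (M + 1 + 1)) = φ (qPoch X (M + 1)) := by
      rw [qPoch, Finset.prod_range_succ, map_mul, map_sub, hφ]
      simp [qPoch]
    rw [← h2, qPoch, map_prod, Finset.prod_range_succ' _ (M + 1)]
    simp only [map_sub, map_one, map_pow, zero_add, pow_one]
    rw [mul_comm]
  rw [Finset.sum_range_succ', Finset.sum_range_succ'] at hc1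
  rw [Finset.sum_range_succ'] at hc2
  simp only [map_mul, map_prod, map_sub, map_add, map_one, map_pow, map_sum] at hS hW hc1 hc2 ⊢
  have hA0 : φ (A 0) = 1 - φ X := by simp [hA]
  have hA1 : φ (A 1) = 1 := by
    have h := hArec 0
    have h0 : A 0 = 1 - X := by simp [hA]
    rw [h0, zero_add, pow_one] at h
    have hne : (1 - X : ℂ⟦X⟧) ≠ 0 := by
      intro h
      have := congrArg constantCoeff h
      simp at this
    have : A 1 = 1 := mul_right_cancel₀ hne (by rw [h, one_mul])
    rw [this, map_one]
  have hT1 : ∑ m ∈ Finset.range M, φ (C z) ^ (m + 2) *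
      (φ X ^ (m + 2) * φ (wSeries (fun i ↦ if i ≠ 1 ∧ i ≤ m + 2 then 1 else 0))) =
      ∑ m ∈ Finset.range M, φ (A (m + 1 + 1)) * (φ (C z) * φ X) ^ (m + 1 + 1) := by
    refine Finset.sum_congr rfl fun m _ ↦ ?_
    simp only [hA]
    rw [if_neg (by omega)]
    ring
  have hT2 : ∑ j ∈ Finset.range (M + 1), φ (C z⁻¹) ^ (j + 1) *
      (φ X ^ (j + 1) * φ (wSeries (fun i ↦ if i = 1 then 0 else if i ≤ j + 1 then 1 else z))) =
      ∑ j ∈ Finset.range (M + 1), φ (Y (j + 1)) * (φ (C z⁻¹) * φ X) ^ (j + 1) := by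
    refine Finset.sum_congr rfl fun j _ ↦ ?_
    simp only [hY]
    rw [if_neg (by omega)]
    ring
  rw [hT1, hT2] at hS
  rw [hY0] at hc2
  simp only [zero_mul, sub_zero, Finset.prod_const_one, mul_one, hA0, hA1, zero_add, pow_one,
    pow_zero, one_mul] at hc1 hc2
  -- `hc1` and `hW1` show that the sum over `A` is `(1 - x) W`, which is the missing `j = 0` term
  -- in the sum over `Y`.
  set Pz := ∏ i ∈ Finset.range (M + 1), (1 - φ (C z) * φ X ^ (i + 1))
  set Pw := ∏ i ∈ Finset.range (M + 1), (1 - φ (C z⁻¹) * φ X ^ (i + 1))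
  set Q := ∏ m ∈ Finset.range (M + 1), (1 - φ (C z) * φ X * (φ (C z⁻¹) * φ X ^ (m + 1)))
  linear_combination Pw * Pz * hS + Pw * hc1 + Pz * hc2 - (1 - φ X) * Pw * hW1 +
    (1 - φ X) * Q * hW1 + hP0

/-! ### Vanishing of the coefficients in the class of 5 modulo 7 -/

lemma coeff_prod_one_sub_pow_seven (N : ℕ) :
    (∏ i ∈ Finset.range N, (1 - (X ^ (i + 1)) ^ 7 : ℂ⟦X⟧)).coeff 0 = 1 ∧
      ∀ k, ¬ 7 ∣ k → (∏ i ∈ Finset.range N, (1 - (X ^ (i + 1)) ^ 7 : ℂ⟦X⟧)).coeff k = 0 := by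
  induction N with
  | zero =>
    refine ⟨by simp, fun k hk ↦ ?_⟩
    rw [Finset.prod_range_zero, coeff_one, if_neg (by rintro rfl; simp at hk)]
  | succ N ih =>
    rw [Finset.prod_range_succ, mul_sub, mul_one, ← pow_mul]
    refine ⟨?_, fun k hk ↦ ?_⟩
    · rw [map_sub, ih.1, coeff_mul_X_pow', if_neg (by omega), sub_zero]
    · rw [map_sub, ih.2 k hk, coeff_mul_X_pow']
      split_ifs with h
      · rw [ih.2 _ (by omega), sub_zero]
      · rw [sub_zero]

/-- If `E` is a series in `X ^ 7` with constant term `1`, then multiplying by `E` does not affect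
whether the coefficients in the class `5` modulo `7` vanish up to a given order. -/
lemma coeff_eq_zero_of_mul (U E : ℂ⟦X⟧) (hE0 : E.coeff 0 = 1)
    (hE : ∀ k, ¬ 7 ∣ k → E.coeff k = 0) (N : ℕ)
    (h : ∀ k ≤ N, k % 7 = 5 → (U * E).coeff k = 0) (k : ℕ) (hk : k ≤ N) (hk5 : k % 7 = 5) :
    U.coeff k = 0 := by
  induction k using Nat.strong_induction_on with
  | _ k ih =>
    have h1 := h k hk hk5
    rw [coeff_mul, Finset.sum_eq_single (k, 0)] at h1
    · rwa [hE0, mul_one] at h1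
    · rintro ⟨i, j⟩ hij hne
      rw [Finset.HasAntidiagonal.mem_antidiagonal] at hij
      simp only at hij ⊢
      by_cases hj : 7 ∣ j
      · have hj0 : j ≠ 0 := by
          rintro rfl
          exact hne (by rw [← hij, add_zero])
        rw [ih i (by omega) (by omega) (by omega), zero_mul]
      · rw [hE j hj, mul_zero]
    · intro h
      exact absurd (Finset.HasAntidiagonal.mem_antidiagonal.2 (add_zero k)) h

/-- For triangular numbers `T_a + T_b ≡ 5 [MOD 7]` amounts to
`(2 a + 1) ^ 2 + (2 b + 1) ^ 2 ≡ 0 [MOD 7]`, and `-1` is not a square modulo `7`. -/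
lemma dvd_of_choose_add_choose {a b : ℕ}
    (h : ((a + 1).choose 2 + (b + 1).choose 2) % 7 = 5) : 7 ∣ 2 * a + 1 := by
  have ha := two_mul_choose_two (a + 1)
  have hb := two_mul_choose_two (b + 1)
  have key : ∀ x y u v : ZMod 7, 2 * u + (x + 1) = (x + 1) * (x + 1) →
      2 * v + (y + 1) = (y + 1) * (y + 1) → u + v = 5 → 2 * x + 1 = 0 := by
    intro x y u v h1 h2 h3
    have h4 : x * x + x + (y * y + y) = 3 := by
      have h5 : (10 : ZMod 7) = 3 := by decide
      linear_combination 2 * h3 - h1 - h2 + h5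
    revert h4
    clear h1 h2 h3
    revert x y
    decide
  have := key a b ((a + 1).choose 2 : ℕ) ((b + 1).choose 2 : ℕ)
    (by exact_mod_cast congrArg (Nat.cast : ℕ → ZMod 7) ha)
    (by exact_mod_cast congrArg (Nat.cast : ℕ → ZMod 7) hb) (by
      have := (ZMod.natCast_eq_natCast_iff' ((a + 1).choose 2 + (b + 1).choose 2) 5 7).2 h
      exact_mod_cast this)
  rw [← ZMod.natCast_eq_zero_iff]
  exact_mod_cast this

/-- In the product of two triple product series, a term with exponent `5` modulo `7` has
`7 ∣ 2 a + 1`, so its coefficient contains the factor `z ^ (-a) - z ^ (a + 1) = 0`. -/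
lemma coeff_theta_mul_theta {z w : ℂ} (z' w' : ℂ) (hzw : z * w = 1) (hz : z ^ 7 = 1) (N k : ℕ)
    (hk : k % 7 = 5) :
    ((∑ n ∈ Finset.range (N + 1),
        (-1) ^ n * X ^ ((n + 1).choose 2) * ((C w) ^ n - (C z) ^ (n + 1))) *
      ∑ n ∈ Finset.range (N + 1),
        (-1) ^ n * X ^ ((n + 1).choose 2) * ((C w') ^ n - (C z') ^ (n + 1)) : ℂ⟦X⟧).coeff k =
      0 := by
  rw [Finset.sum_mul_sum, map_sum]
  refine Finset.sum_eq_zero fun a _ ↦ ?_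
  rw [map_sum]
  refine Finset.sum_eq_zero fun b _ ↦ ?_
  have h1 : ((-1) ^ a * X ^ ((a + 1).choose 2) * ((C w) ^ a - (C z) ^ (a + 1)) *
      ((-1) ^ b * X ^ ((b + 1).choose 2) * ((C w') ^ b - (C z') ^ (b + 1))) : ℂ⟦X⟧) =
      C ((-1) ^ a * (w ^ a - z ^ (a + 1)) * ((-1) ^ b * (w' ^ b - z' ^ (b + 1)))) *
        X ^ ((a + 1).choose 2 + (b + 1).choose 2) := by
    simp only [map_mul, map_sub, map_pow, map_neg, map_one, pow_add]
    ring
  rw [h1, coeff_C_mul, coeff_X_pow]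
  split_ifs with h
  · obtain ⟨c, hc⟩ := dvd_of_choose_add_choose (h ▸ hk)
    have h2 : w ^ a = z ^ (a + 1) := by
      calc w ^ a = w ^ a * (z ^ 7) ^ c := by rw [hz, one_pow, mul_one]
        _ = w ^ a * (z ^ a * z ^ (a + 1)) := by rw [← pow_mul, ← hc, ← pow_add]; congr 2; omega
        _ = (z * w) ^ a * z ^ (a + 1) := by ring
        _ = z ^ (a + 1) := by rw [hzw, one_pow, one_mul]
    rw [h2]; ring
  · rw [mul_zero]

/-- The crank generating function at a primitive seventh root of unity has no term `X ^ (7 n + 5)`.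
-/
lemma sum_zpow_crank {z : ℂ} (hz : IsPrimitiveRoot z 7) (n : ℕ) :
    ∑ p : (7 * n + 5).Partition, z ^ p.crank = 0 := by
  have hz0 : z ≠ 0 := hz.ne_zero (by norm_num)
  have hz7 : z ^ 7 = 1 := hz.pow_eq_one
  set M := 7 * n + 4 with hM
  set φ := Ideal.Quotient.mk (Ideal.span {(X : ℂ⟦X⟧) ^ (M + 1 + 1)}) with hφdef
  have hφ : ∀ {f g : ℂ⟦X⟧}, φ f = φ g ↔ X ^ (M + 1 + 1) ∣ f - g := by
    intro f g
    rw [hφdef, Ideal.Quotient.eq, Ideal.mem_span_singleton]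
  -- The conjugate factors `P 1, …, P 6` pair up as `z ^ k`, `z ^ (7 - k)`: the pair `(1, 6)` occurs
  -- in the crank product, the other two in triple products.
  set P : ℕ → ℂ⟦X⟧ := fun k ↦ ∏ i ∈ Finset.range (M + 1), (1 - C (z ^ k) * X ^ (i + 1)) with hP
  set U := pSeries (crankWeight z) + (C z - 1) * X with hU
  have hinv : z⁻¹ = z ^ 6 := inv_eq_of_mul_eq_one_right (by rw [← hz7]; ring)
  have H1 : φ (U * P 6 * P 1) = φ (qPoch X (M + 1)) := by
    have := crank_product φ M (by
      rw [← map_zero φ, hφ, sub_zero]) hz0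
    rw [hinv] at this
    simpa only [hP, pow_one] using this
  have H2 := hφ.2 (jacobi_trunc (C (z ^ 2)) (C (z ^ 5))
    (by rw [← map_mul, ← pow_add, hz7, map_one]) (M + 1))
  have H3 := hφ.2 (jacobi_trunc (C (z ^ 3)) (C (z ^ 4))
    (by rw [← map_mul, ← pow_add, hz7, map_one]) (M + 1))
  set J2 := ∑ n ∈ Finset.range (M + 1 + 1), (-1) ^ n * X ^ ((n + 1).choose 2) *
    ((C (z ^ 5)) ^ n - (C (z ^ 2)) ^ (n + 1)) with hJ2
  set J3 := ∑ n ∈ Finset.range (M + 1 + 1), (-1) ^ n * X ^ ((n + 1).choose 2) *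
    ((C (z ^ 4)) ^ n - (C (z ^ 3)) ^ (n + 1)) with hJ3
  set E := ∏ i ∈ Finset.range (M + 1), (1 - (X ^ (i + 1)) ^ 7 : ℂ⟦X⟧) with hE
  have HE : qPoch X (M + 1) * P 1 * P 2 * P 3 * P 4 * P 5 * P 6 = E := by
    simp only [hP, qPoch, hE, ← Finset.prod_mul_distrib]
    exact Finset.prod_congr rfl fun i _ ↦ prod_one_sub_root hz _
  have H : φ (C ((1 - z ^ 2) * (1 - z ^ 3)) * (U * E)) = φ (J2 * J3) := by
    rw [← HE]
    simp only [map_mul φ] at H1 H2 H3 ⊢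
    rw [← H2, ← H3]
    simp only [map_mul, map_sub, map_one] at H1 ⊢
    linear_combination (1 - φ (C (z ^ 2))) * (1 - φ (C (z ^ 3))) * φ (qPoch X (M + 1)) *
      φ (P 2) * φ (P 3) * φ (P 4) * φ (P 5) * H1
  have hc : (1 - z ^ 2) * (1 - z ^ 3) ≠ 0 := by
    refine mul_ne_zero (sub_ne_zero.2 ?_) (sub_ne_zero.2 ?_)
    · exact (hz.pow_ne_one_of_pos_of_lt (by norm_num) (by norm_num)).symm
    · exact (hz.pow_ne_one_of_pos_of_lt (by norm_num) (by norm_num)).symm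
  have hUE : ∀ k ≤ M + 1, k % 7 = 5 → (U * E).coeff k = 0 := by
    intro k hk hk5
    have h1 := X_pow_dvd_iff.1 (hφ.1 H) k (by omega)
    rw [map_sub, coeff_C_mul, hJ2, hJ3, coeff_theta_mul_theta _ _
      (by rw [← pow_add, hz7]) (by rw [← pow_mul, mul_comm, pow_mul, hz7, one_pow]) _ _ hk5,
      sub_zero] at h1
    exact (mul_eq_zero.1 h1).resolve_left hc
  have hE' := coeff_prod_one_sub_pow_seven (M + 1)
  have h := coeff_eq_zero_of_mul U E hE'.1 hE'.2 (M + 1) hUE (7 * n + 5) (by omega) (by omega)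
  have h2 : ((C z - 1) * X : ℂ⟦X⟧).coeff (7 * n + 5) = 0 := by
    rw [show (C z - 1 : ℂ⟦X⟧) = C (z - 1) by simp, coeff_C_mul, coeff_X, if_neg (by omega),
      mul_zero]
  rw [hU, map_add, h2, add_zero, pSeries, coeff_mk] at h
  rw [← h]
  exact Finset.sum_congr rfl fun p _ ↦ zpow_crank hz0 p

lemma crankCountMod_eq_card (r k : ℕ) :
    crankCountMod r 7 k =
      (Finset.univ.filter fun p : k.Partition ↦ p.crank ≡ r [ZMOD 7]).card := by
  rw [crankCountMod, Fintype.card_subtype]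
  rfl

/-- A sum over partitions of a `7`-periodic function of the crank, grouped by residue class. -/
lemma sum_partition_eq (k : ℕ) (f : ℤ → ℂ) (hf : ∀ a b : ℤ, a ≡ b [ZMOD 7] → f a = f b) :
    ∑ p : k.Partition, f p.crank =
      ∑ r ∈ Finset.range 7, (crankCountMod r 7 k : ℂ) * f r := by
  have hmod : ∀ p : k.Partition, (((p.crank % 7).toNat : ℕ) : ℤ) = p.crank % 7 := fun p ↦
    Int.toNat_of_nonneg (Int.emod_nonneg _ (by norm_num))
  rw [← Finset.sum_fiberwise_of_maps_to (t := Finset.range 7)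
    (g := fun p : k.Partition ↦ (p.crank % 7).toNat)
    (fun p _ ↦ Finset.mem_range.2 (show (p.crank % 7).toNat < 7 by have := hmod p; omega))]
  refine Finset.sum_congr rfl fun r hr ↦ ?_
  have hr7 := Finset.mem_range.1 hr
  rw [crankCountMod_eq_card, ← nsmul_eq_mul, ← Finset.sum_const]
  have hset : (Finset.univ.filter fun p : k.Partition ↦ (p.crank % 7).toNat = r) =
      Finset.univ.filter fun p : k.Partition ↦ p.crank ≡ r [ZMOD 7] := by
    ext p
    have := hmod p
    rw [Finset.mem_filter, Finset.mem_filter]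
    simp only [Finset.mem_univ, true_and, Int.ModEq]
    omega
  rw [hset]
  exact Finset.sum_congr rfl fun p hp ↦ hf _ _ (Finset.mem_filter.1 hp).2

end

theorem andrews_garvan_crank_mod_7 (n : ℕ) (m : ℤ) (hm0 : 0 ≤ m) (hm6 : m ≤ 6) :
    crankCountMod m 7 (7 * n + 5) = partitionCount (7 * n + 5) / 7 := by
  obtain ⟨r, rfl⟩ := Int.eq_ofNat_of_zero_le hm0
  obtain ⟨z, hz⟩ : ∃ z : ℂ, IsPrimitiveRoot z 7 :=
    ⟨_, Complex.isPrimitiveRoot_exp 7 (by norm_num)⟩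
  have hz0 : z ≠ 0 := hz.ne_zero (by norm_num)
  have hsum := sum_zpow_crank hz n
  rw [sum_partition_eq _ (fun a ↦ z ^ a) fun a b hab ↦ by
    obtain ⟨c, hc⟩ := hab.dvd
    have hb : b = a + 7 * c := by linarith
    have h7 : z ^ (7 : ℤ) = 1 := by exact_mod_cast hz.pow_eq_one
    simp only [hb, zpow_add₀ hz0, zpow_mul, h7, one_zpow, mul_one]] at hsum
  simp only [zpow_natCast] at hsum
  have heq := all_eq_of_sum_eq_zero hz (fun r ↦ crankCountMod r 7 (7 * n + 5)) hsum
  have htot : partitionCount (7 * n + 5) =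
      ∑ r ∈ Finset.range 7, crankCountMod r 7 (7 * n + 5) := by
    have := sum_partition_eq (7 * n + 5) (fun _ ↦ 1) fun _ _ _ ↦ rfl
    simp only [Finset.sum_const, Finset.card_univ, nsmul_eq_mul, mul_one] at this
    exact_mod_cast this
  have hall : ∀ r < 7, crankCountMod (r : ℕ) 7 (7 * n + 5) =
      crankCountMod (6 : ℕ) 7 (7 * n + 5) := by
    intro r hr
    rcases Nat.lt_or_ge r 6 with h | h
    · exact heq r h
    · rw [show r = 6 by omega]
  rw [Finset.sum_congr rfl fun r hr ↦ hall r (Finset.mem_range.1 hr), Finset.sum_const,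
    Finset.card_range, smul_eq_mul] at htot
  rw [htot, Nat.mul_div_cancel_left _ (by norm_num)]
  exact hall r (by omega)
end

section
/- (Dyson's crank conjecture modulo 11, proved by Andrews and Garvan) For every natural number k and every integer m with 0 ≤ m ≤ 10, the number of partitions of 11k + 6 whose crank is congruent to m modulo 11 equals p(11k + 6)/11; in particular M(0, 11, 11k+6) = M(1, 11, 11k+6) = M(2, 11, 11k+6) = M(3, 11, 11k+6) = M(4, 11, 11k+6). -/
namespace CrankMod11

open PowerSeries
open scoped PowerSeries.WithPiTopology

/-! ### Infinite products of power series -/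

lemma multipliable_of_dvd {f : ℕ → ℂ⟦X⟧} (h : ∀ i, X ^ (i + 1) ∣ f i - 1) : Multipliable f := by
  have := PowerSeries.WithPiTopology.multipliable_one_add_of_tendsto_order_atTop_nhds_top ℂ
    (f := fun i => f i - 1) (by
      refine ENat.tendsto_nhds_top_iff_natCast_lt.mpr
        (fun n ↦ Filter.eventually_atTop.mpr ⟨n, fun m hm => ?_⟩)
      refine lt_of_lt_of_le ?_ (nat_le_order _ _ (X_pow_dvd_iff.mp (h m)))
      exact_mod_cast Nat.lt_succ_of_le hm)
  simpa using this

/-- An infinite product whose `i`-th factor is `1 + O(X ^ (i + 1))` agrees up to `O(X ^ n)` with its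
first `M ≥ n` factors. -/
lemma dvd_tprod_sub {f : ℕ → ℂ⟦X⟧} (h : ∀ i, X ^ (i + 1) ∣ f i - 1) {n M : ℕ} (hM : n ≤ M) :
    X ^ n ∣ ∏' i, f i - ∏ i ∈ Finset.range M, f i := by
  rw [X_pow_dvd_iff]
  intro d hd
  have key : ∀ k, M ≤ k →
      coeff d (∏ i ∈ Finset.range k, f i) = coeff d (∏ i ∈ Finset.range M, f i) := by
    intro k hk
    induction k, hk using Nat.le_induction with
    | base => rfl
    | succ k hk ih =>
      rw [Finset.prod_range_succ, ← ih]
      obtain ⟨g, hg⟩ := h k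
      have : f k = 1 + X ^ (k + 1) * g := by rw [← hg]; ring
      rw [this, mul_add, mul_one, map_add, ← mul_assoc, mul_comm _ (X ^ (k + 1)), mul_assoc,
        coeff_X_pow_mul', if_neg (by omega), add_zero]
  have h1 := (multipliable_of_dvd h).hasProd.tendsto_prod_nat
  rw [PowerSeries.WithPiTopology.tendsto_iff_coeff_tendsto] at h1
  have h2 := tendsto_nhds_unique (h1 d)
    (tendsto_atTop_of_eventually_const (i₀ := M) fun k hk => key k hk)
  rw [map_sub, h2, sub_self]

/-- The product `∏_{n ≥ 1} (1 - z X ^ (d n))`. -/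
noncomputable def eP (z : ℂ) (d : ℕ) : ℂ⟦X⟧ := ∏' n : ℕ, (1 - C z * X ^ (d * (n + 1)))

lemma eP_dvd (z : ℂ) {d : ℕ} (hd : 0 < d) (i : ℕ) :
    (X : ℂ⟦X⟧) ^ (i + 1) ∣ (1 - C z * X ^ (d * (i + 1))) - 1 := by
  rw [show (1 - C z * X ^ (d * (i + 1)) : ℂ⟦X⟧) - 1 = - (C z) * X ^ (d * (i + 1)) by ring]
  exact (pow_dvd_pow _ (Nat.le_mul_of_pos_left _ hd)).mul_left _

lemma eP_mult (z : ℂ) {d : ℕ} (hd : 0 < d) :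
    Multipliable fun n : ℕ => (1 - C z * X ^ (d * (n + 1)) : ℂ⟦X⟧) :=
  multipliable_of_dvd (eP_dvd z hd)

lemma isUnit_of_dvd_sub_one {f : ℂ⟦X⟧} (h : X ∣ f - 1) : IsUnit f := by
  rw [PowerSeries.isUnit_iff_constantCoeff]
  rw [X_dvd_iff, map_sub, sub_eq_zero] at h
  simp [h]

lemma eP_unit (z : ℂ) {d : ℕ} (hd : 0 < d) : IsUnit (eP z d) := by
  apply isUnit_of_dvd_sub_one
  have h1 := dvd_tprod_sub (eP_dvd z hd) (n := 1) (M := 1) le_rfl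
  have h2 := dvd_add h1 (show (X : ℂ⟦X⟧) ^ 1 ∣
    (∏ i ∈ Finset.range 1, (1 - C z * X ^ (d * (i + 1)))) - 1 by
      rw [Finset.prod_range_one]; exact eP_dvd z hd 0)
  rwa [sub_add_sub_cancel, pow_one] at h2

/-! ### Lattice sums of monomials -/

/-- The monomial `X ^ (k / 2)`, intended for even `k ≥ 0`; exponents of theta series are kept
doubled so that they are integer polynomials in the summation index. -/
noncomputable def mon (k : ℤ) : ℂ⟦X⟧ := X ^ (k / 2).toNat

/-- An exponent function (doubled) for which a lattice sum is a formal power series: the values are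
even and nonnegative, and each bound is met by finitely many indices. -/
structure Good {ι : Type*} (k : ι → ℤ) : Prop where
  nonneg : ∀ i, 0 ≤ k i
  even : ∀ i, 2 ∣ k i
  fin : ∀ N, {i | k i ≤ N}.Finite

/-- The series `∑ i, w i X ^ (k i / 2)`. -/
noncomputable def thS {ι : Type*} (w : ι → ℂ) (k : ι → ℤ) : ℂ⟦X⟧ := ∑' i, C (w i) * mon (k i)

lemma mon_mul {a b : ℤ} (ha : 0 ≤ a) (hb : 0 ≤ b) (ha2 : 2 ∣ a) (hb2 : 2 ∣ b) :
    mon a * mon b = mon (a + b) := by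
  rw [mon, mon, mon, ← pow_add]
  congr 1
  omega

lemma Good.summable {ι : Type*} {k : ι → ℤ} (hk : Good k) (w : ι → ℂ) :
    Summable fun i => C (w i) * mon (k i) := by
  rw [PowerSeries.WithPiTopology.summable_iff_summable_coeff]
  intro d
  apply summable_of_hasFiniteSupport
  refine (hk.fin (2 * d + 1)).subset ?_
  intro i hi
  simp only [Function.mem_support, mon, coeff_C_mul, coeff_X_pow] at hi
  have h0 := hk.nonneg i
  have : d = (k i / 2).toNat := by
    by_contra h
    simp [h] at hi
  simp only [Set.mem_ofPred_eq]
  omega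

lemma Good.prod {ι κ : Type*} {k : ι → ℤ} {l : κ → ℤ} (hk : Good k) (hl : Good l) :
    Good fun p : ι × κ => k p.1 + l p.2 where
  nonneg p := add_nonneg (hk.nonneg _) (hl.nonneg _)
  even p := dvd_add (hk.even _) (hl.even _)
  fin N := by
    refine ((hk.fin N).prod (hl.fin N)).subset ?_
    rintro ⟨i, j⟩ h
    have := hk.nonneg i
    have := hl.nonneg j
    simp only [Set.mem_ofPred_eq, Set.mem_prod] at *
    omega

lemma Good.comp {ι κ : Type*} {k : ι → ℤ} (hk : Good k) {f : κ → ι} (hf : Function.Injective f) :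
    Good fun i => k (f i) where
  nonneg _ := hk.nonneg _
  even _ := hk.even _
  fin N := Set.Finite.preimage (f := f) hf.injOn (hk.fin N)

/-- Sufficient growth condition for a quadratic exponent. -/
lemma Good.of_sq {k : ℤ → ℤ} (h2 : ∀ n, 2 ∣ k n) (h0 : ∀ n, 0 ≤ k n)
    (h : ∀ n, n ^ 2 ≤ 2 * k n + 1) : Good k where
  nonneg := h0
  even := h2
  fin N := by
    refine (Set.finite_Icc (-(2 * N + 1)) (2 * N + 1)).subset ?_
    intro n hn
    simp only [Set.mem_ofPred_eq, Set.mem_Icc] at *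
    have := h n
    constructor <;> nlinarith [sq_nonneg n, sq_nonneg (n - 1), sq_nonneg (n + 1), Int.le_self_sq n,
      Int.le_self_sq (-n)]

lemma thS_mul {ι κ : Type*} {k : ι → ℤ} {l : κ → ℤ} (hk : Good k) (hl : Good l)
    (w : ι → ℂ) (v : κ → ℂ) :
    thS w k * thS v l = thS (fun p : ι × κ => w p.1 * v p.2) (fun p => k p.1 + l p.2) := by
  have hs := (hk.prod hl).summable (fun p : ι × κ => w p.1 * v p.2)
  have he : ∀ p : ι × κ, C (w p.1 * v p.2) * mon (k p.1 + l p.2) =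
      (C (w p.1) * mon (k p.1)) * (C (v p.2) * mon (l p.2)) := by
    intro p
    rw [← mon_mul (hk.nonneg _) (hl.nonneg _) (hk.even _) (hl.even _), map_mul]
    ring
  rw [thS, thS, thS, tsum_congr he]
  exact (hk.summable w).tsum_mul_tsum (hl.summable v) (by simpa only [he] using hs)

lemma thS_equiv {ι κ : Type*} (e : κ ≃ ι) (w : ι → ℂ) (k : ι → ℤ) :
    thS w k = thS (fun i => w (e i)) (fun i => k (e i)) :=
  (e.tsum_eq fun i => C (w i) * mon (k i)).symm

lemma thS_split {ι κ : Type*} {d : ℕ} {k : ι → ℤ} (hk : Good k) (w : ι → ℂ)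
    (e : Fin d × κ ≃ ι) :
    thS w k = ∑ r, thS (fun x => w (e (r, x))) (fun x => k (e (r, x))) := by
  rw [thS_equiv e, thS, Summable.tsum_prod', tsum_fintype]
  · rfl
  · exact (hk.comp e.injective).summable _
  · intro r
    exact (hk.comp (f := fun x => e (r, x)) fun x y h => by simpa using h).summable _

lemma thS_const_mul {ι : Type*} {k : ι → ℤ} (hk : Good k) (w : ι → ℂ) (c : ℂ) :
    thS (fun i => c * w i) k = C c * thS w k := by
  rw [thS, thS, ← (hk.summable w).tsum_mul_left]
  simp only [map_mul, mul_assoc]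

lemma thS_add {ι : Type*} {k : ι → ℤ} (hk : Good k) (w v : ι → ℂ) :
    thS (fun i => w i + v i) k = thS w k + thS v k := by
  rw [thS, thS, thS, ← (hk.summable w).tsum_add (hk.summable v)]
  simp only [map_add, add_mul]

/-- A coefficient of a lattice sum vanishes if every index contributing to it has weight zero. -/
lemma coeff_thS_eq_zero {ι : Type*} {k : ι → ℤ} (hk : Good k) (w : ι → ℂ) (n : ℕ)
    (h : ∀ i, k i = 2 * n → w i = 0) : coeff n (thS w k) = 0 := by
  rw [thS, (hk.summable w).map_tsum _ (PowerSeries.WithPiTopology.continuous_coeff _ _)]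
  convert tsum_zero with i
  rw [mon, coeff_C_mul, coeff_X_pow]
  split_ifs with h1
  · rw [h i, zero_mul]
    have := hk.nonneg i
    have := hk.even i
    omega
  · simp

/-! ### The Jacobi triple product -/

/-- The finite product `(1 - q)(1 - q ^ 2) ⋯ (1 - q ^ m)`. -/
def qfac {R : Type*} [CommRing R] (q : R) (m : ℕ) : R := ∏ i ∈ Finset.range m, (1 - q ^ (i + 1))

/-- The Gaussian binomial coefficient, defined by its Pascal recurrence. -/
def gauss {R : Type*} [CommRing R] (q : R) : ℕ → ℕ → R
  | _, 0 => 1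
  | 0, _ + 1 => 0
  | m + 1, k + 1 => gauss q m k + q ^ (k + 1) * gauss q m (k + 1)

section
variable {R : Type*} [CommRing R] (q : R)

lemma gauss_zero_right (m : ℕ) : gauss q m 0 = 1 := by cases m <;> rfl

lemma gauss_of_lt {m k : ℕ} (h : m < k) : gauss q m k = 0 := by
  induction m generalizing k with
  | zero => obtain ⟨k, rfl⟩ := Nat.exists_eq_add_of_lt h; simp [gauss]
  | succ m ih =>
    obtain ⟨k, rfl⟩ : ∃ l, k = l + 1 := ⟨k - 1, by omega⟩
    rw [gauss, ih (by omega), ih (by omega)]; ring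

lemma qfac_succ (m : ℕ) : qfac q (m + 1) = qfac q m * (1 - q ^ (m + 1)) :=
  Finset.prod_range_succ _ _

lemma gauss_mul_qfac (a b : ℕ) : gauss q (a + b) a * qfac q a * qfac q b = qfac q (a + b) := by
  obtain ⟨m, hm⟩ : ∃ m, m = a + b := ⟨_, rfl⟩
  induction m generalizing a b with
  | zero =>
    obtain ⟨rfl, rfl⟩ : a = 0 ∧ b = 0 := by omega
    simp [gauss, qfac]
  | succ m ih =>
    rcases a with _ | a
    · simp [gauss_zero_right, qfac]
    · rcases b with _ | b
      · have h := ih a 0 (by omega)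
        rw [show a + 1 + 0 = a + 1 by ring, gauss, gauss_of_lt q (Nat.lt_succ_self a), qfac_succ]
        simp only [add_zero] at h ⊢
        linear_combination (1 - q ^ (a + 1)) * h
      · have h1 := ih a (b + 1) (by omega)
        have h2 := ih (a + 1) b (by omega)
        rw [show a + 1 + (b + 1) = (a + 1 + b) + 1 by ring, gauss, qfac_succ _ (a + 1 + b),
          show a + 1 + b = a + (b + 1) by ring] at *
        rw [qfac_succ q a] at *
        rw [qfac_succ q b] at *
        linear_combination (1 - q ^ (a + 1)) * h1 + q ^ (a + 1) * (1 - q ^ (b + 1)) * h2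

/-- The `q`-binomial theorem, with the triangular powers of `q` supplied by `t`. -/
lemma q_binomial (t : ℕ → R) (ht0 : t 0 = 1) (ht : ∀ k, t (k + 1) = t k * q ^ k) (y w : R)
    (m : ℕ) : ∏ i ∈ Finset.range m, (y + w * q ^ i) =
      ∑ k ∈ Finset.range (m + 1), t k * gauss q m k * w ^ k * y ^ (m - k) := by
  induction m generalizing w with
  | zero => simp [ht0, gauss]
  | succ m ih =>
    rw [Finset.prod_range_succ']
    have : ∀ i, y + w * q ^ (i + 1) = y + (w * q) * q ^ i := fun i => by ring
    simp only [this]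
    rw [ih (w * q), pow_zero, mul_one, mul_add]
    have h1 : (∑ k ∈ Finset.range (m + 1), t k * gauss q m k * (w * q) ^ k * y ^ (m - k)) * y =
        ∑ k ∈ Finset.range (m + 1),
          t (k + 1) * (q ^ (k + 1) * gauss q m (k + 1)) * w ^ (k + 1) * y ^ (m - k) +
        y ^ (m + 1) := by
      rw [Finset.sum_range_succ', Finset.sum_range_succ _ m, gauss_of_lt q (Nat.lt_succ_self m),
        add_mul, Finset.sum_mul]
      simp only [ht0, gauss_zero_right, mul_zero, zero_mul, add_zero, pow_zero, Nat.sub_zero,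
        mul_one, one_mul]
      rw [← pow_succ]
      congr 1
      refine Finset.sum_congr rfl fun k hk => ?_
      rw [show m - k = (m - (k + 1)) + 1 by have := Finset.mem_range.mp hk; omega]
      ring
    rw [h1, Finset.sum_mul, Finset.sum_range_succ' _ (m + 1), gauss_zero_right]
    simp only [ht0, Nat.sub_zero, pow_zero, mul_one, one_mul, Nat.reduceSubDiff]
    rw [add_right_comm, ← Finset.sum_add_distrib]
    congr 1
    refine Finset.sum_congr rfl fun k hk => ?_
    rw [gauss, ht k]
    ring

end

lemma X_pow_eq_mon (n : ℕ) : (X : ℂ⟦X⟧) ^ n = mon (2 * n) := by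
  rw [mon]; congr 1; omega

lemma two_dvd_mul_succ (j : ℤ) : 2 ∣ j * (j + 1) := (Int.even_mul_succ_self j).two_dvd

lemma mul_succ_nonneg (j : ℤ) : 0 ≤ j * (j + 1) := by
  rcases le_or_gt 0 j with h | h
  · positivity
  · nlinarith

/-- Finite form of the triple product: the `q`-binomial theorem with `2 M` factors, recentred. -/
lemma finite_jtp (z : ℂ) (d N : ℕ) :
    (∏ i ∈ Finset.range (N + 1), ((X ^ d) ^ i - C z)) *
      ∏ i ∈ Finset.range (N + 1), (1 - C z * (X ^ d) ^ (i + 1)) =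
    ∑ k ∈ Finset.range (2 * (N + 1) + 1), C ((-z) ^ k) *
      mon (d * (((k : ℤ) - (N + 1 : ℕ)) * (((k : ℤ) - (N + 1 : ℕ)) + 1))) *
      gauss (X ^ d : ℂ⟦X⟧) (2 * (N + 1)) k := by
  set q : ℂ⟦X⟧ := X ^ d with hq
  have hqm : ∀ n, q ^ n = mon (2 * (d * n : ℕ)) := fun n => by rw [hq, ← pow_mul, X_pow_eq_mon]
  have hd : (0 : ℤ) ≤ d := Int.natCast_nonneg d
  have hmul1 : ∀ j : ℤ, 2 ∣ (d : ℤ) * (j * (j + 1)) := fun j => (two_dvd_mul_succ j).mul_left _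
  have hmul0 : ∀ j : ℤ, 0 ≤ (d : ℤ) * (j * (j + 1)) := fun j => mul_nonneg hd (mul_succ_nonneg j)
  have ht : ∀ k : ℕ, mon (d * (((k : ℤ) - 1) * ((k : ℤ) - 1 + 1))) * q ^ k =
      mon (d * ((((k + 1 : ℕ) : ℤ) - 1) * (((k + 1 : ℕ) : ℤ) - 1 + 1))) := by
    intro k
    rw [hqm, mon_mul (hmul0 _) (by positivity) (hmul1 _) (dvd_mul_right _ _)]
    congr 1; push_cast; ring
  have key := q_binomial q (fun k : ℕ => mon (d * (((k : ℤ) - 1) * ((k : ℤ) - 1 + 1))))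
    (by simp [mon]) (fun k => (ht k).symm) (q ^ N) (-C z) (2 * (N + 1))
  -- the power of `q` to be cancelled
  have hc : (∏ i ∈ Finset.range (N + 1), q ^ i) * (q ^ N) ^ (N + 1) =
      mon (3 * d * (N * (N + 1))) := by
    have e1 : ∀ N : ℕ, ∏ i ∈ Finset.range (N + 1), q ^ i = mon (d * ((N : ℤ) * (N + 1))) := by
      intro N
      induction N with
      | zero => simp [mon]
      | succ N ih =>
        rw [Finset.prod_range_succ, ih, hqm, mon_mul (hmul0 _) (by positivity) (hmul1 _)
          (dvd_mul_right _ _)]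
        congr 1; push_cast; ring
    rw [e1, ← pow_mul, hqm, mon_mul (hmul0 _) (by positivity) (hmul1 _) (dvd_mul_right _ _)]
    congr 1; push_cast; ring
  have hc0 : mon (3 * d * (N * (N + 1))) ≠ 0 := by rw [mon]; exact pow_ne_zero _ X_ne_zero
  apply mul_left_cancel₀ hc0
  have hL : ∏ i ∈ Finset.range (2 * (N + 1)), (q ^ N + -C z * q ^ i) =
      mon (3 * d * (N * (N + 1))) * ((∏ i ∈ Finset.range (N + 1), (q ^ i - C z)) *
      ∏ i ∈ Finset.range (N + 1), (1 - C z * q ^ (i + 1))) := by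
    rw [two_mul, Finset.prod_range_add, ← hc]
    have e1 : ∏ i ∈ Finset.range (N + 1), (q ^ N + -C z * q ^ i) =
        (∏ i ∈ Finset.range (N + 1), q ^ i) * ∏ i ∈ Finset.range (N + 1), (q ^ i - C z) := by
      rw [← Finset.prod_range_reflect (fun i => q ^ i - C z), ← Finset.prod_mul_distrib]
      refine Finset.prod_congr rfl fun i hi => ?_
      have : i ≤ N := by have := Finset.mem_range.mp hi; omega
      rw [show N + 1 - 1 - i = N - i by omega]
      nth_rewrite 1 [show N = i + (N - i) by omega]
      rw [pow_add]; ring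
    have e2 : ∏ i ∈ Finset.range (N + 1), (q ^ N + -C z * q ^ (N + 1 + i)) =
        (q ^ N) ^ (N + 1) * ∏ i ∈ Finset.range (N + 1), (1 - C z * q ^ (i + 1)) := by
      rw [← Finset.card_range (N + 1), ← Finset.prod_const, Finset.card_range,
        ← Finset.prod_mul_distrib]
      refine Finset.prod_congr rfl fun i hi => ?_
      rw [show N + 1 + i = N + (i + 1) by omega, pow_add]; ring
    rw [e1, e2]; ring
  rw [← hL, key, Finset.mul_sum]
  refine Finset.sum_congr rfl fun k hk => ?_
  have hk' : k ≤ 2 * (N + 1) := by have := Finset.mem_range.mp hk; omega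
  have e : mon (d * (((k : ℤ) - 1) * ((k : ℤ) - 1 + 1))) * (q ^ N) ^ (2 * (N + 1) - k) =
      mon (3 * d * (N * (N + 1))) *
        mon (d * (((k : ℤ) - (N + 1 : ℕ)) * (((k : ℤ) - (N + 1 : ℕ)) + 1))) := by
    rw [← pow_mul, hqm, mon_mul (hmul0 _) (by positivity) (hmul1 _) (dvd_mul_right _ _),
      mon_mul (by positivity) (hmul0 _) ?_ (hmul1 _)]
    · congr 1; push_cast [hk']; ring
    · rw [mul_assoc]; exact (hmul1 _).mul_left _
  rw [map_pow, map_neg]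
  linear_combination (gauss q (2 * (N + 1)) k) * (-C z) ^ k * e

lemma dvd_thS_sub {ι : Type*} {k : ι → ℤ} (hk : Good k) (w : ι → ℂ) (n : ℕ) (s : Finset ι)
    (h : ∀ i ∉ s, 2 * n ≤ k i) : X ^ n ∣ thS w k - ∑ i ∈ s, C (w i) * mon (k i) := by
  rw [X_pow_dvd_iff]
  intro m hm
  rw [thS, map_sub, map_sum,
    (hk.summable w).map_tsum _ (PowerSeries.WithPiTopology.continuous_coeff _ _),
    tsum_eq_sum (s := s), sub_self]
  intro i hi
  rw [mon, coeff_C_mul, coeff_X_pow, if_neg, mul_zero]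
  have := h i hi
  omega

/-- The theta series `∑ (-z) ^ n X ^ (d n (n + 1) / 2)`. -/
noncomputable def theta (z : ℂ) (d : ℕ) : ℂ⟦X⟧ :=
  thS (fun n : ℤ => (-z) ^ n) (fun n => d * (n * (n + 1)))

lemma good_theta {d : ℕ} (hd : 0 < d) : Good (fun n : ℤ => (d : ℤ) * (n * (n + 1))) := by
  have hd' : (1 : ℤ) ≤ d := by exact_mod_cast hd
  refine Good.of_sq (fun j => (two_dvd_mul_succ j).mul_left _)
    (fun j => mul_nonneg (by omega) (mul_succ_nonneg j)) fun n => ?_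
  have := mul_le_mul_of_nonneg_right hd' (mul_succ_nonneg n)
  nlinarith [sq_nonneg (n + 1)]

/-- The Jacobi triple product, obtained by letting the number of factors in `finite_jtp` grow. -/
lemma jacobi_triple {z : ℂ} (hz : z ≠ 0) {d : ℕ} (hd : 0 < d) :
    theta z d = C (1 - z⁻¹) * (eP 1 d * eP z d * eP z⁻¹ d) := by
  have hd' : (1 : ℤ) ≤ d := by exact_mod_cast hd
  suffices H : ∀ n : ℕ, X ^ n ∣ theta z d - C (1 - z⁻¹) * (eP 1 d * eP z d * eP z⁻¹ d) by
    rw [← sub_eq_zero]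
    ext n
    exact X_pow_dvd_iff.mp (H (n + 1)) n (Nat.lt_succ_self n)
  intro n
  -- work modulo `X ^ n`, where `N` is large enough for the central Gaussian binomials to be
  -- `1 / ∏ (1 - X ^ (d i))` and for the remaining terms to vanish
  set I : Ideal ℂ⟦X⟧ := Ideal.span {X ^ n}
  set π := Ideal.Quotient.mk I
  have hπ : ∀ a b : ℂ⟦X⟧, π a = π b ↔ X ^ n ∣ a - b := fun a b => by
    rw [Ideal.Quotient.mk_eq_mk_iff_sub_mem, Ideal.mem_span_singleton]
  rw [← hπ]
  set N := 2 * n + 2 with hN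
  have hP : ∀ (w : ℂ) (m : ℕ), n ≤ m →
      π (eP w d) = π (∏ i ∈ Finset.range m, (1 - C w * (X ^ d) ^ (i + 1))) := by
    intro w m hm
    simp only [hπ, eP, ← pow_mul]
    exact dvd_tprod_sub (eP_dvd w hd) hm
  have hE : ∀ m, n ≤ m → π (qfac (X ^ d) m) = π (eP 1 d) := by
    intro m hm
    rw [hP 1 m hm, qfac]
    simp
  have hu : IsUnit (π (eP 1 d)) := (eP_unit 1 hd).map π
  have hmon : ∀ j : ℤ, (j ≤ -n - 2 ∨ n + 2 ≤ j) → (2 * n : ℤ) ≤ d * (j * (j + 1)) := by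
    intro j hj
    have h1 := mul_le_mul_of_nonneg_right hd' (mul_succ_nonneg j)
    rcases hj with h | h <;> nlinarith
  have hmon' : ∀ j : ℤ, (j ≤ -n - 2 ∨ n + 2 ≤ j) → π (mon (d * (j * (j + 1)))) = 0 := by
    intro j hj
    rw [← map_zero π, hπ, sub_zero, mon]
    have := hmon j hj
    exact pow_dvd_pow _ (by omega)
  have hfin := congrArg π (finite_jtp z d N)
  have h1 : π (theta z d) = ∑ k ∈ Finset.range (2 * (N + 1) + 1),
      π (C ((-z) ^ ((k : ℤ) - (N + 1 : ℕ)))) *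
        π (mon (d * (((k : ℤ) - (N + 1 : ℕ)) * (((k : ℤ) - (N + 1 : ℕ)) + 1)))) := by
    have := dvd_thS_sub (good_theta hd) (fun n : ℤ => (-z) ^ n) n
      ((Finset.range (2 * (N + 1) + 1)).image fun k : ℕ => (k : ℤ) - (N + 1 : ℕ)) (by
        intro i hi
        apply hmon
        by_contra hc
        apply hi
        rw [Finset.mem_image]
        refine ⟨(i + (N + 1 : ℕ)).toNat, ?_, ?_⟩
        · rw [Finset.mem_range]; omega
        · omega)
    rw [← hπ, Finset.sum_image (by intro a _ b _ h; simpa using h), map_sum] at this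
    rw [theta, this]
    simp only [map_mul]
  have hnz : (-z) ≠ 0 := neg_ne_zero.mpr hz
  have h2 : π (C ((-z) ^ (N + 1))) * π (theta z d) =
      π (eP 1 d) * π (∑ k ∈ Finset.range (2 * (N + 1) + 1), C ((-z) ^ k) *
      mon (d * (((k : ℤ) - (N + 1 : ℕ)) * (((k : ℤ) - (N + 1 : ℕ)) + 1))) *
      gauss (X ^ d : ℂ⟦X⟧) (2 * (N + 1)) k) := by
    rw [h1, Finset.mul_sum, map_sum, Finset.mul_sum]
    refine Finset.sum_congr rfl fun k hk => ?_
    have hk' : k ≤ 2 * (N + 1) := by have := Finset.mem_range.mp hk; omega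
    simp only [map_mul π]
    have e : (-z) ^ (N + 1) * (-z) ^ ((k : ℤ) - (N + 1 : ℕ)) = (-z) ^ k := by
      rw [← zpow_natCast, ← zpow_add₀ hnz, ← zpow_natCast]; congr 1; ring
    have e' : π (C ((-z) ^ (N + 1))) * π (C ((-z) ^ ((k : ℤ) - (N + 1 : ℕ)))) =
        π (C ((-z) ^ k)) := by
      rw [← map_mul, ← map_mul, e]
    rw [← mul_assoc, e']
    by_cases hc : n ≤ k ∧ n ≤ 2 * (N + 1) - k
    · have hg := congrArg π (gauss_mul_qfac (X ^ d : ℂ⟦X⟧) k (2 * (N + 1) - k))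
      rw [map_mul, map_mul, hE _ hc.1, hE _ hc.2, hE _ (by omega),
        show k + (2 * (N + 1) - k) = 2 * (N + 1) by omega] at hg
      have : π (gauss (X ^ d : ℂ⟦X⟧) (2 * (N + 1)) k) * π (eP 1 d) = 1 := by
        apply hu.mul_right_cancel
        rw [hg, one_mul]
      linear_combination -π (C ((-z) ^ k)) *
        π (mon (d * (((k : ℤ) - (N + 1 : ℕ)) * (((k : ℤ) - (N + 1 : ℕ)) + 1)))) * this
    · rw [hmon' _ (by omega)]; ring
  rw [← hfin] at h2
  have h3 : ∏ i ∈ Finset.range (N + 1), (((X : ℂ⟦X⟧) ^ d) ^ i - C z) =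
      C ((-z) ^ (N + 1)) * C (1 - z⁻¹) *
        ∏ i ∈ Finset.range N, (1 - C z⁻¹ * (X ^ d) ^ (i + 1)) := by
    have hzz : C z * C z⁻¹ = (1 : ℂ⟦X⟧) := by rw [← map_mul, mul_inv_cancel₀ hz, map_one]
    have : ∀ i, ((X : ℂ⟦X⟧) ^ d) ^ (i + 1) - C z = -C z * (1 - C z⁻¹ * (X ^ d) ^ (i + 1)) := by
      intro i
      linear_combination -(X ^ d) ^ (i + 1) * hzz
    rw [Finset.prod_range_succ', pow_zero, Finset.prod_congr rfl fun i _ => this i,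
      Finset.prod_mul_distrib, Finset.prod_const, Finset.card_range]
    simp only [map_pow, map_neg, map_sub, map_one]
    linear_combination (-(-C z) ^ N * ∏ i ∈ Finset.range N, (1 - C z⁻¹ * (X ^ d) ^ (i + 1))) * hzz
  rw [h3] at h2
  simp only [map_mul π] at h2
  rw [← hP z⁻¹ N (by omega), ← hP z (N + 1) (by omega)] at h2
  have hu2 : IsUnit (π (C ((-z) ^ (N + 1)))) :=
    ((isUnit_iff_ne_zero.mpr (pow_ne_zero _ hnz)).map (C (R := ℂ))).map π
  apply hu2.mul_left_cancel
  rw [h2]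
  simp only [map_mul π]
  ring

/-! ### Winquist's identity -/

/-- The series `∑ z ^ (2 n) X ^ (n ^ 2)`. -/
noncomputable def thE (z : ℂ) : ℂ⟦X⟧ := thS (fun n : ℤ => z ^ (2 * n)) (fun n => 2 * n ^ 2)

/-- The series `∑ z ^ (2 n) X ^ (n ^ 2 + n)`. -/
noncomputable def thO (z : ℂ) : ℂ⟦X⟧ := thS (fun n : ℤ => z ^ (2 * n)) (fun n => 2 * (n ^ 2 + n))

/-- The series `∑ (-1) ^ n z ^ (3 n) X ^ (3 n (n + 1) / 2)`. -/
noncomputable def thT (z : ℂ) : ℂ⟦X⟧ :=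
  thS (fun n : ℤ => (-1) ^ n * z ^ (3 * n)) (fun n => 3 * (n * (n + 1)))

/-- The series `∑ (-1) ^ n (z ^ (3 n) - z ^ (-3 n - 1)) X ^ (n (3 n + 1) / 2)`. -/
noncomputable def thP (z : ℂ) : ℂ⟦X⟧ :=
  thS (fun n : ℤ => (-1) ^ n * (z ^ (3 * n) - z ^ (-3 * n - 1))) (fun n => n * (3 * n + 1))

/-- The series `∑ X ^ (3 n ^ 2 + s n + c)`. -/
noncomputable def thC (s c : ℤ) : ℂ⟦X⟧ := thS (fun _ : ℤ => 1) (fun n => 2 * (3 * n ^ 2 + s * n + c))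

lemma good_E : Good fun n : ℤ => 2 * n ^ 2 :=
  Good.of_sq (fun _ => dvd_mul_right _ _) (fun n => by positivity) fun n => by nlinarith

lemma good_O : Good fun n : ℤ => 2 * (n ^ 2 + n) := by
  refine Good.of_sq (fun _ => dvd_mul_right _ _) (fun n => ?_) fun n => ?_
  · have := mul_succ_nonneg n; linarith
  · nlinarith [sq_nonneg (3 * n + 2), mul_succ_nonneg n]

lemma good_T : Good fun n : ℤ => 3 * (n * (n + 1)) :=
  good_theta (d := 3) (by norm_num)

lemma good_P : Good fun n : ℤ => n * (3 * n + 1) := by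
  refine Good.of_sq (fun n => ?_) (fun n => ?_) fun n => ?_
  · have h := two_dvd_mul_succ n
    rw [show n * (3 * n + 1) = n * (n + 1) + 2 * n ^ 2 by ring]
    exact dvd_add h (dvd_mul_right _ _)
  · nlinarith [mul_succ_nonneg n, sq_nonneg n]
  · nlinarith [mul_succ_nonneg n, sq_nonneg n]

lemma good_C {s c : ℤ} (h : ∀ n : ℤ, 0 ≤ 2 * n ^ 2 + s * n + c) :
    Good fun n : ℤ => 2 * (3 * n ^ 2 + s * n + c) :=
  Good.of_sq (fun _ => dvd_mul_right _ _) (fun n => by nlinarith [h n, sq_nonneg n])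
    fun n => by nlinarith [h n, sq_nonneg n]

lemma good_C1 : Good fun n : ℤ => 2 * (3 * n ^ 2 + (-1) * n + 0) :=
  good_C fun n => by nlinarith [Int.le_self_sq n, sq_nonneg n]

lemma good_C3 : Good fun n : ℤ => 2 * (3 * n ^ 2 + (-3) * n + 1) :=
  good_C fun n => by nlinarith [mul_succ_nonneg (n - 1), sq_nonneg (n - 1)]

lemma good_C0 : Good fun n : ℤ => 2 * (3 * n ^ 2 + 0 * n + 0) :=
  good_C fun n => by nlinarith [sq_nonneg n]

lemma good_C2 : Good fun n : ℤ => 2 * (3 * n ^ 2 + 2 * n + 0) :=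
  good_C fun n => by nlinarith [mul_succ_nonneg n]

/-- The coordinates `(ε, u, v) ↦ (u + v, u - v - ε)` on `ℤ × ℤ`. -/
def eqv2 : Fin 2 × (ℤ × ℤ) ≃ ℤ × ℤ where
  toFun x := (x.2.1 + x.2.2, x.2.1 - x.2.2 - x.1.val)
  invFun y := (⟨((y.1 - y.2) % 2).toNat, by omega⟩,
    (y.1 - (y.1 - y.2) / 2, (y.1 - y.2) / 2))
  left_inv := by
    rintro ⟨⟨r, hr⟩, u, v⟩
    simp only [Prod.mk.injEq, Fin.mk.injEq]
    omega
  right_inv := by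
    rintro ⟨m, n⟩
    simp only [Prod.mk.injEq]
    omega

/-- The coordinates `(r, n, t) ↦ (t + r - 1 - 2 n, t + n)` on `ℤ × ℤ`. -/
def eqv3 : Fin 3 × (ℤ × ℤ) ≃ ℤ × ℤ where
  toFun x := (x.2.2 + (x.1.val - 1) - 2 * x.2.1, x.2.2 + x.2.1)
  invFun y := (⟨((y.1 + 2 * y.2 + 1) % 3).toNat, by omega⟩,
    (y.2 - (y.1 + 2 * y.2 + 1) / 3, (y.1 + 2 * y.2 + 1) / 3))
  left_inv := by
    rintro ⟨⟨r, hr⟩, u, v⟩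
    simp only [Prod.mk.injEq, Fin.mk.injEq]
    omega
  right_inv := by
    rintro ⟨m, n⟩
    simp only [Prod.mk.injEq]
    omega

lemma neg_zpow_of_even {z : ℂ} (m s : ℤ) (h : Even (m - s)) :
    (-z) ^ m = (-1) ^ s * z ^ m := by
  rw [← neg_one_mul, mul_zpow]
  congr 1
  rw [show m = (m - s) + s by ring, zpow_add₀ (by norm_num), h.neg_one_zpow, one_mul]

lemma thS_congr {ι : Type*} {w v : ι → ℂ} {k l : ι → ℤ} (h : ∀ i, w i = v i) (h' : ∀ i, k i = l i) :
    thS w k = thS v l := by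
  rw [funext h, funext h']

lemma neg_C_mul (c : ℂ) (f : ℂ⟦X⟧) : -(C c * f) = C (-c) * f := by rw [map_neg, neg_mul]

lemma good_theta1 : Good (fun n : ℤ => ((1 : ℕ) : ℤ) * (n * (n + 1))) := good_theta one_pos

lemma neg_zpow_mul_neg_zpow {a b : ℂ} (ha : a ≠ 0) (hb : b ≠ 0) (m n : ℤ) :
    (-(a * b)) ^ m * (-(a / b)) ^ n = (-1) ^ (m + n) * a ^ (m + n) * b ^ (m - n) := by
  rw [← neg_one_mul (a * b), ← neg_one_mul (a / b), mul_zpow, mul_zpow, mul_zpow, div_zpow,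
    zpow_add₀ (by norm_num), zpow_add₀ ha, zpow_sub₀ hb]
  ring

/-- Splitting of `ℤ × ℤ` by the parity of `m + n`. -/
lemma theta_mul_theta {a b : ℂ} (ha : a ≠ 0) (hb : b ≠ 0) :
    theta (a * b) 1 * theta (a / b) 1 = thO a * thE b - C (b / a) * (thE a * thO b) := by
  rw [theta, theta, thS_mul good_theta1 good_theta1, thS_split (good_theta1.prod good_theta1) _ eqv2,
    Fin.sum_univ_two, thO, thE, thS_mul good_O good_E, thE, thO, thS_mul good_E good_O,
    sub_eq_add_neg, neg_C_mul, ← thS_const_mul (good_E.prod good_O)]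
  congr 1
  · refine thS_congr ?_ ?_
    · rintro ⟨u, v⟩
      simp only [eqv2, Equiv.coe_fn_mk, Fin.val_zero]
      rw [neg_zpow_mul_neg_zpow ha hb, (show Even (u + v + (u - v - ((0 : ℕ) : ℤ))) from
        ⟨u, by push_cast; ring⟩).neg_one_zpow, one_mul]
      congr 2 <;> push_cast <;> ring
    · rintro ⟨u, v⟩
      simp only [eqv2, Equiv.coe_fn_mk, Fin.val_zero]
      push_cast; ring
  · refine thS_congr ?_ ?_
    · rintro ⟨u, v⟩
      simp only [eqv2, Equiv.coe_fn_mk, Fin.val_one]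
      rw [neg_zpow_mul_neg_zpow ha hb, (show Odd (u + v + (u - v - ((1 : ℕ) : ℤ))) from
        ⟨u - 1, by push_cast; ring⟩).neg_one_zpow,
        show u + v + (u - v - ((1 : ℕ) : ℤ)) = 2 * u - 1 by push_cast; ring,
        show u + v - (u - v - ((1 : ℕ) : ℤ)) = 2 * v + 1 by push_cast; ring,
        zpow_sub_one₀ ha, zpow_add_one₀ hb]
      ring
    · rintro ⟨u, v⟩
      simp only [eqv2, Equiv.coe_fn_mk, Fin.val_one]
      push_cast; ring

/-- `thP` in terms of two lattice sums over all of `ℤ × ℤ`. -/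
lemma thC_mul_thP {s c : ℤ} (hC : Good fun n : ℤ => 2 * (3 * n ^ 2 + s * n + c)) (z : ℂ) :
    thC s c * thP z =
      thS (fun p : ℤ × ℤ => (-1) ^ p.2 * z ^ (3 * p.2))
        (fun p => 2 * (3 * p.1 ^ 2 + s * p.1 + c) + p.2 * (3 * p.2 + 1)) +
      thS (fun p : ℤ × ℤ => -((-1) ^ p.2 * z ^ (-3 * p.2 - 1)))
        (fun p => 2 * (3 * p.1 ^ 2 + s * p.1 + c) + p.2 * (3 * p.2 + 1)) := by
  rw [thC, thP, thS_mul hC good_P, ← thS_add (hC.prod good_P)]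
  refine thS_congr (fun p => ?_) fun p => rfl
  ring

/-- The weights of `theta z 1 * thE z` and `theta z 1 * thO z` in the coordinates `eqv3`. -/
lemma eqv3_weight {z : ℂ} (hz : z ≠ 0) (n t : ℤ) {r s : ℤ} (h : Even (r + t - s)) :
    (-z) ^ (t + r - 2 * n) * z ^ (2 * (t + n)) = (-1) ^ s * z ^ (3 * t + r) := by
  rw [neg_zpow_of_even _ s (by
    rw [show t + r - 2 * n - s = (r + t - s) + 2 * (-n) by ring]
    exact h.add (even_two_mul _)), mul_assoc, ← zpow_add₀ hz]
  congr 2; ring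

/-- Splitting of `ℤ × ℤ` by the residue of `m + 2 n` modulo `3`; two of the three classes combine to
`thP z`. -/
lemma theta_mul_thE {z : ℂ} (hz : z ≠ 0) :
    theta z 1 * thE z = thC (-1) 0 * thP z - C z * (thC (-3) 1 * thT z) := by
  rw [thC_mul_thP good_C1, theta, thE, thS_mul good_theta1 good_E,
    thS_split (good_theta1.prod good_E) _ eqv3, Fin.sum_univ_three, thC, thT,
    thS_mul good_C3 good_T, sub_eq_add_neg, neg_C_mul,
    ← thS_const_mul (good_C3.prod good_T), add_comm (thS _ _) (thS _ _)]
  congr 1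
  · congr 1
    · refine thS_congr ?_ ?_
      · rintro ⟨n, t⟩
        simp only [eqv3, Equiv.coe_fn_mk, Fin.val_one]
        rw [eqv3_weight hz n t (s := t) (by simp)]
        simp
      · rintro ⟨n, t⟩
        simp only [eqv3, Equiv.coe_fn_mk, Fin.val_one]
        push_cast; ring
    · rw [thS_equiv ((Equiv.neg ℤ).prodCongr (Equiv.neg ℤ))]
      refine thS_congr ?_ ?_
      · rintro ⟨n, t⟩
        simp only [eqv3, Equiv.coe_fn_mk, Fin.val_zero, Equiv.prodCongr_apply, Prod.map,
          Equiv.neg_apply]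
        rw [eqv3_weight hz (-n) (-t) (s := t + 1) ⟨-t - 1, by push_cast; ring⟩,
          zpow_add_one₀ (by norm_num), show 3 * -t + (((0 : ℕ) : ℤ) - 1) = -3 * t - 1 by
            push_cast; ring]
        ring
      · rintro ⟨n, t⟩
        simp only [eqv3, Equiv.coe_fn_mk, Fin.val_zero, Equiv.prodCongr_apply, Prod.map,
          Equiv.neg_apply]
        push_cast; ring
  · refine thS_congr ?_ ?_
    · rintro ⟨n, t⟩
      simp only [eqv3, Equiv.coe_fn_mk, Fin.val_two]
      rw [eqv3_weight hz n t (s := t + 1) ⟨0, by push_cast; ring⟩, zpow_add_one₀ (by norm_num),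
        show 3 * t + (((2 : ℕ) : ℤ) - 1) = 3 * t + 1 by push_cast; ring, zpow_add_one₀ hz]
      ring
    · rintro ⟨n, t⟩
      simp only [eqv3, Equiv.coe_fn_mk, Fin.val_two]
      push_cast; ring

/-- The analogue of `theta_mul_thE` with `thO` in place of `thE`. -/
lemma theta_mul_thO {z : ℂ} (hz : z ≠ 0) :
    theta z 1 * thO z = thC 0 0 * thT z - C z⁻¹ * (thC 2 0 * thP z) := by
  rw [thC_mul_thP good_C2, theta, thO, thS_mul good_theta1 good_O,
    thS_split (good_theta1.prod good_O) _ eqv3, Fin.sum_univ_three, thC, thT,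
    thS_mul good_C0 good_T, sub_eq_add_neg, neg_C_mul, mul_add,
    ← thS_const_mul (good_C2.prod good_P), ← thS_const_mul (good_C2.prod good_P),
    add_comm (thS _ _) (thS _ _), add_assoc]
  congr 1
  · refine thS_congr ?_ ?_
    · rintro ⟨n, t⟩
      simp only [eqv3, Equiv.coe_fn_mk, Fin.val_one]
      rw [eqv3_weight hz n t (s := t) (by simp)]
      simp
    · rintro ⟨n, t⟩
      simp only [eqv3, Equiv.coe_fn_mk, Fin.val_one]
      push_cast; ring
  · congr 1
    · refine thS_congr ?_ ?_
      · rintro ⟨n, t⟩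
        simp only [eqv3, Equiv.coe_fn_mk, Fin.val_zero]
        rw [eqv3_weight hz n t (s := t - 1) ⟨0, by push_cast; ring⟩, zpow_sub_one₀ (by norm_num),
          show 3 * t + (((0 : ℕ) : ℤ) - 1) = 3 * t - 1 by push_cast; ring, zpow_sub_one₀ hz]
        ring
      · rintro ⟨n, t⟩
        simp only [eqv3, Equiv.coe_fn_mk, Fin.val_zero]
        push_cast; ring
    · rw [thS_equiv ((Equiv.neg ℤ).prodCongr (Equiv.subLeft (-1 : ℤ)))]
      refine thS_congr ?_ ?_
      · rintro ⟨n, t⟩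
        simp only [eqv3, Equiv.coe_fn_mk, Fin.val_two, Equiv.prodCongr_apply, Prod.map,
          Equiv.neg_apply, Equiv.subLeft_apply]
        rw [eqv3_weight hz (-n) (-1 - t) (s := t) ⟨-t, by push_cast; ring⟩,
          show 3 * (-1 - t) + (((2 : ℕ) : ℤ) - 1) = -3 * t - 1 - 1 by push_cast; ring,
          zpow_sub_one₀ hz]
        ring
      · rintro ⟨n, t⟩
        simp only [eqv3, Equiv.coe_fn_mk, Fin.val_two, Equiv.prodCongr_apply, Prod.map,
          Equiv.neg_apply, Equiv.subLeft_apply]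
        push_cast; ring

/-- Winquist's identity, up to a series that does not depend on `a` and `b`. -/
lemma theta_four {a b : ℂ} (ha : a ≠ 0) (hb : b ≠ 0) :
    theta a 1 * theta b 1 * (theta (a * b) 1 * theta (a / b) 1) =
      (thC 0 0 * thC (-1) 0 - thC (-3) 1 * thC 2 0) *
        (thT a * thP b - C (b / a) * (thP a * thT b)) := by
  have hab : (C (b / a) : ℂ⟦X⟧) = C b * C a⁻¹ := by rw [← map_mul, div_eq_mul_inv]
  have h1 : (C a * C a⁻¹ : ℂ⟦X⟧) = 1 := by rw [← map_mul, mul_inv_cancel₀ ha, map_one]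
  have h2 : (C b * C b⁻¹ : ℂ⟦X⟧) = 1 := by rw [← map_mul, mul_inv_cancel₀ hb, map_one]
  have hEa := theta_mul_thE ha
  have hOa := theta_mul_thO ha
  have hEb := theta_mul_thE hb
  have hOb := theta_mul_thO hb
  calc _ = (theta a 1 * thO a) * (theta b 1 * thE b) -
        C (b / a) * ((theta a 1 * thE a) * (theta b 1 * thO b)) := by
        rw [theta_mul_theta ha hb]; ring
    _ = _ := by
      rw [hEa, hOa, hEb, hOb, hab]
      linear_combination (C b * thC (-3) 1 * thC 0 0 * thT a * thT b -
          C b * C b⁻¹ * thC (-3) 1 * thC 2 0 * thT a * thP b) * h1 +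
        (C a⁻¹ * thC (-1) 0 * thC 2 0 * thP a * thP b -
          thC (-3) 1 * thC 2 0 * thT a * thP b) * h2

lemma prod_one_sub_root_mul {ζ : ℂ} {d : ℕ} (hd : 0 < d) (hζ : IsPrimitiveRoot ζ d) (x : ℂ⟦X⟧) :
    ∏ j ∈ Finset.range d, (1 - C (ζ ^ j) * x) = 1 - x ^ d := by
  have h := hζ.map_of_injective (f := C (R := ℂ)) PowerSeries.C_injective
  rw [← one_pow d, h.pow_sub_pow_eq_prod_sub_mul 1 x hd, one_pow]
  refine Finset.prod_nbij (fun j => C ζ ^ j) ?_ ?_ ?_ ?_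
  · intro j _
    rw [Polynomial.mem_nthRootsFinset hd, ← pow_mul, mul_comm, pow_mul, h.pow_eq_one, one_pow]
  · intro i hi j hj hij
    exact h.pow_inj (by simpa using hi) (by simpa using hj) hij
  · intro y hy
    rw [Finset.mem_coe, Polynomial.mem_nthRootsFinset hd] at hy
    have : NeZero d := ⟨hd.ne'⟩
    obtain ⟨i, hi, rfl⟩ := h.eq_pow_of_pow_eq_one hy
    exact ⟨i, by simpa using hi, rfl⟩
  · intro j _
    simp

/-- Multiplying `eP` over all rotations of its argument by `d`-th roots of unity. -/
lemma prod_eP {ζ : ℂ} {d : ℕ} (hd : 0 < d) (hζ : IsPrimitiveRoot ζ d) (c : ℂ) :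
    ∏ j ∈ Finset.range d, eP (c * ζ ^ j) 1 = eP (c ^ d) d := by
  unfold eP
  rw [← Multipliable.tprod_finsetProd fun j _ => eP_mult (c * ζ ^ j) one_pos]
  refine tprod_congr fun n => ?_
  have := prod_one_sub_root_mul hd hζ (C c * X ^ (n + 1))
  rw [mul_pow, ← pow_mul, ← map_pow, mul_comm (n + 1)] at this
  rw [← this]
  refine Finset.prod_congr rfl fun j _ => ?_
  rw [map_mul, one_mul]; ring

/-- Euler's pentagonal number theorem. -/
lemma pentagonal_thS : thS (fun n : ℤ => (-1) ^ n) (fun n => n * (3 * n + 1)) = eP 1 1 := by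
  have h := PowerSeries.WithPiTopology.tprod_one_sub_X_pow ℂ
  rw [PowerSeries.WithPiTopology.pentagonalSeries_eq_tsum, ← (Equiv.neg ℤ).tsum_eq] at h
  rw [eP, thS]
  simp only [map_one, one_mul]
  rw [h]
  refine tsum_congr fun n => ?_
  have := two_mul_natCast_pentagonal_neg n
  rw [mon, Equiv.neg_apply, Int.negOnePow_neg]
  congr 1
  · rcases Int.even_or_odd n with h | h
    · rw [h.neg_one_zpow, Int.negOnePow_even n h]; simp
    · rw [h.neg_one_zpow, Int.negOnePow_odd n h]; simp
  · congr 1; omega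

/-- The series independent of `a` and `b` in `theta_four`, found by specializing to `a = -1` and `b`
a primitive cube root of unity, where `thT b` vanishes. -/
lemma thC_combination : thC 0 0 * thC (-1) 0 - thC (-3) 1 * thC 2 0 = eP 1 1 ^ 2 := by
  obtain ⟨ω, hω⟩ : ∃ ω : ℂ, IsPrimitiveRoot ω 3 :=
    ⟨_, Complex.isPrimitiveRoot_exp 3 (by norm_num)⟩
  have hω3 : ω ^ 3 = 1 := hω.pow_eq_one
  have hω0 : ω ≠ 0 := hω.ne_zero (by norm_num)
  have hωi : ω⁻¹ = ω ^ 2 := inv_eq_of_mul_eq_one_right (by rw [← hω3]; ring)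
  have hω1 : ω ≠ 1 := hω.ne_one (by norm_num)
  have hsum : 1 + ω + ω ^ 2 = 0 := by
    have : (ω - 1) * (1 + ω + ω ^ 2) = 0 := by linear_combination hω3
    exact (mul_eq_zero.mp this).resolve_left (sub_ne_zero.mpr hω1)
  have hz3 : ∀ n : ℤ, ω ^ (3 * n) = 1 := fun n => by
    rw [zpow_mul]; norm_cast; rw [hω3, one_zpow]
  have hP : thP ω = C (1 - ω ^ 2) * eP 1 1 := by
    rw [← pentagonal_thS, ← thS_const_mul good_P, thP]
    refine thS_congr (fun n => ?_) fun n => rfl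
    rw [hz3, zpow_sub_one₀ hω0, neg_mul, ← mul_neg, hz3, hωi]
    ring
  have hT0 : thT ω = 0 := by
    have h1 : thT ω = - thT ω := by
      conv_lhs => rw [thT, thS_equiv (Equiv.subLeft (-1 : ℤ))]
      rw [← neg_one_mul (thT ω), show (-1 : ℂ⟦X⟧) = C (-1) by simp, thT, ← thS_const_mul good_T]
      refine thS_congr (fun n => ?_) fun n => ?_
      · rw [Equiv.subLeft_apply, hz3, hz3, zpow_sub₀ (by norm_num)]
        rcases Int.even_or_odd n with h | h <;> simp [h.neg_one_zpow]
      · rw [Equiv.subLeft_apply]; ring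
    ext n
    exact self_eq_neg.mp (by simpa using congrArg (coeff n) h1)
  have hT1 : thT (-1) = theta (-1) 3 := by
    rw [thT, theta]
    refine thS_congr (fun n => ?_) fun n => by push_cast; rfl
    rw [← zpow_add₀ (by norm_num), (show Even (n + 3 * n) from ⟨2 * n, by ring⟩).neg_one_zpow]
    simp
  have key := theta_four (a := -1) (b := ω) (by norm_num) hω0
  have e1 := prod_eP (by norm_num) hω 1
  have e2 := prod_eP (by norm_num) hω (-1)
  simp only [Finset.prod_range_succ, Finset.prod_range_zero] at e1 e2
  norm_num at e1 e2
  rw [hT0, hT1, hP, jacobi_triple (by norm_num) one_pos, jacobi_triple hω0 one_pos,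
    jacobi_triple (mul_ne_zero (by norm_num) hω0) one_pos,
    jacobi_triple (div_ne_zero (by norm_num) hω0) one_pos,
    jacobi_triple (by norm_num) (by norm_num : 0 < 3)] at key
  have i1 : (-1 * ω)⁻¹ = - ω ^ 2 := by rw [neg_one_mul, inv_neg, hωi]
  have i2 : (-1 / ω)⁻¹ = - ω := by rw [inv_div, div_neg, div_one]
  have i3 : (-1 / ω) = - ω ^ 2 := by rw [neg_div, one_div, hωi]
  rw [i2, i3, i1, hωi, neg_one_mul, mul_zero, mul_zero, sub_zero, inv_neg, inv_one] at key
  have hc : (C (1 - -ω ^ 2) * C (1 - -ω) : ℂ⟦X⟧) = 1 := by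
    rw [← map_mul, show (1 - -ω ^ 2) * (1 - -ω) = 1 by linear_combination hsum + hω3, map_one]
  have hne : ∀ z : ℂ, eP z 1 ≠ 0 := fun z => (eP_unit z one_pos).ne_zero
  have hC : ∀ c : ℂ, c ≠ 0 → (C c : ℂ⟦X⟧) ≠ 0 := fun c hc => by simpa using hc
  have hω2 : ω ^ 2 ≠ 1 := hω.pow_ne_one_of_pos_of_lt (by norm_num) (by norm_num)
  set K := C (1 - -1) * C (1 - ω ^ 2) * (eP 1 1 ^ 2 * eP ω 1 * eP (ω ^ 2) 1 * eP (-1) 1 ^ 2 *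
    eP (-ω) 1 ^ 2 * eP (-ω ^ 2) 1 ^ 2) with hKdef
  have hK : K ≠ 0 := by
    refine mul_ne_zero (mul_ne_zero (hC _ (by norm_num)) (hC _ (sub_ne_zero.mpr hω2.symm))) ?_
    simp only [ne_eq, mul_eq_zero, pow_eq_zero_iff, OfNat.ofNat_ne_zero, not_false_eq_true, hne,
      or_self]
  apply mul_right_cancel₀ hK
  rw [← e1, ← e2] at key
  rw [hKdef]
  linear_combination eP 1 1 ^ 2 * K * hc - key

/-- Winquist's identity. -/
lemma winquist {a b : ℂ} (ha : a ≠ 0) (hb : b ≠ 0) :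
    theta a 1 * theta b 1 * (theta (a * b) 1 * theta (a / b) 1) =
      eP 1 1 ^ 2 * (thT a * thP b - C (b / a) * (thP a * thT b)) := by
  rw [theta_four ha hb, thC_combination]

/-! ### Vanishing of coefficients modulo 11 -/

/-- Since `-1` is not a square modulo `11`, the exponents `≡ 6` only arise from terms of `thP` whose
weight is zero. -/
lemma coeff_thT_mul_thP (a : ℂ) {b : ℂ} (hb : b ^ 11 = 1) (N : ℕ) :
    coeff (11 * N + 6) (thT a * thP b) = 0 := by
  rw [thT, thP, thS_mul good_T good_P]
  refine coeff_thS_eq_zero (good_T.prod good_P) _ _ ?_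
  rintro ⟨m, n⟩ h
  have hb0 : b ≠ 0 := by rintro rfl; norm_num at hb
  -- `3 m (m + 1) + n (3 n + 1) = 1` is `(6 m + 3) ^ 2 + (6 n + 1) ^ 2 = 0` up to a unit
  have key : ∀ x y : ZMod 11, 3 * (x * (x + 1)) + y * (3 * y + 1) = 1 → 6 * y + 1 = 0 := by decide
  have h1 : ((6 * n + 1 : ℤ) : ZMod 11) = 0 := by
    push_cast
    apply key m n
    have h11 : (11 : ZMod 11) = 0 := by decide
    have := congrArg (Int.cast : ℤ → ZMod 11) h
    push_cast at this
    rw [this]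
    linear_combination (2 * (N : ZMod 11) + 1) * h11
  obtain ⟨c, hc⟩ := (ZMod.intCast_zmod_eq_zero_iff_dvd _ 11).mp h1
  have : b ^ (3 * n) = b ^ (-3 * n - 1) := by
    rw [show 3 * n = (-3 * n - 1) + 11 * c by push_cast at hc; linarith, zpow_add₀ hb0, zpow_mul b 11]
    norm_cast
    rw [hb, one_zpow, mul_one]
  simp only [this, sub_self, mul_zero]

/-- The product over the residues `2, …, 9` modulo `11` that Winquist's identity expands. -/
lemma coeff_eight {ζ : ℂ} (hζ : IsPrimitiveRoot ζ 11) (N : ℕ) :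
    coeff (11 * N + 6) (eP 1 1 ^ 2 * (eP (ζ ^ 2) 1 * eP (ζ ^ 3) 1 * eP (ζ ^ 4) 1 * eP (ζ ^ 5) 1 *
      eP (ζ ^ 6) 1 * eP (ζ ^ 7) 1 * eP (ζ ^ 8) 1 * eP (ζ ^ 9) 1)) = 0 := by
  have h11 : ζ ^ 11 = 1 := hζ.pow_eq_one
  have h0 : ζ ≠ 0 := hζ.ne_zero (by norm_num)
  have hinv : ∀ i j : ℕ, i + j = 11 → (ζ ^ i)⁻¹ = ζ ^ j := fun i j h =>
    inv_eq_of_mul_eq_one_right (by rw [← pow_add, h, h11])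
  have hp : ∀ j : ℕ, (ζ ^ j) ^ 11 = 1 := fun j => by rw [← pow_mul, mul_comm, pow_mul, h11, one_pow]
  have hw := winquist (pow_ne_zero 5 h0) (pow_ne_zero 2 h0)
  have hd : ζ ^ 5 / ζ ^ 2 = ζ ^ 3 := by field_simp
  rw [hd, ← pow_add, jacobi_triple (pow_ne_zero _ h0) one_pos,
    jacobi_triple (pow_ne_zero _ h0) one_pos, jacobi_triple (pow_ne_zero _ h0) one_pos,
    jacobi_triple (pow_ne_zero _ h0) one_pos, hinv 5 6 rfl, hinv 2 9 rfl, hinv (5 + 2) 4 rfl,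
    hinv 3 8 rfl] at hw
  set c := (1 - ζ ^ 6) * (1 - ζ ^ 9) * (1 - ζ ^ 4) * (1 - ζ ^ 8) with hc
  have hne : ∀ j : ℕ, 0 < j → j < 11 → 1 - ζ ^ j ≠ 0 := fun j h h' =>
    sub_ne_zero.mpr (hζ.pow_ne_one_of_pos_of_lt h.ne' h').symm
  have hc0 : c ≠ 0 := mul_ne_zero (mul_ne_zero (mul_ne_zero (hne _ (by norm_num) (by norm_num))
    (hne _ (by norm_num) (by norm_num))) (hne _ (by norm_num) (by norm_num)))
    (hne _ (by norm_num) (by norm_num))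
  have hu : eP 1 1 ^ 2 ≠ 0 := pow_ne_zero _ (eP_unit 1 one_pos).ne_zero
  have : C c * (eP 1 1 ^ 2 * (eP (ζ ^ 2) 1 * eP (ζ ^ 3) 1 * eP (ζ ^ 4) 1 * eP (ζ ^ 5) 1 *
      eP (ζ ^ 6) 1 * eP (ζ ^ 7) 1 * eP (ζ ^ 8) 1 * eP (ζ ^ 9) 1)) =
      thT (ζ ^ 5) * thP (ζ ^ 2) - C (ζ ^ 2 / ζ ^ 5) * (thP (ζ ^ 5) * thT (ζ ^ 2)) := by
    apply mul_left_cancel₀ hu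
    rw [← hw, hc]
    simp only [map_mul]
    ring
  have h2 := congrArg (coeff (11 * N + 6)) this
  rw [map_sub, coeff_C_mul, coeff_C_mul, mul_comm (thP _) (thT _), coeff_thT_mul_thP _ (hp _),
    coeff_thT_mul_thP _ (hp _), mul_zero, sub_zero] at h2
  exact (mul_eq_zero.mp h2).resolve_left hc0

lemma coeff_eP_eleven (n : ℕ) (h : ¬ 11 ∣ n) : coeff n (eP 1 11) = 0 := by
  have h1 := X_pow_dvd_iff.mp (dvd_tprod_sub (eP_dvd 1 (by norm_num : 0 < 11)) (le_refl (n + 1))) n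
    (Nat.lt_succ_self n)
  rw [map_sub, sub_eq_zero] at h1
  rw [eP, h1, map_one]
  generalize n + 1 = M
  clear h1
  simp only [one_mul]
  induction M generalizing n with
  | zero =>
    rw [Finset.prod_range_zero, coeff_one, if_neg]
    rintro rfl; simp at h
  | succ M ih =>
    rw [Finset.prod_range_succ, mul_sub, mul_one, map_sub, ih n h,
      coeff_mul_X_pow']
    split_ifs with h2
    · rw [ih _ (by omega), sub_zero]
    · simp

/-- The crank generating function at a primitive `11`-th root of unity has no terms `X ^ n` with
`n ≡ 6` modulo `11`. -/
lemma coeff_crank_series {ζ : ℂ} (hζ : IsPrimitiveRoot ζ 11) {F : ℂ⟦X⟧}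
    (hF : F * (eP ζ 1 * eP ζ⁻¹ 1) = eP 1 1) (N : ℕ) : coeff (11 * N + 6) F = 0 := by
  have h11 : ζ ^ 11 = 1 := hζ.pow_eq_one
  have hinv : ζ⁻¹ = ζ ^ 10 := inv_eq_of_mul_eq_one_right (by rw [← pow_succ', h11])
  have hprod := prod_eP (by norm_num) hζ 1
  simp only [Finset.prod_range_succ, Finset.prod_range_zero, one_mul, pow_zero, pow_one,
    one_pow] at hprod
  have hG : F * eP 1 11 = eP 1 1 ^ 2 * (eP (ζ ^ 2) 1 * eP (ζ ^ 3) 1 * eP (ζ ^ 4) 1 *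
      eP (ζ ^ 5) 1 * eP (ζ ^ 6) 1 * eP (ζ ^ 7) 1 * eP (ζ ^ 8) 1 * eP (ζ ^ 9) 1) := by
    rw [← hprod]
    rw [hinv] at hF
    linear_combination eP 1 1 * (eP (ζ ^ 2) 1 * eP (ζ ^ 3) 1 * eP (ζ ^ 4) 1 *
      eP (ζ ^ 5) 1 * eP (ζ ^ 6) 1 * eP (ζ ^ 7) 1 * eP (ζ ^ 8) 1 * eP (ζ ^ 9) 1) * hF
  induction N using Nat.strong_induction_on with
  | _ N ih =>
    have h := coeff_eight hζ N
    rw [← hG, coeff_mul, Finset.sum_eq_single (11 * N + 6, 0)] at h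
    · refine (mul_eq_zero.mp h).resolve_right ?_
      have := (PowerSeries.isUnit_iff_constantCoeff.mp (eP_unit 1 (by norm_num : 0 < 11))).ne_zero
      simpa using this
    · rintro ⟨i, j⟩ hij hne
      rw [Finset.HasAntidiagonal.mem_antidiagonal] at hij
      simp only at hij ⊢
      by_cases hj : 11 ∣ j
      · obtain ⟨l, rfl⟩ := hj
        have : l ≠ 0 := by
          rintro rfl
          exact hne (by simpa using hij)
        rw [show i = 11 * (N - l) + 6 by omega, ih _ (by omega), zero_mul]
      · rw [coeff_eP_eleven j hj, mul_zero]
    · intro h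
      simp at h

/-! ### Generating functions of partitions with prescribed number of ones -/

lemma eq_of_forall_dvd {f g : ℂ⟦X⟧} (h : ∀ n : ℕ, X ^ n ∣ f - g) : f = g := by
  rw [← sub_eq_zero]
  ext n
  exact X_pow_dvd_iff.mp (h (n + 1)) n (Nat.lt_succ_self n)

/-- Two infinite products whose factors agree from the `j`-th on differ by their first `j`
factors. -/
lemma tprod_mul_prod_comm {f g : ℕ → ℂ⟦X⟧} (hf : ∀ i, X ^ (i + 1) ∣ f i - 1)
    (hg : ∀ i, X ^ (i + 1) ∣ g i - 1) (j : ℕ) (h : ∀ i, j ≤ i → f i = g i) :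
    (∏' i, f i) * ∏ i ∈ Finset.range j, g i = (∏' i, g i) * ∏ i ∈ Finset.range j, f i := by
  refine eq_of_forall_dvd fun n => ?_
  have h1 := dvd_tprod_sub hf (Nat.le_add_left n j)
  have h2 := dvd_tprod_sub hg (Nat.le_add_left n j)
  have h3 : (∏ i ∈ Finset.range (j + n), f i) * ∏ i ∈ Finset.range j, g i =
      (∏ i ∈ Finset.range (j + n), g i) * ∏ i ∈ Finset.range j, f i := by
    rw [Finset.prod_range_add, Finset.prod_range_add,
      Finset.prod_congr rfl fun i _ => h (j + i) (Nat.le_add_right j i)]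
    ring
  have h4 := dvd_sub (h1.mul_right (∏ i ∈ Finset.range j, g i))
    (h2.mul_right (∏ i ∈ Finset.range j, f i))
  convert h4 using 1
  linear_combination h3

/-- The character counting partitions with `c` ones (or none), the other parts `i` carrying the
weight `a i`. -/
noncomputable def onesChar (a : ℕ → ℂ) (c i m : ℕ) : ℂ :=
  if i = 1 then (if m = c then 1 else 0) else a i ^ m

/-- The factors of the reciprocal of the generating function of partitions without ones. -/
noncomputable def noOnesFactor (a : ℕ → ℂ) (i : ℕ) : ℂ⟦X⟧ :=
  1 - C (if i = 0 then 0 else a (i + 1)) * X ^ (i + 1)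

lemma noOnesFactor_dvd (a : ℕ → ℂ) (i : ℕ) : X ^ (i + 1) ∣ noOnesFactor a i - 1 := by
  rw [noOnesFactor, sub_sub_cancel_left]
  exact (dvd_mul_left _ _).neg_right

/-- Partitions with no ones, together (if `c ≠ 0`) with those having exactly `c` ones. -/
lemma genFun_mul_tprod (a : ℕ → ℂ) (c : ℕ) :
    Nat.Partition.genFun (onesChar a c) * ∏' i, noOnesFactor a i =
      1 + if c = 0 then 0 else X ^ c := by
  rw [Nat.Partition.genFun_eq_tprod, ← (Nat.Partition.multipliable_genFun _).tprod_mul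
    (multipliable_of_dvd (noOnesFactor_dvd a)), tprod_eq_mulSingle 0]
  · simp only [noOnesFactor, if_true, map_zero, zero_mul, sub_zero, mul_one, zero_add, one_mul,
      onesChar]
    congr 1
    rcases c with _ | c
    · simp
    · rw [tsum_eq_single c]
      · simp
      · intro m hm
        simp [hm]
  · intro i hi
    set Y : ℂ⟦X⟧ := C (a (i + 1)) * X ^ (i + 1) with hY
    have hf : ∀ m, onesChar a c (i + 1) (m + 1) • (X : ℂ⟦X⟧) ^ ((i + 1) * (m + 1)) = Y ^ (m + 1) := by
      intro m
      rw [onesChar, if_neg (by omega), hY, mul_pow, ← map_pow, pow_mul, smul_eq_C_mul]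
    have hs := Nat.Partition.summable_genFun_term (onesChar a c) i
    simp only [hf] at hs ⊢
    have hs' : Summable fun m => Y ^ m := (summable_nat_add_iff 1).mp hs
    have h1 := hs'.tsum_eq_zero_add
    have h2 : ∑' m, Y ^ (m + 1) = Y * ∑' m, Y ^ m := by
      rw [← hs'.tsum_mul_left]
      exact tsum_congr fun m => pow_succ' _ _
    rw [noOnesFactor, if_neg hi, ← hY]
    rw [h1, pow_zero] at h2
    linear_combination h2

lemma onesChar_prod (a : ℕ → ℂ) (ha : a 1 = 1) (c : ℕ) (s : Multiset ℕ) :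
    s.toFinsupp.prod (onesChar a c) =
      if s.count 1 = 0 ∨ s.count 1 = c then (s.map a).prod else 0 := by
  rw [Finsupp.prod, Multiset.toFinsupp_support, Finset.prod_multiset_map_count]
  simp only [Multiset.toFinsupp_apply, onesChar]
  split_ifs with h
  · refine Finset.prod_congr rfl fun i hi => ?_
    rcases eq_or_ne i 1 with rfl | h1
    · have := Multiset.count_pos.mpr (Multiset.mem_toFinset.mp hi)
      simp [ha, h.resolve_left this.ne']
    · rw [if_neg h1]
  · rw [not_or] at h
    refine Finset.prod_eq_zero (i := 1) ?_ ?_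
    · exact Multiset.mem_toFinset.mpr (Multiset.count_pos.mp (Nat.pos_of_ne_zero h.1))
    · simp [h.2]

/-- The generating function of partitions with exactly `c` ones, in which every part greater than
`j` carries the weight `w`. -/
noncomputable def onesSeries (c j : ℕ) (w : ℂ) : ℂ⟦X⟧ :=
  PowerSeries.mk fun n => ∑ p : n.Partition,
    if p.parts.count 1 = c then (p.parts.map fun i => if j < i then w else 1).prod else 0

lemma onesSeries_mul_tprod (c : ℕ) {j : ℕ} (hj : 1 ≤ j) (w : ℂ) :
    onesSeries c j w * ∏' i, noOnesFactor (fun i => if j < i then w else 1) i = X ^ c := by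
  set a : ℕ → ℂ := fun i => if j < i then w else 1 with ha
  have ha1 : a 1 = 1 := if_neg (by omega)
  have h0 : onesSeries 0 j w = Nat.Partition.genFun (onesChar a 0) := by
    ext n
    rw [onesSeries, coeff_mk, Nat.Partition.coeff_genFun]
    refine Finset.sum_congr rfl fun p _ => ?_
    have := onesChar_prod a ha1 0 p.parts
    simp only [or_self] at this
    exact this.symm
  have e0 := genFun_mul_tprod a 0
  rw [← h0, if_pos rfl, add_zero] at e0
  rcases Nat.eq_zero_or_pos c with rfl | hc
  · rw [e0, pow_zero]
  · have h1 : onesSeries c j w = Nat.Partition.genFun (onesChar a c) - onesSeries 0 j w := by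
      ext n
      rw [map_sub, onesSeries, onesSeries, coeff_mk, coeff_mk, Nat.Partition.coeff_genFun,
        ← Finset.sum_sub_distrib]
      refine Finset.sum_congr rfl fun p _ => ?_
      rw [onesChar_prod a ha1]
      by_cases h2 : p.parts.count 1 = c
      · rw [if_pos h2, if_pos (Or.inr h2), if_neg (by omega), sub_zero]
      · simp only [h2, or_false, if_false]
        exact (sub_self _).symm
    have e1 := genFun_mul_tprod a c
    rw [if_neg hc.ne'] at e1
    rw [h1, sub_mul, e0, e1, add_sub_cancel_left]

/-- The closed form of `onesSeries`, cleared of denominators. -/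
lemma onesSeries_mul (c : ℕ) {j : ℕ} (hj : 1 ≤ j) (w : ℂ) :
    onesSeries c j w * eP w 1 * qfac X j =
      X ^ c * (1 - X) * ∏ i ∈ Finset.range j, (1 - C w * X ^ (i + 1)) := by
  have h1 := onesSeries_mul_tprod c hj w
  have h2 := tprod_mul_prod_comm (noOnesFactor_dvd fun i => if j < i then w else 1)
    (eP_dvd w one_pos) j (by
      intro i hi
      rw [noOnesFactor, if_neg (by omega), if_pos (by omega), one_mul])
  have h3 : (1 - X) * ∏ i ∈ Finset.range j, noOnesFactor (fun i => if j < i then w else 1) i =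
      qfac X j := by
    obtain ⟨j, rfl⟩ : ∃ k, j = k + 1 := ⟨j - 1, by omega⟩
    rw [qfac, Finset.prod_range_succ', Finset.prod_range_succ' _ j, mul_comm]
    congr 1
    · rw [noOnesFactor, if_pos rfl, map_zero, zero_mul, sub_zero, mul_one]
      refine Finset.prod_congr rfl fun i hi => ?_
      have := Finset.mem_range.mp hi
      rw [noOnesFactor, if_neg (by omega), if_neg (by omega), map_one, one_mul]
    · simp
  rw [← eP] at h2
  simp only [one_mul] at h2
  linear_combination (-onesSeries c j w * eP w 1) * h3 + (1 - X) *
    (∏ i ∈ Finset.range j, (1 - C w * X ^ (i + 1))) * h1 - (1 - X) * onesSeries c j w * h2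

/-! ### The generating function of the crank -/

/-- The functional equation of the truncated series `B(t) = ∑_{j < J} b_j t ^ j`. -/
lemma sum_functional {a : ℂ⟦X⟧} {b : ℕ → ℂ⟦X⟧}
    (hb : ∀ j, b (j + 1) * (1 - X ^ (j + 1)) = b j * (1 - a * X ^ j)) (t : ℂ⟦X⟧) (J : ℕ) :
    (1 - t) * ∑ j ∈ Finset.range J, b j * t ^ j -
      (1 - a * t) * ∑ j ∈ Finset.range J, b j * (t * X) ^ j = -(b J * (1 - X ^ J) * t ^ J) := by
  induction J with
  | zero => simp
  | succ J ih =>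
    rw [Finset.sum_range_succ, Finset.sum_range_succ, hb, mul_pow]
    linear_combination ih

/-- Cauchy's `q`-binomial theorem with `q = X`, truncated at `X ^ J`. -/
lemma cauchy_binomial {a s : ℂ⟦X⟧} (hs : X ∣ s) {b : ℕ → ℂ⟦X⟧} (h0 : b 0 = 1)
    (hb : ∀ j, b (j + 1) * (1 - X ^ (j + 1)) = b j * (1 - a * X ^ j)) (J : ℕ) :
    X ^ J ∣ (∑ j ∈ Finset.range J, b j * s ^ j) * ∏ i ∈ Finset.range J, (1 - s * X ^ i) -
      ∏ i ∈ Finset.range J, (1 - a * s * X ^ i) := by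
  have step : ∀ m, X ^ J ∣
      (∑ j ∈ Finset.range J, b j * s ^ j) * ∏ i ∈ Finset.range m, (1 - s * X ^ i) -
      (∑ j ∈ Finset.range J, b j * (s * X ^ m) ^ j) *
        ∏ i ∈ Finset.range m, (1 - a * s * X ^ i) := by
    intro m
    induction m with
    | zero => simp
    | succ m ih =>
      have h1 := sum_functional hb (s * X ^ m) J
      have h2 : X ^ J ∣ -(b J * (1 - X ^ J) * (s * X ^ m) ^ J) :=
        ((pow_dvd_pow_of_dvd (hs.mul_right _) J).mul_left _).neg_right
      rw [← h1] at h2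
      rw [Finset.prod_range_succ, Finset.prod_range_succ, pow_succ, ← mul_assoc s]
      convert dvd_add (ih.mul_right (1 - s * X ^ m))
        (h2.mul_right (∏ i ∈ Finset.range m, (1 - a * s * X ^ i))) using 1
      ring
  rcases J with _ | J
  · simp
  · have h1 : X ^ (J + 1) ∣ ∑ j ∈ Finset.range (J + 1), b j * (s * X ^ (J + 1)) ^ j - 1 := by
      rw [Finset.sum_range_succ', h0, pow_zero, mul_one, add_sub_cancel_right]
      refine Finset.dvd_sum fun j _ => ?_
      rw [pow_succ (s * X ^ (J + 1))]
      exact ((dvd_mul_left _ _).mul_left _).mul_left _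
    convert dvd_add (step (J + 1))
      (h1.mul_right (∏ i ∈ Finset.range (J + 1), (1 - a * s * X ^ i))) using 1
    ring

lemma inv_qfac_mul (j : ℕ) : (qfac X j : ℂ⟦X⟧)⁻¹ * qfac X j = 1 := by
  refine PowerSeries.inv_mul_cancel _ ?_
  rw [qfac, map_prod]
  simp

lemma inv_qfac_succ (j : ℕ) :
    (qfac X (j + 1) : ℂ⟦X⟧)⁻¹ * (1 - X ^ (j + 1)) = (qfac X j)⁻¹ := by
  have h1 := inv_qfac_mul j
  have h2 := inv_qfac_mul (j + 1)
  rw [qfac_succ] at h2 ⊢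
  linear_combination (qfac X j : ℂ⟦X⟧)⁻¹ * h2 -
    (qfac X j * (1 - X ^ (j + 1)) : ℂ⟦X⟧)⁻¹ * (1 - X ^ (j + 1)) * h1

lemma eP_zero : eP 0 1 = 1 := by simp [eP]

/-- The `q`-binomial theorem with `a = z X` and `s = z⁻¹ X`. -/
lemma sum_b_mul {z : ℂ} (hz : z ≠ 0) (J : ℕ) :
    X ^ J ∣ (1 - X) * (∑ j ∈ Finset.range J,
      (∏ i ∈ Finset.range j, (1 - C z * X ^ (i + 1))) * (qfac X j)⁻¹ * (C z⁻¹ * X) ^ j) *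
        eP z⁻¹ 1 - eP 1 1 := by
  have h1 := cauchy_binomial (a := C z * X) (s := C z⁻¹ * X) (dvd_mul_left _ _)
    (b := fun j => (∏ i ∈ Finset.range j, (1 - C z * X ^ (i + 1))) * (qfac X j)⁻¹)
    (by simp [qfac]) (by
      intro j
      rw [Finset.prod_range_succ]
      linear_combination (∏ i ∈ Finset.range j, (1 - C z * X ^ (i + 1))) *
        (1 - C z * X ^ (j + 1)) * inv_qfac_succ j) J
  have h2 := dvd_tprod_sub (eP_dvd z⁻¹ one_pos) (le_refl J)
  have h3 := dvd_tprod_sub (eP_dvd 1 one_pos) (Nat.le_succ J)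
  rw [← eP] at h2 h3
  have h4 : ∏ i ∈ Finset.range J, (1 - C z⁻¹ * X * X ^ i) =
      ∏ i ∈ Finset.range J, (1 - C z⁻¹ * X ^ (1 * (i + 1))) :=
    Finset.prod_congr rfl fun i _ => by ring
  have h5 : (1 - X) * ∏ i ∈ Finset.range J, (1 - C z * X * (C z⁻¹ * X) * X ^ i) =
      ∏ i ∈ Finset.range (J + 1), (1 - C 1 * X ^ (1 * (i + 1))) := by
    have hc : (C z * C z⁻¹ : ℂ⟦X⟧) = 1 := by rw [← map_mul, mul_inv_cancel₀ hz, map_one]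
    rw [Finset.prod_range_succ', mul_comm]
    congr 1
    · refine Finset.prod_congr rfl fun i _ => ?_
      rw [map_one]
      linear_combination (-X ^ (i + 2)) * hc
    · simp
  rw [h4] at h1
  rw [← h5] at h3
  set B := ∑ j ∈ Finset.range J,
      (∏ i ∈ Finset.range j, (1 - C z * X ^ (i + 1))) * (qfac X j)⁻¹ * (C z⁻¹ * X) ^ j
  convert dvd_sub (dvd_add (h1.mul_left (1 - X)) (h2.mul_left ((1 - X) * B))) h3 using 1
  ring

/-- The `q`-binomial theorem with `a = 0` and `s = z X`, due to Euler. -/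
lemma sum_inv_qfac_mul (z : ℂ) (J : ℕ) :
    X ^ J ∣ (∑ j ∈ Finset.range J, (qfac X j)⁻¹ * (C z * X) ^ j) * eP z 1 - 1 := by
  have h1 := cauchy_binomial (a := 0) (s := C z * X) (dvd_mul_left _ _)
    (b := fun j => (qfac X j)⁻¹) (by simp [qfac]) (by
      intro j
      rw [inv_qfac_succ]
      ring) J
  have h2 := dvd_tprod_sub (eP_dvd z one_pos) (le_refl J)
  rw [← eP] at h2
  have h4 : ∏ i ∈ Finset.range J, (1 - C z * X * X ^ i) =
      ∏ i ∈ Finset.range J, (1 - C z * X ^ (1 * (i + 1))) :=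
    Finset.prod_congr rfl fun i _ => by ring
  simp only [zero_mul, sub_zero, Finset.prod_const_one] at h1
  rw [h4] at h1
  set B := ∑ j ∈ Finset.range J, (qfac X j : ℂ⟦X⟧)⁻¹ * (C z * X) ^ j
  convert dvd_add h1 (h2.mul_left B) using 1
  ring

lemma onesSeries_zero_eq {L : ℕ} (hL : 1 ≤ L) :
    onesSeries 0 L 0 = (1 - X) * (qfac X L)⁻¹ := by
  have h1 := onesSeries_mul 0 hL 0
  have h2 := inv_qfac_mul L
  rw [eP_zero] at h1
  simp only [map_zero, zero_mul, sub_zero, Finset.prod_const_one, pow_zero, one_mul, mul_one] at h1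
  linear_combination (qfac X L : ℂ⟦X⟧)⁻¹ * h1 - onesSeries 0 L 0 * h2

/-- The series whose coefficient of `X ^ (k + 2)` is the sum of `z ^ crank` over the partitions of
`k + 2`; partitions without ones are sorted by their largest part, the others by their number of
ones. -/
noncomputable def crankSeries (z : ℂ) (k : ℕ) : ℂ⟦X⟧ :=
  ∑ i ∈ Finset.range (k + 1), C z ^ (i + 2) * (onesSeries 0 (i + 2) 0 - onesSeries 0 (i + 1) 0) +
    ∑ i ∈ Finset.range (k + 2), C z⁻¹ ^ (i + 1) * onesSeries (i + 1) (i + 1) z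

/-- Modulo `X ^ (k + 3)`, the series `crankSeries z k + (1 - X + z X)` is
`∏ (1 - X ^ n) / ((1 - z X ^ n) (1 - z⁻¹ X ^ n))`. -/
lemma crankSeries_mul {z : ℂ} (hz : z ≠ 0) (k : ℕ) :
    X ^ (k + 3) ∣ (crankSeries z k + (1 - X + C z * X)) * (eP z 1 * eP z⁻¹ 1) - eP 1 1 := by
  have h1 := sum_b_mul hz (k + 3)
  have h2 := sum_inv_qfac_mul z (k + 3)
  have h3 : ∑ i ∈ Finset.range (k + 1),
      C z ^ (i + 2) * (onesSeries 0 (i + 2) 0 - onesSeries 0 (i + 1) 0) =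
      (1 - X) * (∑ j ∈ Finset.range (k + 3), (qfac X j)⁻¹ * (C z * X) ^ j - 1) - C z * X := by
    rw [Finset.sum_range_succ' _ (k + 2), Finset.sum_range_succ' _ (k + 1)]
    have e0 : (qfac X 0 : ℂ⟦X⟧)⁻¹ = 1 := by simp [qfac]
    have e1 := inv_qfac_succ 0
    rw [e0, zero_add, pow_one] at e1
    have e2 : ∑ i ∈ Finset.range (k + 1),
        C z ^ (i + 2) * (onesSeries 0 (i + 2) 0 - onesSeries 0 (i + 1) 0) =
        (1 - X) * ∑ i ∈ Finset.range (k + 1), (qfac X (i + 1 + 1))⁻¹ * (C z * X) ^ (i + 1 + 1) := by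
      rw [Finset.mul_sum]
      refine Finset.sum_congr rfl fun i _ => ?_
      rw [onesSeries_zero_eq (by omega), onesSeries_zero_eq (by omega)]
      linear_combination (1 - X) * C z ^ (i + 2) * inv_qfac_succ (i + 1)
    rw [e2, e0, zero_add, pow_zero, pow_one]
    linear_combination (-C z * X) * e1
  have h4 : (∑ i ∈ Finset.range (k + 2), C z⁻¹ ^ (i + 1) * onesSeries (i + 1) (i + 1) z) * eP z 1 =
      (1 - X) * (∑ j ∈ Finset.range (k + 3),
        (∏ i ∈ Finset.range j, (1 - C z * X ^ (i + 1))) * (qfac X j)⁻¹ * (C z⁻¹ * X) ^ j - 1) := by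
    rw [Finset.sum_range_succ' _ (k + 2), Finset.range_zero, Finset.prod_empty, pow_zero, mul_one, one_mul,
      show (qfac X 0 : ℂ⟦X⟧)⁻¹ = 1 by simp [qfac], add_sub_cancel_right, Finset.mul_sum,
      Finset.sum_mul]
    refine Finset.sum_congr rfl fun i _ => ?_
    linear_combination (C z⁻¹ ^ (i + 1) * (qfac X (i + 1) : ℂ⟦X⟧)⁻¹) *
      onesSeries_mul (i + 1) (Nat.le_add_left 1 i) z -
      C z⁻¹ ^ (i + 1) * onesSeries (i + 1) (i + 1) z * eP z 1 * inv_qfac_mul (i + 1)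
  rw [crankSeries, h3]
  convert dvd_add h1 (h2.mul_left ((1 - X) * eP z⁻¹ 1)) using 1
  linear_combination eP z⁻¹ 1 * h4

lemma prod_map_zero_one (s : Multiset ℕ) (L : ℕ) :
    (s.map fun i => if L < i then (0 : ℂ) else 1).prod = if s.sup ≤ L then 1 else 0 := by
  induction s using Multiset.induction_on with
  | empty => simp
  | cons a s ih =>
    rw [Multiset.map_cons, Multiset.prod_cons, ih, Multiset.sup_cons]
    by_cases h : L < a
    · simp [h]
    · simp [h, not_lt.mp h]

lemma prod_map_weight (s : Multiset ℕ) (j : ℕ) (z : ℂ) :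
    (s.map fun i => if j < i then z else 1).prod = z ^ (s.filter fun i => j < i).card := by
  induction s using Multiset.induction_on with
  | empty => simp
  | cons a s ih =>
    rw [Multiset.map_cons, Multiset.prod_cons, ih]
    by_cases h : j < a
    · simp [h, pow_succ']
    · simp [h]

/-- The indicator of `sup = L` is written as a difference of indicators of `sup ≤ L`, which are the
counts provided by `onesSeries` with weight `0`. -/
lemma zpow_crank {z : ℂ} (hz : z ≠ 0) (k : ℕ) (p : (k + 2).Partition) :
    z ^ p.crank =
      ∑ i ∈ Finset.range (k + 1), z ^ (i + 2) *
        ((if p.parts.count 1 = 0 then if p.parts.sup ≤ i + 2 then 1 else 0 else 0) -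
          (if p.parts.count 1 = 0 then if p.parts.sup ≤ i + 1 then 1 else 0 else 0)) +
      ∑ i ∈ Finset.range (k + 2), z⁻¹ ^ (i + 1) *
        (if p.parts.count 1 = i + 1 then z ^ (p.parts.filter fun x => i + 1 < x).card else 0) := by
  rw [Nat.Partition.crank]
  by_cases h : p.parts.count 1 = 0
  · simp only [h, if_true]
    rw [Finset.sum_eq_zero (s := Finset.range (k + 2)) (by
      intro i _
      rw [if_neg (by omega), mul_zero]), add_zero]
    have h2 : p.parts.sup ≤ k + 2 := by
      refine Multiset.sup_le.mpr fun b hb => ?_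
      have := Multiset.le_sum_of_mem hb
      rwa [p.parts_sum] at this
    have h3 : 2 ≤ p.parts.sup := by
      obtain ⟨b, hb⟩ := Multiset.exists_mem_of_ne_zero (s := p.parts) (by
        intro h0
        have := p.parts_sum
        rw [h0] at this
        simp at this)
      have h4 := p.parts_pos hb
      have h5 : b ≠ 1 := by
        rintro rfl
        exact Multiset.count_eq_zero.mp h hb
      have := Multiset.le_sup hb
      omega
    rw [Finset.sum_eq_single (p.parts.sup - 2)]
    · rw [if_pos (by omega), if_neg (by omega), sub_zero, mul_one, zpow_natCast]
      congr 1
      omega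
    · intro i _ hi
      by_cases h6 : p.parts.sup ≤ i + 1
      · rw [if_pos (by omega), if_pos h6, sub_self, mul_zero]
      · rw [if_neg (by omega), if_neg h6, sub_self, mul_zero]
    · intro h7
      exact absurd (Finset.mem_range.mpr (by omega)) h7
  · have h2 : p.parts.count 1 ≤ k + 2 := by
      have h3 := Multiset.card_nsmul_le_sum (s := p.parts) (a := 1) fun x hx => p.parts_pos hx
      rw [p.parts_sum] at h3
      have := Multiset.count_le_card 1 p.parts
      simp at h3
      omega
    simp only [h, if_false, sub_self, mul_zero, Finset.sum_const_zero, zero_add]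
    rw [Finset.sum_eq_single (p.parts.count 1 - 1)]
    · have h4 : p.parts.count 1 - 1 + 1 = p.parts.count 1 := by omega
      rw [h4, if_pos rfl, zpow_sub₀ hz, zpow_natCast, zpow_natCast, inv_pow, div_eq_mul_inv,
        mul_comm]
    · intro i _ hi
      rw [if_neg (by omega), mul_zero]
    · intro h7
      exact absurd (Finset.mem_range.mpr (by omega)) h7

/-- The sum of `z ^ crank` over the partitions of `k + 2` is a coefficient of the crank generating
function. For partitions of `1` the corresponding identity fails, the coefficient of `X` being
`z + z⁻¹ - 1`. -/
lemma sum_zpow_crank {z : ℂ} (hz : z ≠ 0) {F : ℂ⟦X⟧} (hF : F * (eP z 1 * eP z⁻¹ 1) = eP 1 1)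
    (k : ℕ) : ∑ p : (k + 2).Partition, z ^ p.crank = coeff (k + 2) F := by
  have h1 := crankSeries_mul hz k
  rw [← hF, ← sub_mul, ((eP_unit z one_pos).mul (eP_unit z⁻¹ one_pos)).dvd_mul_right] at h1
  have h2 := X_pow_dvd_iff.mp h1 (k + 2) (by omega)
  have h3 : coeff (k + 2) (1 - X + C z * X : ℂ⟦X⟧) = 0 := by
    simp [coeff_one, coeff_X]
  rw [map_sub, map_add, h3, add_zero, sub_eq_zero] at h2
  rw [← h2, crankSeries, map_add, map_sum, map_sum]
  simp only [← map_pow, coeff_C_mul, map_sub, onesSeries, coeff_mk, prod_map_zero_one,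
    prod_map_weight, ← Finset.sum_sub_distrib, Finset.mul_sum]
  rw [Finset.sum_comm, Finset.sum_comm (s := Finset.range (k + 2)), ← Finset.sum_add_distrib]
  exact Finset.sum_congr rfl fun p _ => zpow_crank hz k p

/-! ### Equidistribution modulo `11` -/

lemma sum_zpow_crank_eq_zero {ζ : ℂ} (hζ : IsPrimitiveRoot ζ 11) (k : ℕ) :
    ∑ p : (11 * k + 6).Partition, ζ ^ p.crank = 0 := by
  obtain ⟨u, hu⟩ := (eP_unit ζ one_pos).mul (eP_unit ζ⁻¹ one_pos)
  have hF : (eP 1 1 * ↑u⁻¹ : ℂ⟦X⟧) * (eP ζ 1 * eP ζ⁻¹ 1) = eP 1 1 := by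
    rw [← hu, mul_assoc, Units.inv_mul, mul_one]
  have h := sum_zpow_crank (hζ.ne_zero (by norm_num)) hF (11 * k + 4)
  exact h.trans (coeff_crank_series hζ hF k)

lemma sum_root_zpow {ζ : ℂ} (hζ : IsPrimitiveRoot ζ 11) (c : ℤ) :
    ∑ s ∈ Finset.range 11, (ζ ^ s) ^ c = if (11 : ℤ) ∣ c then 11 else 0 := by
  have h1 : ∀ s : ℕ, (ζ ^ s) ^ c = (ζ ^ c) ^ s := by
    intro s
    rw [← zpow_natCast, ← zpow_natCast, zpow_comm]
  simp only [h1]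
  split_ifs with h
  · rw [(hζ.zpow_eq_one_iff_dvd c).mpr (by exact_mod_cast h)]
    simp
  · have h2 : ζ ^ c ≠ 1 := by
      intro h2
      exact h (by exact_mod_cast (hζ.zpow_eq_one_iff_dvd c).mp h2)
    have h3 := mul_neg_geom_sum (ζ ^ c) 11
    have h4 : (ζ ^ c) ^ 11 = 1 := by
      rw [← zpow_natCast, zpow_comm, zpow_natCast, hζ.pow_eq_one, one_zpow]
    rw [h4, sub_self] at h3
    exact (mul_eq_zero.mp h3).resolve_left (sub_ne_zero.mpr h2.symm)

lemma eleven_mul_crankCountMod (k : ℕ) (m : ℤ) :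
    11 * crankCountMod m 11 (11 * k + 6) = partitionCount (11 * k + 6) := by
  have hζ := Complex.isPrimitiveRoot_exp 11 (by norm_num)
  set ζ := Complex.exp (2 * Real.pi * Complex.I / (11 : ℕ))
  have hζ0 : ζ ≠ 0 := hζ.ne_zero (by norm_num)
  have h1 : ∑ p : (11 * k + 6).Partition, ∑ s ∈ Finset.range 11, (ζ ^ s) ^ (p.crank - m) =
      11 * (crankCountMod m 11 (11 * k + 6) : ℂ) := by
    rw [crankCountMod, Fintype.card_subtype, Finset.card_filter, Nat.cast_sum, Finset.mul_sum]
    refine Finset.sum_congr rfl fun p _ => ?_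
    have he : p.crank ≡ m [ZMOD (11 : ℕ)] ↔ (11 : ℤ) ∣ p.crank - m := by
      rw [Int.modEq_comm, Int.modEq_iff_dvd, Nat.cast_ofNat]
    rw [sum_root_zpow hζ]
    by_cases h : (11 : ℤ) ∣ p.crank - m
    · rw [if_pos h, if_pos (he.mpr h), Nat.cast_one, mul_one]
    · rw [if_neg h, if_neg (mt he.mp h), Nat.cast_zero, mul_zero]
  have h2 : ∑ p : (11 * k + 6).Partition, ∑ s ∈ Finset.range 11, (ζ ^ s) ^ (p.crank - m) =
      (partitionCount (11 * k + 6) : ℂ) := by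
    rw [Finset.sum_comm, Finset.sum_eq_single 0]
    · simp [partitionCount]
    · intro s hs hs0
      have hc : Nat.Coprime s 11 := by
        refine Nat.Coprime.symm ((Nat.Prime.coprime_iff_not_dvd (by norm_num)).mpr fun hd => ?_)
        have := Nat.le_of_dvd (Nat.pos_of_ne_zero hs0) hd
        have := Finset.mem_range.mp hs
        omega
      have h3 := sum_zpow_crank_eq_zero (hζ.pow_of_coprime s hc) k
      simp only [zpow_sub₀ (pow_ne_zero s hζ0), div_eq_mul_inv]
      rw [← Finset.sum_mul, h3, zero_mul]
    · simp
  rw [h1] at h2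
  exact_mod_cast h2

end CrankMod11

theorem andrews_garvan_crank_mod_11 (k : ℕ) (m : ℤ) (hm0 : 0 ≤ m) (hm10 : m ≤ 10) :
    crankCountMod m 11 (11 * k + 6) = partitionCount (11 * k + 6) / 11 := by
  rw [← CrankMod11.eleven_mul_crankCountMod k m, Nat.mul_div_cancel_left _ (by norm_num)]
end
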